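/- Let H be a finite abelian group containing an element of order at least 10. Then H can be realized by a 3-net in ℙ²(ℂ) (i.e., there exist injective maps p₁, p₂, p₃ : H → ℙ²(ℂ) with pairwise disjoint images such that p₁(x), p₂(y), p₃(z) are collinear if and only if x+y+z = 0) if and only if H is isomorphic to ℤ/aℤ × ℤ/bℤ for some positive integers a,b (that is, H has at most two invariant factors). -/

import Mathlib

/-- The complex projective plane ℙ²(ℂ) = ℙ(ℂ³). -/
abbrev P2 : Type := Projectivization ℂ (Fin 3 → ℂ)

/-- Three points of ℙ²(ℂ) are collinear if representative vectors in ℂ³ span a linear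
subspace of dimension at most 2. -/
def Collin (p q r : P2) : Prop :=
  Module.finrank ℂ (Submodule.span ℂ {p.rep, q.rep, r.rep} : Submodule ℂ (Fin 3 → ℂ)) ≤ 2

/-- A realization of a finite abelian group `H` by a 3-net in ℙ²(ℂ), stated dually in
terms of the points dual to the lines of the net: three injective maps `H → ℙ²(ℂ)` with
pairwise disjoint images such that `p₁ x`, `p₂ y`, `p₃ z` are collinear iff
`x + y + z = 0`. -/
def Realizes {H : Type} [AddCommGroup H] (p₁ p₂ p₃ : H → P2) : Prop :=
  Function.Injective p₁ ∧ Function.Injective p₂ ∧ Function.Injective p₃ ∧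
  Disjoint (Set.range p₁) (Set.range p₂) ∧
  Disjoint (Set.range p₁) (Set.range p₃) ∧
  Disjoint (Set.range p₂) (Set.range p₃) ∧
  ∀ x y z : H, Collin (p₁ x) (p₂ y) (p₃ z) ↔ x + y + z = 0

/-!
The cubic curves through the points of a net control the group. An elliptic curve `E` over `ℂ`
contains every group with at most two invariant factors, and three distinct points of `E` are
collinear if and only if they add up to zero, so that the cosets of `H` by a torsion point `P`, by
`2 P` and by `-3 P` form a net whenever the order of `P` modulo `H` is large enough.

Conversely, fix `h : H` of order at least 10. By the Chasles (Cayley–Bacharach) theorem for 3 × 3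
grids, a cubic through nine suitable points of three cosets `A (x + k h)`, `B (y + k h)`,
`C (z + k h)` with `x + y + z = 0` contains these cosets entirely. If the cubic for
`x = y = z = 0` contains no line, then by Bézout's theorem it agrees with the cubics of all other
triples of cosets, hence contains the whole net. According to whether it is smooth, nodal or
cuspidal, its nonsingular points form an elliptic curve, `ℂˣ` or `ℂ`. In the first two cases `H`
embeds into this group, and the third is impossible, `ℂ` being torsion-free.

Otherwise the cubic of the subgroup `S` generated by `h` is the union of a line, which we take to be
the line at infinity, and a conic, and in suitable coordinates the points of `S` are parametrized by
a character of `S`. For every `x : H`, the collinearities with these points force the cosets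
`B (-x + s)` and `C (x + s)` onto a possibly degenerate hyperbola parametrized by the same character
and with the same asymptotes, and `A x` onto the line at infinity. Up to sign, the slope of the
point `A x` is then an injective character of `H`, so `H` embeds into `ℂˣ`.
-/

/-! ### Finite abelian groups with at most two invariant factors -/

/-- A finite abelian group has at most two invariant factors if it is a product of two finite
cyclic groups, one or both of which may be trivial. -/
def HasTwoInvariantFactors (H : Type*) [AddCommGroup H] : Prop :=
  ∃ a b : ℕ, 0 < a ∧ 0 < b ∧ Nonempty (H ≃+ ZMod a × ZMod b)

lemma hasTwoInvariantFactors_of_isAddCyclic (H : Type*) [AddCommGroup H] [Finite H]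
    [IsAddCyclic H] : HasTwoInvariantFactors H :=
  ⟨Nat.card H, 1, Nat.card_pos, one_pos,
    ⟨(zmodAddCyclicAddEquiv inferInstance).symm.trans AddEquiv.prodUnique.symm⟩⟩

/-- The homomorphism `ZMod a →+ ZMod (k * a)` induced by multiplication by `k` on `ℤ`. -/
def zmodMulHom (k a : ℕ) : ZMod a →+ ZMod (k * a) :=
  ZMod.lift a ⟨zmultiplesHom _ (k : ZMod (k * a)), by
    simpa only [zmultiplesHom_apply, zsmul_eq_mul, Int.cast_natCast, mul_comm, Nat.cast_mul]
      using ZMod.natCast_self (k * a)⟩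

lemma zmodMulHom_intCast (k a : ℕ) (m : ℤ) : zmodMulHom k a m = k * m := by
  simp [zmodMulHom, mul_comm]

lemma zmodMulHom_injective {k : ℕ} (hk : k ≠ 0) (a : ℕ) : Function.Injective (zmodMulHom k a) := by
  refine (ZMod.lift_injective a).2 fun m hm ↦ ?_
  have hm' : ((k * m : ℤ) : ZMod (k * a)) = 0 := by simpa [mul_comm] using hm
  rw [CharP.intCast_eq_zero_iff _ (k * a), Nat.cast_mul] at hm'
  exact (CharP.intCast_eq_zero_iff _ a _).2
    ((mul_dvd_mul_iff_left (by exact_mod_cast hk)).1 hm')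

lemma exists_injective_zmod_hom {d n : ℕ} (hn : n ≠ 0) (hd : d ∣ n) :
    ∃ φ : ZMod d →+ ZMod n, Function.Injective φ := by
  obtain ⟨k, rfl⟩ := hd
  rw [mul_comm d k] at hn ⊢
  exact ⟨_, zmodMulHom_injective (left_ne_zero_of_mul hn) d⟩

lemma exists_injective_pi_hom {κ ι : Type*} [Finite κ] {M : κ → Type*} {N : ι → Type*}
    [∀ k, AddCommMonoid (M k)] [∀ i, AddCommMonoid (N i)] {s : κ → ι} (hs : Function.Injective s)
    (f : ∀ k, M k →+ N (s k)) (hf : ∀ k, Function.Injective (f k)) :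
    ∃ φ : (∀ k, M k) →+ ∀ i, N i, Function.Injective φ := by
  classical
  have := Fintype.ofFinite κ
  let φ : (∀ k, M k) →+ ∀ i, N i :=
    ∑ k, (AddMonoidHom.single N (s k)).comp ((f k).comp (Pi.evalAddMonoidHom M k))
  have φ_apply (x : ∀ k, M k) (k : κ) : φ x (s k) = f k (x k) := by
    simp only [φ, AddMonoidHom.finsetSum_apply, AddMonoidHom.comp_apply,
      AddMonoidHom.single_apply, Pi.evalAddMonoidHom_apply, Finset.sum_apply]
    rw [Finset.sum_eq_single k (fun j _ hj ↦ Pi.single_eq_of_ne (hs.ne hj.symm) _) (by simp)]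
    exact Pi.single_eq_same _ _
  refine ⟨φ, fun x y hxy ↦ funext fun k ↦ hf k ?_⟩
  rw [← φ_apply, ← φ_apply, hxy]

lemma exists_split_of_forall_not_chain {ι : Type*} [LinearOrder ι] {r : ι → ι → Prop}
    (hr : Std.Symm r) (h : ∀ ⦃i j k⦄, i < j → j < k → r i j → ¬ r j k) :
    ∃ P : ι → Prop, ∀ i j, i ≠ j → (P i ↔ P j) → ¬ r i j := by
  let P (i : ι) : Prop := ∃ j < i, r j i
  have not_r {i j : ι} (hij : i < j) (hP : P i ↔ P j) : ¬ r i j := fun hr' ↦ by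
    obtain ⟨k, hk, hki⟩ := hP.2 ⟨i, hij, hr'⟩
    exact h hk hij hki hr'
  refine ⟨P, fun i j hij hP ↦ ?_⟩
  rcases hij.lt_or_gt with hij | hij
  · exact not_r hij hP
  · exact fun hr' ↦ not_r hij hP.symm (hr.symm _ _ hr')

lemma hasTwoInvariantFactors_pi_zmod {ι : Type*} [Finite ι] {n : ι → ℕ} (hn : ∀ i, 0 < n i)
    (P : ι → Prop) (hP : ∀ i j, i ≠ j → (P i ↔ P j) → (n i).Coprime (n j)) :
    HasTwoInvariantFactors (∀ i, ZMod (n i)) := by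
  classical
  have := Fintype.ofFinite ι
  let split : (∀ i, ZMod (n i)) ≃+
      (∀ i : {i // P i}, ZMod (n i)) × (∀ i : {i // ¬ P i}, ZMod (n i)) :=
    { Equiv.piEquivPiSubtypeProd P (fun i ↦ ZMod (n i)) with map_add' := fun _ _ ↦ rfl }
  let crt₁ := ZMod.prodEquivPi (fun i : {i // P i} ↦ n i) fun i j hij ↦
    hP _ _ (Subtype.coe_injective.ne hij) (iff_of_true i.2 j.2)
  let crt₂ := ZMod.prodEquivPi (fun i : {i // ¬ P i} ↦ n i) fun i j hij ↦
    hP _ _ (Subtype.coe_injective.ne hij) (iff_of_false i.2 j.2)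
  exact ⟨∏ i : {i // P i}, n i, ∏ i : {i // ¬ P i}, n i,
    Finset.prod_pos fun i _ ↦ hn i, Finset.prod_pos fun i _ ↦ hn i,
    ⟨split.trans (AddEquiv.prodCongr crt₁.symm.toAddEquiv crt₂.symm.toAddEquiv)⟩⟩

lemma HasTwoInvariantFactors.of_addEquiv {G H : Type*} [AddCommGroup G] [AddCommGroup H]
    (hH : HasTwoInvariantFactors H) (e : G ≃+ H) : HasTwoInvariantFactors G := by
  obtain ⟨a, b, ha, hb, ⟨f⟩⟩ := hH
  exact ⟨a, b, ha, hb, ⟨e.trans f⟩⟩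

/-- If three cyclic factors of prime power order shared a prime `p`, their elements of order `p`
would form a copy of `(ZMod p)³`; so the factors split into two pairwise coprime families. -/
theorem hasTwoInvariantFactors_of_forall_prime {H : Type*} [AddCommGroup H] [Finite H]
    (h : ∀ p : ℕ, p.Prime → ∀ φ : (Fin 3 → ZMod p) →+ H, ¬ Function.Injective φ) :
    HasTwoInvariantFactors H := by
  obtain ⟨ι, _, p, hp, e, ⟨f⟩⟩ := AddCommGroup.equiv_directSum_zmod_of_finite H
  let g : H ≃+ ∀ i, ZMod (p i ^ e i) := f.trans (DirectSum.addEquivProd _)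
  let _ : LinearOrder ι := LinearOrder.lift' (Fintype.equivFin ι) (Fintype.equivFin ι).injective
  let r (i j : ι) : Prop := ¬ (p i ^ e i).Coprime (p j ^ e j)
  have base_eq {i j : ι} (hij : r i j) : p i = p j := by
    by_contra hne
    exact hij (((Nat.coprime_primes (hp i) (hp j)).2 hne).pow _ _)
  have dvd_left {i j : ι} (hij : r i j) : p i ∣ p i ^ e i :=
    dvd_pow_self _ fun h0 ↦ hij (by simp [h0])
  have r_symm : Std.Symm r := ⟨fun i j hij hji ↦ hij hji.symm⟩
  have no_chain ⦃i j k : ι⦄ (hij : i < j) (hjk : j < k) (hr : r i j) : ¬ r j k := fun hr' ↦ by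
    have dvd (t : Fin 3) : p i ∣ p (![i, j, k] t) ^ e (![i, j, k] t) := by
      fin_cases t
      · exact dvd_left hr
      · exact base_eq hr ▸ dvd_left hr'
      · exact (base_eq hr).trans (base_eq hr') ▸ dvd_left (r_symm.symm _ _ hr')
    choose ψ hψ using fun t ↦
      exists_injective_zmod_hom (pow_ne_zero _ (hp (![i, j, k] t)).ne_zero) (dvd t)
    have inj : Function.Injective ![i, j, k] := by
      intro s t hst
      fin_cases s <;> fin_cases t <;> simp_all [hij.ne, hij.ne', hjk.ne, hjk.ne',
        (hij.trans hjk).ne, (hij.trans hjk).ne']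
    obtain ⟨φ, hφ⟩ := exists_injective_pi_hom (N := fun i ↦ ZMod (p i ^ e i)) inj ψ hψ
    exact h _ (hp i) (g.symm.toAddMonoidHom.comp φ) (g.symm.injective.comp hφ)
  obtain ⟨P, hP⟩ := exists_split_of_forall_not_chain r_symm no_chain
  exact (hasTwoInvariantFactors_pi_zmod (fun i ↦ pow_pos (hp i).pos _) P
    fun i j hij hPij ↦ not_not.1 (hP i j hij hPij)).of_addEquiv g

/-! ### Torsion points of elliptic curves -/

section SymmetricProduct

variable {R S : Type*} [CommRing R] [CommRing S]

/-- The product of two linear forms with coefficients `p` and `q` in two variables. As a map on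
pairs of points it is `ℙ¹ × ℙ¹ → Sym² ℙ¹ ≃ ℙ²`, so that `P.sym2x Q` is
`symProd P.xRep Q.xRep`. -/
def symProd (p q : Fin 2 → R) : Fin 3 → R := ![p 0 * q 0, p 0 * q 1 + p 1 * q 0, p 1 * q 1]

lemma symProd_smul_left (a : R) (p q : Fin 2 → R) : symProd (a • p) q = a • symProd p q := by
  ext i; fin_cases i <;> simp [symProd] <;> ring

lemma symProd_smul_right (a : R) (p q : Fin 2 → R) : symProd p (a • q) = a • symProd p q := by
  ext i; fin_cases i <;> simp [symProd] <;> ring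

lemma symProd_sub_right (p q r : Fin 2 → R) :
    symProd p (q - r) = symProd p q - symProd p r := by
  ext i; fin_cases i <;> simp [symProd] <;> ring

lemma map_symProd (f : R →+* S) (p q : Fin 2 → R) : f ∘ symProd p q = symProd (f ∘ p) (f ∘ q) := by
  ext i; fin_cases i <;> simp [symProd]

lemma eq_zero_or_eq_zero_of_symProd_eq_zero [IsDomain R] {p q : Fin 2 → R}
    (h : symProd p q = 0) : p = 0 ∨ q = 0 := by
  have h0 : p 0 * q 0 = 0 := congrFun h 0
  have h1 : p 0 * q 1 + p 1 * q 0 = 0 := congrFun h 1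
  have h2 : p 1 * q 1 = 0 := congrFun h 2
  simp only [funext_iff, Fin.forall_fin_two, Pi.zero_apply]
  rcases mul_eq_zero.1 h0 with h | h <;> rcases mul_eq_zero.1 h2 with h' | h' <;> simp_all

lemma eq_of_symProd_eq_symProd [IsDomain R] {p q r : Fin 2 → R} (hp : p ≠ 0)
    (h : symProd p q = symProd p r) : q = r := by
  refine sub_eq_zero.1 ((eq_zero_or_eq_zero_of_symProd_eq_zero ?_).resolve_left hp)
  rw [symProd_sub_right, h, sub_self]

lemma exists_eq_symProd [IsDomain R] {p : Fin 2 → R} {g : Fin 3 → R} (hp : p 0 ≠ 0)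
    (hcop : IsCoprime (p 0) (p 1)) (h : g 2 * p 0 ^ 2 - g 1 * (p 0 * p 1) + g 0 * p 1 ^ 2 = 0) :
    ∃ q, g = symProd p q := by
  obtain ⟨U, hU⟩ : p 0 ∣ g 0 :=
    (hcop.pow_right (n := 2)).dvd_of_dvd_mul_right ⟨g 1 * p 1 - g 2 * p 0, by linear_combination h⟩
  obtain ⟨V, hV⟩ : p 0 ∣ g 1 - p 1 * U := by
    have : p 0 * ((g 1 - p 1 * U) * p 1) = p 0 * (g 2 * p 0) := by
      rw [hU] at h; linear_combination -h
    exact hcop.dvd_of_dvd_mul_right ⟨g 2, (mul_left_cancel₀ hp this).trans (mul_comm _ _)⟩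
  have h2 : p 0 ^ 2 * (g 2 - p 1 * V) = 0 := by
    rw [hU] at h; linear_combination h + p 0 * p 1 * hV
  refine ⟨![U, V], funext fun i ↦ ?_⟩
  fin_cases i
  · simpa [symProd] using hU
  · simp [symProd]; linear_combination hV
  · simpa [symProd, hp, sub_eq_zero] using h2

end SymmetricProduct

section AddSubMap

open WeierstrassCurve WeierstrassCurve.Affine WeierstrassCurve.Affine.Point

variable {K : Type*} [Field K] [DecidableEq K]

lemma exists_addSubMap_sym2x_self (W : Affine K) [W.IsElliptic] (P : W.Point) :
    ∃ c : K, c ≠ 0 ∧ (fun i ↦ (addSubMap W i).eval (P.sym2x P)) = c • (P + P).sym2x 0 := by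
  match P with
  | 0 => exact ⟨1, one_ne_zero, by ext i; fin_cases i <;> simp [addSubMap]⟩
  | .some x y h =>
    have heq := (equation_iff x y).1 h.1
    by_cases hy : y = W.negY x y
    · have hne := addSubMap_ne_zero W (sym2x_ne_zero (.some x y h) (.some x y h))
      have hy' : 2 * y + W.a₁ * x + W.a₃ = 0 := by rw [negY] at hy; linear_combination hy
      have h1 : 2 * (2 * x) * x ^ 2 + W.b₂ * x ^ 2 + W.b₄ * (2 * x) + W.b₆ = 0 := by
        simp only [b₂, b₄, b₆]
        linear_combination (-4) * heq + (2 * y + W.a₁ * x + W.a₃) * hy'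
      rw [add_self_of_Y_eq hy, sym2x_zero_zero]
      have key : (fun i ↦ (addSubMap W i).eval ((Point.some x y h).sym2x (.some x y h))) =
          (addSubMap W 0).eval ((Point.some x y h).sym2x (.some x y h)) • ![1, 0, 0] := by
        ext i; fin_cases i
        · simp
        · simp [addSubMap]; linear_combination h1
        · simp [addSubMap]; ring
      refine ⟨_, fun h0 ↦ hne ?_, key⟩
      rw [key, h0, zero_smul]
    · have hD : 2 * y + W.a₁ * x + W.a₃ ≠ 0 := fun h' ↦ hy (by rw [negY]; linear_combination h')
      rw [add_some fun hh ↦ hy hh.2, sym2x_some_zero, slope_of_Y_ne rfl hy]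
      have hden : y - W.negY x y = 2 * y + W.a₁ * x + W.a₃ := by rw [negY]; ring
      refine ⟨(2 * y + W.a₁ * x + W.a₃) ^ 2, pow_ne_zero 2 hD, ?_⟩
      ext i; fin_cases i
      · simp only [hden, addX, addSubMap]
        generalize hl : (3 * x ^ 2 + 2 * W.a₂ * x + W.a₄ - W.a₁ * y) /
          (2 * y + W.a₁ * x + W.a₃) = l
        rw [div_eq_iff hD] at hl
        simp [b₄, b₆, b₈]
        linear_combination (3 * x ^ 2 + 2 * W.a₂ * x + W.a₄ - W.a₁ * y +
          (l + W.a₁) * (2 * y + W.a₁ * x + W.a₃)) * hl +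
          (W.a₁ ^ 2 + 4 * W.a₂ + 8 * x) * heq
      · simp [addSubMap, b₂, b₄, b₆]; linear_combination (-4) * heq
      · simp [addSubMap]; ring

theorem exists_addSubMap_sym2x (W : Affine K) [W.IsElliptic] (P Q : W.Point) :
    ∃ c : K, c ≠ 0 ∧ (fun i ↦ (addSubMap W i).eval (P.sym2x Q)) = c • (P + Q).sym2x (P - Q) := by
  by_cases hx : P.xRep = Q.xRep
  · rcases eq_or_eq_neg_of_xRep_eq_xRep hx with rfl | rfl
    · simpa using exists_addSubMap_sym2x_self W P
    · obtain ⟨c, hc, h⟩ := exists_addSubMap_sym2x_self W Q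
      refine ⟨c, hc, ?_⟩
      rw [sym2x_neg_left, h, neg_add_cancel, show -Q - Q = -(Q + Q) by abel, sym2x_neg_right,
        sym2x_comm]
  match P, Q, hx with
  | 0, 0, hx => exact absurd rfl hx
  | 0, .some x y h, _ =>
    refine ⟨1, one_ne_zero, ?_⟩
    rw [zero_add, zero_sub, sym2x_neg_right]
    ext i; fin_cases i <;> simp [addSubMap] <;> ring
  | .some x y h, 0, _ =>
    refine ⟨1, one_ne_zero, ?_⟩
    rw [add_zero, sub_zero]
    ext i; fin_cases i <;> simp [addSubMap] <;> ring
  | .some x y h, .some x' y' h', hx =>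
    have hne : x ≠ x' := by rintro rfl; exact hx (by simp)
    have hd : x - x' ≠ 0 := sub_ne_zero.2 hne
    have heq := (equation_iff x y).1 h.1
    have heq' := (equation_iff x' y').1 h'.1
    rw [sub_eq_add_neg, neg_some, add_some fun hh ↦ hne hh.1, add_some fun hh ↦ hne hh.1,
      sym2x_some_some, sym2x_some_some, slope_of_X_ne hne, slope_of_X_ne hne]
    refine ⟨(x - x') ^ 2, pow_ne_zero 2 hd, ?_⟩
    ext i; fin_cases i
    · simp [addSubMap, negY, b₄, b₆, b₈]
      field_simp
      grind only
    · simp [addSubMap, negY, b₂, b₄, b₆]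
      field_simp
      linear_combination (-2) * heq + (-2) * heq'
    · simp [addSubMap]; ring

end AddSubMap

section MulFormula

open WeierstrassCurve WeierstrassCurve.Affine WeierstrassCurve.Affine.Point Polynomial

variable {K : Type*} [Field K] {W : Affine K}

/-- The polynomials obtained by applying `addSubMap` to the pair `f 0 / f 1`, `X`. -/
noncomputable def addSubPoly (W : Affine K) (f : Fin 2 → K[X]) (i : Fin 3) : K[X] :=
  (addSubMap W i).aeval (symProd f ![X, 1])

lemma addSubPoly_eq (W : Affine K) (f : Fin 2 → K[X]) :
    addSubPoly W f =
      ![(f 0 * X) ^ 2 - (C W.b₄ * (f 0 * X) * f 1 + C W.b₆ * (f 0 + f 1 * X) * f 1 +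
          C W.b₈ * f 1 ^ 2),
        C 2 * (f 0 + f 1 * X) * (f 0 * X) + C W.b₂ * (f 0 * X) * f 1 +
          C W.b₄ * (f 0 + f 1 * X) * f 1 + C W.b₆ * f 1 ^ 2,
        (f 0 + f 1 * X) ^ 2 - C 4 * (f 0 * X) * f 1] := by
  ext1 i
  fin_cases i <;>
    simp only [addSubPoly, addSubMap, symProd, Fin.zero_eta, Fin.mk_one, Fin.reduceFinMk,
      Matrix.cons_val, map_add, map_sub, map_mul, map_pow, MvPolynomial.aeval_X,
      MvPolynomial.algHom_C, Polynomial.algebraMap_eq, mul_one]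
  ring

lemma eval_smul_addSubMap (W : Affine K) (r : K) (s : Fin 3 → K) :
    (fun i ↦ (addSubMap W i).eval (r • s)) = r ^ 2 • fun i ↦ (addSubMap W i).eval s := by
  ext i
  fin_cases i <;> simp [addSubMap] <;> ring

lemma eval_addSubPoly (W : Affine K) (f : Fin 2 → K[X]) (x : K) :
    (fun i ↦ (addSubPoly W f i).eval x) =
      fun i ↦ (addSubMap W i).eval (symProd (fun j ↦ (f j).eval x) ![x, 1]) := by
  ext i
  rw [addSubPoly_eq]
  fin_cases i <;> simp [addSubMap, symProd]
  ring

section Degree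

variable {f : Fin 2 → K[X]} {m : ℕ}

lemma natDegree_add_mul_X_le (h0 : IsMonicOfDegree (f 0) (m + 1))
    (h1 : (f 1).natDegree ≤ m) :
    (f 0 + f 1 * X).natDegree ≤ m + 1 :=
  natDegree_add_le_of_degree_le h0.natDegree_eq.le
    (natDegree_mul_le_of_le h1 natDegree_X_le)

lemma isMonicOfDegree_addSubPoly_zero (h0 : IsMonicOfDegree (f 0) (m + 1))
    (h1 : (f 1).natDegree ≤ m) (W : Affine K) :
    IsMonicOfDegree (addSubPoly W f 0) (2 * (m + 2)) := by
  have hX : IsMonicOfDegree (f 0 * X) (m + 2) := h0.mul (isMonicOfDegree_X K)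
  have ht := natDegree_add_mul_X_le h0 h1
  rw [addSubPoly_eq, mul_comm 2]
  refine (hX.pow 2).sub ((natDegree_add_le_of_degree_le (n := 2 * m + 3)
    (natDegree_add_le_of_degree_le ?_ ?_) ?_).trans_lt (by omega))
  · exact (natDegree_mul_le_of_le (natDegree_C_mul_le _ _) h1).trans (by grind [hX.natDegree_eq])
  · exact (natDegree_mul_le_of_le ((natDegree_C_mul_le _ _).trans ht) h1).trans (by omega)
  · exact (natDegree_C_mul_le _ _).trans ((natDegree_pow_le_of_le 2 h1).trans (by omega))

lemma natDegree_addSubPoly_one_lt (h0 : IsMonicOfDegree (f 0) (m + 1))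
    (h1 : (f 1).natDegree ≤ m) (W : Affine K) :
    (addSubPoly W f 1).natDegree < 2 * (m + 2) := by
  have hX : (f 0 * X).natDegree ≤ m + 2 := (h0.mul (isMonicOfDegree_X K)).natDegree_eq.le
  have ht := natDegree_add_mul_X_le h0 h1
  rw [addSubPoly_eq]
  refine (natDegree_add_le_of_degree_le (n := 2 * m + 3) (natDegree_add_le_of_degree_le
    (natDegree_add_le_of_degree_le ?_ ?_) ?_) ?_).trans_lt (by omega)
  · exact (natDegree_mul_le_of_le ((natDegree_C_mul_le _ _).trans ht) hX).trans (by omega)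
  · exact (natDegree_mul_le_of_le ((natDegree_C_mul_le _ _).trans hX) h1).trans (by omega)
  · exact (natDegree_mul_le_of_le ((natDegree_C_mul_le _ _).trans ht) h1).trans (by omega)
  · exact (natDegree_C_mul_le _ _).trans ((natDegree_pow_le_of_le 2 h1).trans (by omega))

end Degree

lemma degree_lt_of_mul_eq_sub {u v U V G : K[X]} {d D : ℕ} (hu : IsMonicOfDegree u d)
    (hv : v.degree < d) (hU : IsMonicOfDegree U D) (hG : G.natDegree < d + D)
    (h : u * V = G - v * U) : V.degree < D := by
  have hvU : (v * U).degree < ((d + D : ℕ) : WithBot ℕ) := by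
    rw [degree_mul, degree_eq_natDegree hU.ne_zero, hU.natDegree_eq, Nat.cast_add]
    exact WithBot.add_lt_add_right (WithBot.coe_ne_bot) hv
  have huV : (u * V).degree < ((d + D : ℕ) : WithBot ℕ) :=
    h ▸ (degree_sub_le _ _).trans_lt
      (max_lt (degree_le_natDegree.trans_lt (Nat.cast_lt.2 hG)) hvU)
  rw [degree_mul, degree_eq_natDegree hu.ne_zero, hu.natDegree_eq, Nat.cast_add] at huV
  exact lt_of_add_lt_add_left huV

lemma exists_nonsingular [IsAlgClosed K] (W : Affine K) [W.IsElliptic] (x : K) :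
    ∃ y, W.Nonsingular x y := by
  have hdeg : (X ^ 2 + C (W.a₁ * x + W.a₃) * X -
      C (x ^ 3 + W.a₂ * x ^ 2 + W.a₄ * x + W.a₆) : K[X]).degree = 2 := by compute_degree!
  obtain ⟨y, hy⟩ := IsAlgClosed.exists_root _ (hdeg.trans_ne two_ne_zero)
  refine ⟨y, equation_iff_nonsingular.1 ((equation_iff x y).2 ?_)⟩
  simp only [IsRoot.def, eval_sub, eval_add, eval_mul, eval_pow, eval_X, eval_C] at hy
  linear_combination hy

lemma isCoprime_of_eval_ne_zero [IsAlgClosed K] {f : Fin 2 → K[X]}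
    (h : ∀ x, (fun i ↦ (f i).eval x) ≠ 0) : IsCoprime (f 0) (f 1) := by
  rw [isCoprime_iff_aeval_ne_zero_of_isAlgClosed K K]
  intro x
  by_contra! hx
  exact h x (funext fun i ↦ by fin_cases i; exacts [hx.1, hx.2])

variable [DecidableEq K]

/-- The `x`-coordinate of `n • P` is `f 0 / f 1` evaluated at the `x`-coordinate of `P`, a rational
function in lowest terms whose numerator is monic of degree `n ^ 2` and which has a pole at
infinity unless `n = 0`. -/
structure IsMulFormula (W : Affine K) (n : ℕ) (f : Fin 2 → K[X]) : Prop where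
  isMonicOfDegree : IsMonicOfDegree (f 0) (n ^ 2)
  degree_lt : (f 1).degree < (n ^ 2 : ℕ)
  isCoprime : IsCoprime (f 0) (f 1)
  exists_xRep_nsmul : ∀ x y (h : W.Nonsingular x y),
    ∃ c : K, c ≠ 0 ∧ (n • Point.some x y h).xRep = c • fun i ↦ (f i).eval x

namespace IsMulFormula

lemma zero (W : Affine K) : IsMulFormula W 0 ![1, 0] where
  isMonicOfDegree := isMonicOfDegree_zero_iff.2 rfl
  degree_lt := by simp
  isCoprime := isCoprime_one_left
  exists_xRep_nsmul _ _ _ := ⟨1, one_ne_zero, by ext i; fin_cases i <;> simp⟩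

lemma one (W : Affine K) : IsMulFormula W 1 ![X, 1] where
  isMonicOfDegree := isMonicOfDegree_X K
  degree_lt := by simp
  isCoprime := isCoprime_one_right
  exists_xRep_nsmul _ _ _ := ⟨1, one_ne_zero, by ext i; fin_cases i <;> simp⟩

lemma eval_ne_zero {n : ℕ} {f : Fin 2 → K[X]} (hf : IsMulFormula W n f) (x : K) :
    (fun i ↦ (f i).eval x) ≠ 0 := fun h ↦ by
  obtain ⟨a, b, hab⟩ := hf.isCoprime
  have := congrArg (eval x) hab
  simp [show (f 0).eval x = 0 from congrFun h 0, show (f 1).eval x = 0 from congrFun h 1] at this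

variable [W.IsElliptic] {n : ℕ} {f g q : Fin 2 → K[X]}

lemma exists_eval_addSubPoly (hf : IsMulFormula W n f) (hg : IsMulFormula W (n + 1) g) {x y : K}
    (h : W.Nonsingular x y) :
    ∃ c : K, c ≠ 0 ∧ (fun i ↦ (addSubPoly W g i).eval x) =
      c • symProd (fun i ↦ (f i).eval x) ((n + 2) • Point.some x y h).xRep := by
  obtain ⟨a, ha, hfa⟩ := hf.exists_xRep_nsmul x y h
  obtain ⟨b, hb, hgb⟩ := hg.exists_xRep_nsmul x y h
  set P := Point.some x y h
  have hgP : symProd (fun i ↦ (g i).eval x) ![x, 1] = b⁻¹ • ((n + 1) • P).sym2x P := by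
    change _ = b⁻¹ • symProd ((n + 1) • P).xRep P.xRep
    rw [hgb, xRep_some, symProd_smul_left, inv_smul_smul₀ hb]
  obtain ⟨c, hc, hcP⟩ := exists_addSubMap_sym2x W ((n + 1) • P) P
  have hsub : (n + 1) • P - P = n • P := by rw [succ_nsmul, add_sub_cancel_right]
  rw [← succ_nsmul, hsub, sym2x_comm ((n + 1 + 1) • P)] at hcP
  have hfP : (n • P).sym2x ((n + 2) • P) =
      a • symProd (fun i ↦ (f i).eval x) ((n + 2) • P).xRep := by
    change symProd (n • P).xRep _ = _
    rw [hfa, symProd_smul_left]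
  refine ⟨b⁻¹ ^ 2 * c * a, by simp [ha, hb, hc], ?_⟩
  rw [eval_addSubPoly, hgP]
  rw [eval_smul_addSubMap, hcP, hfP, smul_smul, smul_smul]

variable [IsAlgClosed K]

lemma exists_addSubPoly_eq_symProd (hf : IsMulFormula W n f) (hg : IsMulFormula W (n + 1) g) :
    ∃ q, addSubPoly W g = symProd f q := by
  refine exists_eq_symProd hf.isMonicOfDegree.ne_zero hf.isCoprime (funext fun x ↦ ?_)
  obtain ⟨y, h⟩ := exists_nonsingular W x
  obtain ⟨c, -, hc⟩ := hf.exists_eval_addSubPoly hg h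
  have h0 := congrFun hc 0
  have h1 := congrFun hc 1
  have h2 := congrFun hc 2
  simp only [symProd, Pi.smul_apply, smul_eq_mul, Matrix.cons_val] at h0 h1 h2
  simp only [eval_add, eval_sub, eval_mul, eval_pow, h0, h1, h2, eval_zero]
  ring

lemma of_addSubPoly_eq_symProd (hf : IsMulFormula W n f) (hg : IsMulFormula W (n + 1) g)
    (hq : addSubPoly W g = symProd f q) : IsMulFormula W (n + 2) q := by
  have hg0 : IsMonicOfDegree (g 0) (n * (n + 2) + 1) := by
    convert hg.isMonicOfDegree using 1; ring
  have hg1 : (g 1).natDegree ≤ n * (n + 2) := by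
    refine natDegree_le_iff_coeff_eq_zero.2 fun k hk ↦ ?_
    exact (degree_lt_iff_coeff_zero _ _).1 hg.degree_lt k (by nlinarith)
  have hdeg : 2 * (n * (n + 2) + 2) = n ^ 2 + (n + 2) ^ 2 := by ring
  have hq0 : addSubPoly W g 0 = f 0 * q 0 := congrFun hq 0
  have hq1 : addSubPoly W g 1 = f 0 * q 1 + f 1 * q 0 := congrFun hq 1
  have monic : IsMonicOfDegree (q 0) ((n + 2) ^ 2) := by
    refine hf.isMonicOfDegree.of_mul_left ?_
    rw [← hq0, ← hdeg]
    exact isMonicOfDegree_addSubPoly_zero hg0 hg1 W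
  have eval_hq (x : K) : (fun i ↦ (addSubPoly W g i).eval x) =
      symProd (fun i ↦ (f i).eval x) fun i ↦ (q i).eval x := by
    rw [hq]; exact map_symProd (evalRingHom x) f q
  refine ⟨monic, ?_, isCoprime_of_eval_ne_zero fun x hx ↦ ?_, fun x y h ↦ ?_⟩
  · refine degree_lt_of_mul_eq_sub hf.isMonicOfDegree hf.degree_lt monic
      (hdeg ▸ natDegree_addSubPoly_one_lt hg0 hg1 W) (G := addSubPoly W g 1) ?_
    linear_combination -hq1
  · refine addSubMap_ne_zero W (x := symProd (fun i ↦ (g i).eval x) ![x, 1]) ?_ ?_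
    · intro h0
      rcases eq_zero_or_eq_zero_of_symProd_eq_zero h0 with h0 | h0
      · exact hg.eval_ne_zero x h0
      · exact one_ne_zero (congrFun h0 1)
    · rw [← eval_addSubPoly, eval_hq, hx]
      ext i; fin_cases i <;> simp [symProd]
  · obtain ⟨c, hc, hcx⟩ := hf.exists_eval_addSubPoly hg h
    refine ⟨c⁻¹, inv_ne_zero hc, ?_⟩
    rw [eq_inv_smul_iff₀ hc]
    refine eq_of_symProd_eq_symProd (hf.eval_ne_zero x) ?_
    rw [← eval_hq, hcx, symProd_smul_right]

end IsMulFormula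

theorem exists_isMulFormula [IsAlgClosed K] (W : Affine K) [W.IsElliptic] (n : ℕ) :
    ∃ f, IsMulFormula W n f := by
  suffices h : (∃ f, IsMulFormula W n f) ∧ ∃ g, IsMulFormula W (n + 1) g from h.1
  induction n with
  | zero => exact ⟨⟨_, .zero W⟩, ⟨_, .one W⟩⟩
  | succ n ih =>
    obtain ⟨⟨f, hf⟩, ⟨g, hg⟩⟩ := ih
    obtain ⟨q, hq⟩ := hf.exists_addSubPoly_eq_symProd hg
    exact ⟨⟨g, hg⟩, ⟨q, hf.of_addSubPoly_eq_symProd hg hq⟩⟩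

end MulFormula

section Torsion

open WeierstrassCurve WeierstrassCurve.Affine WeierstrassCurve.Affine.Point Polynomial

variable {K : Type*} [Field K]

lemma exists_separable_sub_C_mul [IsAlgClosed K] {f g : K[X]} (hfg : IsCoprime f g)
    (hf : derivative f ≠ 0) : ∃ c : K, (f - C c * g).Separable := by
  classical
  have hw : wronskian f g ≠ 0 := fun h ↦ hf (hfg.wronskian_eq_zero_iff.1 h).1
  obtain ⟨c, hc⟩ := IsAlgClosed.instInfinite.exists_notMem_finset
    ((wronskian f g).roots.toFinset.image fun x ↦ f.eval x / g.eval x)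
  refine ⟨c, ?_⟩
  rw [Separable, isCoprime_iff_aeval_ne_zero_of_isAlgClosed K K]
  intro x
  by_contra! hx
  simp only [coe_aeval_eq_eval, eval_sub, derivative_sub, derivative_C_mul, eval_C_mul] at hx
  obtain ⟨h₀, h₁⟩ := hx
  have hg : g.eval x ≠ 0 := fun hg ↦ by
    have := (isCoprime_iff_aeval_ne_zero_of_isAlgClosed K K f g).1 hfg x
    simp_all
  refine hc (Finset.mem_image.2 ⟨x, ?_, (div_eq_iff hg).2 (by linear_combination h₀)⟩)
  rw [Multiset.mem_toFinset, mem_roots hw, IsRoot.def, wronskian, eval_sub, eval_mul, eval_mul]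
  linear_combination (eval x (derivative g)) * h₀ - eval x g * h₁

variable {W : Affine K}

lemma eq_or_eq_neg_of_xRep_zero_eq {P Q : W.Point} (hP : P ≠ 0) (hQ : Q ≠ 0)
    (h : P.xRep 0 = Q.xRep 0) : P = Q ∨ P = -Q := by
  match P, Q, hP, hQ with
  | .some x y _, .some x' y' _, _, _ =>
    apply eq_or_eq_neg_of_xRep_eq_xRep
    simp_all

variable [DecidableEq K]

namespace IsMulFormula

variable {n : ℕ} {f : Fin 2 → K[X]}

lemma nsmul_eq_zero_iff (hf : IsMulFormula W n f) {P : W.Point} (hP : P ≠ 0) :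
    n • P = 0 ↔ (f 1).eval (P.xRep 0) = 0 := by
  match P, hP with
  | .some x y h, _ =>
    obtain ⟨c, hc, hcx⟩ := hf.exists_xRep_nsmul x y h
    have hx1 := congrFun hcx 1
    match hQ : n • Point.some x y h with
    | .zero =>
      exact iff_of_true rfl <|
        (mul_eq_zero_iff_left hc).1 (hx1.symm.trans (hQ ▸ congrFun xRep_zero 1))
    | .some _ _ _ =>
      simp only [hQ, xRep_some, Matrix.cons_val, Pi.smul_apply, smul_eq_mul] at hx1 ⊢
      exact iff_of_false (Point.some_ne_zero _) (right_ne_zero_of_mul (hx1 ▸ one_ne_zero))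

lemma xRep_nsmul_mul (hf : IsMulFormula W n f) {P : W.Point} (hP : P ≠ 0) (hnP : n • P ≠ 0) :
    (n • P).xRep 0 * (f 1).eval (P.xRep 0) = (f 0).eval (P.xRep 0) := by
  match P, hP with
  | .some x y h, _ =>
    obtain ⟨c, -, hcx⟩ := hf.exists_xRep_nsmul x y h
    have hx0 := congrFun hcx 0
    have hx1 := congrFun hcx 1
    match hQ : n • Point.some x y h, hnP with
    | .some _ _ _, _ =>
      simp only [hQ, xRep_some, Matrix.cons_val, Pi.smul_apply, smul_eq_mul] at hx0 hx1 ⊢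
      linear_combination eval x (f 1) * hx0 - eval x (f 0) * hx1

lemma snd_ne_zero (hf : IsMulFormula W n f) (hn : 0 < n) : f 1 ≠ 0 := fun h ↦ by
  have := natDegree_eq_zero_of_isUnit (isCoprime_zero_right.1 (h ▸ hf.isCoprime))
  rw [hf.isMonicOfDegree.natDegree_eq] at this
  exact (pow_pos hn 2).ne' this

end IsMulFormula

section Upper

variable [IsAlgClosed K] (W) [W.IsElliptic]

lemma card_le_of_forall_nsmul_eq_zero {n : ℕ} (hn : 0 < n) (s : Finset W.Point)
    (hs : ∀ P ∈ s, n • P = 0 ∧ P ≠ 0) : s.card ≤ 2 * (n ^ 2 - 1) := by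
  classical
  obtain ⟨f, hf⟩ := exists_isMulFormula W n
  have two_to_one : s.card ≤ 2 * (s.image fun P ↦ P.xRep 0).card := by
    refine Finset.card_le_mul_card_image s 2 fun a ha ↦ ?_
    obtain ⟨P, hP, rfl⟩ := Finset.mem_image.1 ha
    refine (Finset.card_le_card (t := {P, -P}) fun Q hQ ↦ ?_).trans Finset.card_le_two
    rw [Finset.mem_filter] at hQ
    simpa using eq_or_eq_neg_of_xRep_zero_eq (hs Q hQ.1).2 (hs P hP).2 hQ.2
  have image_subset : (s.image fun P ↦ P.xRep 0) ⊆ (f 1).roots.toFinset := fun a ha ↦ by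
    obtain ⟨P, hP, rfl⟩ := Finset.mem_image.1 ha
    rw [Multiset.mem_toFinset, mem_roots (hf.snd_ne_zero hn)]
    exact (hf.nsmul_eq_zero_iff (hs P hP).2).1 (hs P hP).1
  have card_roots : (f 1).roots.toFinset.card < n ^ 2 := by
    have hdeg := hf.degree_lt
    rw [degree_eq_natDegree (hf.snd_ne_zero hn), Nat.cast_lt] at hdeg
    exact ((Multiset.toFinset_card_le _).trans (card_roots' _)).trans_lt hdeg
  have := Finset.card_le_card image_subset
  lia

lemma finite_ker_nsmul {n : ℕ} (hn : 0 < n) :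
    Finite (nsmulAddMonoidHom n : W.Point →+ W.Point).ker := by
  have hfin : {P : W.Point | n • P = 0 ∧ P ≠ 0}.Finite := by
    by_contra hinf
    obtain ⟨s, hs, hc⟩ := Set.Infinite.exists_subset_card_eq hinf (2 * (n ^ 2 - 1) + 1)
    have := card_le_of_forall_nsmul_eq_zero W hn s fun P hP ↦ hs hP
    lia
  refine (hfin.insert 0).subset fun P hP ↦ ?_
  by_cases h : P = 0
  exacts [.inl h, .inr ⟨hP, h⟩]

lemma not_injective_pi_zmod_point {p : ℕ} (hp : p.Prime) (φ : (Fin 3 → ZMod p) →+ W.Point) :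
    ¬ Function.Injective φ := by
  classical
  intro hφ
  have : NeZero p := ⟨hp.ne_zero⟩
  have hle := card_le_of_forall_nsmul_eq_zero W hp.pos ((Finset.univ.erase 0).image φ) fun P hP ↦ by
    obtain ⟨a, ha, rfl⟩ := Finset.mem_image.1 hP
    have hpa : p • a = 0 := by ext i; simp
    exact ⟨by rw [← map_nsmul, hpa, _root_.map_zero],
      (map_ne_zero_iff φ hφ).2 (Finset.ne_of_mem_erase ha)⟩
  rw [Finset.card_image_of_injective _ hφ, Finset.card_erase_of_mem (Finset.mem_univ _)] at hle
  simp only [Finset.card_univ, Fintype.card_pi, ZMod.card, Finset.prod_const, Fintype.card_fin]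
    at hle
  have : 2 * p ^ 2 ≤ p ^ 3 := pow_succ' p 2 ▸ Nat.mul_le_mul_right _ hp.two_le
  have : 0 < p ^ 2 := pow_pos hp.pos 2
  lia

end Upper

section Lower

variable [IsAlgClosed K] [W.IsElliptic] {n : ℕ} {f : Fin 2 → K[X]}

lemma IsMulFormula.exists_nsmul_eq (hf : IsMulFormula W n f) {x : K} (Q : W.Point) (hQ : Q ≠ 0)
    (hx : (f 0 - C (Q.xRep 0) * f 1).eval x = 0) : ∃ P : W.Point, P.xRep 0 = x ∧ n • P = Q := by
  rw [eval_sub, eval_C_mul, sub_eq_zero] at hx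
  have hx1 : (f 1).eval x ≠ 0 := fun h ↦ hf.eval_ne_zero x <| funext fun i ↦ by
    fin_cases i
    exacts [by simpa [h] using hx, h]
  obtain ⟨y, h⟩ := exists_nonsingular W x
  have hP : Point.some x y h ≠ 0 := Point.some_ne_zero _
  have hnP : n • Point.some x y h ≠ 0 := fun h0 ↦ hx1 ((hf.nsmul_eq_zero_iff hP).1 h0)
  have hxnP : (n • Point.some x y h).xRep 0 = Q.xRep 0 :=
    mul_right_cancel₀ hx1 ((hf.xRep_nsmul_mul hP hnP).trans hx)
  rcases eq_or_eq_neg_of_xRep_zero_eq hnP hQ hxnP with h1 | h1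
  · exact ⟨_, by simp, h1⟩
  · exact ⟨-Point.some x y h, by simp, by rw [neg_nsmul, h1, neg_neg]⟩

/-- A generic fibre of multiplication by `n` is a coset of the `n`-torsion subgroup. -/
lemma exists_card_le_forall_nsmul_eq_zero [CharZero K] (W : Affine K) [W.IsElliptic] (hn : 0 < n) :
    ∃ s : Finset W.Point, n ^ 2 ≤ s.card ∧ ∀ P ∈ s, n • P = 0 := by
  classical
  obtain ⟨f, hf⟩ := exists_isMulFormula W n
  have hdeg := hf.isMonicOfDegree.natDegree_eq
  have hderiv : derivative (f 0) ≠ 0 := fun h ↦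
    (pow_pos hn 2).ne' (hdeg ▸ derivative_eq_zero.1 h)
  obtain ⟨c, hsep⟩ := exists_separable_sub_C_mul hf.isCoprime hderiv
  have hmonic : IsMonicOfDegree (f 0 - C c * f 1) (n ^ 2) :=
    hf.isMonicOfDegree.sub ((natDegree_C_mul_le c _).trans_lt
      ((natDegree_lt_iff_degree_lt (hf.snd_ne_zero hn)).2 hf.degree_lt))
  set s := (f 0 - C c * f 1).roots.toFinset
  have hcard : s.card = n ^ 2 := by
    rw [Multiset.toFinset_card_of_nodup (nodup_roots hsep), ← hmonic.natDegree_eq]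
    exact (IsAlgClosed.splits _).natDegree_eq_card_roots.symm
  obtain ⟨y, h⟩ := exists_nonsingular W c
  have hfib (x : K) (hx : x ∈ s) : ∃ P : W.Point, P.xRep 0 = x ∧ n • P = .some c y h :=
    hf.exists_nsmul_eq (.some c y h) (Point.some_ne_zero _)
      (by simpa using isRoot_of_mem_roots (Multiset.mem_toFinset.1 hx))
  choose! P hPx hP using hfib
  obtain ⟨x₀, hx₀⟩ : s.Nonempty := Finset.card_pos.1 (hcard ▸ pow_pos hn 2)
  refine ⟨s.image fun x ↦ P x - P x₀, ?_, fun Q hQ ↦ ?_⟩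
  · rw [Finset.card_image_of_injOn, hcard]
    intro a ha b hb hab
    rw [← hPx a ha, ← hPx b hb, sub_left_injective hab]
  · obtain ⟨x, hx, rfl⟩ := Finset.mem_image.1 hQ
    rw [nsmul_sub, hP x hx, hP x₀ hx₀, sub_self]

end Lower

lemma HasTwoInvariantFactors.nonempty_addEquiv_zmod_prod {T : Type*} [AddCommGroup T]
    (hT : HasTwoInvariantFactors T) {n : ℕ} (hn : 0 < n) (hkill : ∀ t : T, n • t = 0)
    (hcard : n ^ 2 ≤ Nat.card T) : Nonempty (ZMod n × ZMod n ≃+ T) := by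
  obtain ⟨a, b, -, -, ⟨e⟩⟩ := hT
  have hkill' (z : ZMod a × ZMod b) : n • z = 0 :=
    e.symm.injective (by rw [map_nsmul, hkill, _root_.map_zero])
  have ha : a ∣ n :=
    (ZMod.natCast_eq_zero_iff n a).1 (by simpa using congrArg Prod.fst (hkill' (1, 0)))
  have hb : b ∣ n :=
    (ZMod.natCast_eq_zero_iff n b).1 (by simpa using congrArg Prod.snd (hkill' (0, 1)))
  rw [Nat.card_congr e.toEquiv, Nat.card_prod, Nat.card_zmod, Nat.card_zmod] at hcard
  have := Nat.le_of_dvd hn ha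
  have := Nat.le_of_dvd hn hb
  obtain rfl : a = n := by nlinarith
  obtain rfl : b = a := by nlinarith
  exact ⟨e.symm⟩

theorem exists_injective_zmod_prod_point [IsAlgClosed K] [CharZero K] (W : Affine K) [W.IsElliptic]
    {n : ℕ} (hn : 0 < n) : ∃ ψ : ZMod n × ZMod n →+ W.Point, Function.Injective ψ := by
  set T := (nsmulAddMonoidHom n : W.Point →+ W.Point).ker
  have : Finite T := finite_ker_nsmul W hn
  have hT : HasTwoInvariantFactors T := hasTwoInvariantFactors_of_forall_prime fun p hp φ hφ ↦
    not_injective_pi_zmod_point W hp (T.subtype.comp φ) (Subtype.val_injective.comp hφ)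
  have hcard : n ^ 2 ≤ Nat.card T := by
    obtain ⟨s, hs, hs0⟩ := exists_card_le_forall_nsmul_eq_zero W hn
    have := Set.ncard_le_ncard (s := (s : Set W.Point)) (t := T) (fun P hP ↦ hs0 P hP)
    rw [Set.ncard_coe_finset] at this
    exact hs.trans this
  obtain ⟨e⟩ := hT.nonempty_addEquiv_zmod_prod hn (fun t ↦ Subtype.ext t.2) hcard
  exact ⟨T.subtype.comp e.toAddMonoidHom, Subtype.val_injective.comp e.injective⟩

end Torsion

/-! ### Nets in homogeneous coordinates -/

section Net

open Matrix

variable {K : Type*} [Field K]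

/-- The determinant with rows `u`, `v`, `w`, which vanishes if and only if the points of the
projective plane with homogeneous coordinates `u`, `v`, `w` are collinear. -/
def det3 (u v w : Fin 3 → K) : K := (Matrix.of ![u, v, w]).det

lemma det3_eq (u v w : Fin 3 → K) : det3 u v w =
    u 0 * v 1 * w 2 - u 0 * v 2 * w 1 - u 1 * v 0 * w 2 + u 1 * v 2 * w 0 + u 2 * v 0 * w 1 -
      u 2 * v 1 * w 0 := by
  simp [det3, Matrix.det_fin_three]

lemma linearIndependent_iff_det3_ne_zero {u v w : Fin 3 → K} :
    LinearIndependent K ![u, v, w] ↔ det3 u v w ≠ 0 := by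
  rw [det3, ← isUnit_iff_ne_zero, ← Matrix.isUnit_iff_isUnit_det,
    ← Matrix.linearIndependent_rows_iff_isUnit]
  rfl

lemma det3_smul_left (c : K) (u v w : Fin 3 → K) : det3 (c • u) v w = c * det3 u v w := by
  simp [det3_eq]; ring

lemma det3_rotate (u v w : Fin 3 → K) : det3 v w u = det3 u v w := by simp [det3_eq]; ring

lemma det3_swap (u v w : Fin 3 → K) : det3 v u w = -det3 u v w := by simp [det3_eq]; ring

lemma crossProduct_dotProduct (u v w : Fin 3 → K) : (u ⨯₃ v) ⬝ᵥ w = det3 u v w := by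
  rw [dotProduct_comm, triple_product_eq_det, ← det3_rotate, ← det3_rotate]; rfl

lemma exists_eq_smul_add_smul_of_det3 {u v w : Fin 3 → K} (huv : LinearIndependent K ![u, v])
    (h : det3 u v w = 0) : ∃ s t : K, w = s • u + t • v := by
  have hdep : ¬LinearIndependent K (Fin.cons w ![u, v] : Fin 3 → Fin 3 → K) :=
    linearIndependent_iff_det3_ne_zero.not_left.2 (by rwa [← det3_rotate])
  rw [linearIndependent_finCons, not_and, not_not] at hdep
  obtain ⟨s, t, h⟩ := Submodule.mem_span_pair.1 (by simpa [Set.pair_comm] using hdep huv)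
  exact ⟨s, t, h.symm⟩

lemma det3_smul_smul_smul (a b c : K) (u v w : Fin 3 → K) :
    det3 (a • u) (b • v) (c • w) = a * b * c * det3 u v w := by
  simp [det3_eq]; ring

variable {H : Type*} [AddCommGroup H]

/-- Homogeneous coordinates of a realization of `H` by a 3-net: `A x`, `B y`, `C z` are collinear if
and only if `x + y + z = 0`. -/
def IsNet (A B C : H → Fin 3 → K) : Prop :=
  ∀ x y z, det3 (A x) (B y) (C z) = 0 ↔ x + y + z = 0

namespace IsNet

variable {A B C : H → Fin 3 → K}

lemma rotate (h : IsNet A B C) : IsNet B C A := fun x y z ↦ by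
  rw [det3_rotate, h, add_rotate, add_rotate]

lemma swap (h : IsNet A B C) : IsNet B A C := fun x y z ↦ by
  rw [det3_swap, neg_eq_zero, h, add_comm y]

lemma ne_zero [Nontrivial H] (h : IsNet A B C) (x : H) : A x ≠ 0 := fun hx ↦ by
  obtain ⟨a, ha⟩ := exists_ne (0 : H)
  have := (h x (-x) a).1 (by simp [hx, det3_eq])
  exact ha (by simpa using this)

lemma eq_of_eq_smul (h : IsNet A B C) {x y : H} {c : K} (hxy : A x = c • A y) : x = y := by
  have := (h x (-y) 0).1 (by rw [hxy, det3_smul_left, (h y (-y) 0).2 (by simp), mul_zero])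
  exact sub_eq_zero.1 (by simpa [sub_eq_add_neg] using this)

lemma ne_smul [Nontrivial H] (h : IsNet A B C) (x y : H) (c : K) : A x ≠ c • B y := fun hxy ↦ by
  obtain ⟨a, ha⟩ := exists_ne (0 : H)
  have := (h x y (a - x - y)).1 (by rw [hxy]; simp [det3_eq]; ring)
  exact ha (by rw [← this]; abel)

lemma comp {G : Type*} [AddCommGroup G] (h : IsNet A B C) {φ : G →+ H}
    (hφ : Function.Injective φ) : IsNet (A ∘ φ) (B ∘ φ) (C ∘ φ) := fun x y z ↦ by
  simp only [Function.comp_apply]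
  rw [h, ← map_add, ← map_add, map_eq_zero_iff φ hφ]

end IsNet

lemma collin_iff_det3_eq_zero {p q r : P2} : Collin p q r ↔ det3 p.rep q.rep r.rep = 0 := by
  have hle := finrank_range_le_card (R := ℂ) ![p.rep, q.rep, r.rep]
  rw [Collin, ← not_iff_not, ← ne_eq (det3 _ _ _), ← linearIndependent_iff_det3_ne_zero,
    linearIndependent_iff_card_eq_finrank_span]
  rw [Set.finrank, Matrix.range_cons, Matrix.range_cons_cons_empty, Set.singleton_union,
    Fintype.card_fin] at *
  lia

lemma disjoint_range_mk {X : Type*} {A B : X → Fin 3 → ℂ} (hA : ∀ x, A x ≠ 0) (hB : ∀ x, B x ≠ 0)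
    (hAB : ∀ x y (c : ℂ), A x ≠ c • B y) :
    Disjoint (Set.range fun x ↦ Projectivization.mk ℂ (A x) (hA x))
      (Set.range fun x ↦ Projectivization.mk ℂ (B x) (hB x)) := by
  rw [Set.disjoint_left]
  rintro _ ⟨x, rfl⟩ ⟨y, hxy⟩
  obtain ⟨c, hc⟩ := (Projectivization.mk_eq_mk_iff' ..).1 hxy.symm
  exact hAB x y c hc.symm

lemma IsNet.injective_mk {A B C : H → Fin 3 → ℂ} (h : IsNet A B C) (hA : ∀ x, A x ≠ 0) :
    Function.Injective fun x ↦ Projectivization.mk ℂ (A x) (hA x) := fun _ _ hxy ↦ by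
  obtain ⟨c, hc⟩ := (Projectivization.mk_eq_mk_iff' ..).1 hxy
  exact h.eq_of_eq_smul hc.symm

variable {H : Type} [AddCommGroup H]

theorem IsNet.exists_realizes [Nontrivial H] {A B C : H → Fin 3 → ℂ} (h : IsNet A B C) :
    ∃ p₁ p₂ p₃ : H → P2, Realizes p₁ p₂ p₃ := by
  have hA := h.ne_zero
  have hB := h.rotate.ne_zero
  have hC := h.rotate.rotate.ne_zero
  refine ⟨fun x ↦ .mk ℂ (A x) (hA x), fun x ↦ .mk ℂ (B x) (hB x), fun x ↦ .mk ℂ (C x) (hC x),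
    h.injective_mk hA, h.rotate.injective_mk hB, h.rotate.rotate.injective_mk hC,
    disjoint_range_mk hA hB h.ne_smul, (disjoint_range_mk hC hA h.rotate.rotate.ne_smul).symm,
    disjoint_range_mk hB hC h.rotate.ne_smul, fun x y z ↦ ?_⟩
  obtain ⟨a, ha⟩ := Projectivization.exists_smul_eq_mk_rep ℂ (A x) (hA x)
  obtain ⟨b, hb⟩ := Projectivization.exists_smul_eq_mk_rep ℂ (B y) (hB y)
  obtain ⟨c, hc⟩ := Projectivization.exists_smul_eq_mk_rep ℂ (C z) (hC z)
  rw [collin_iff_det3_eq_zero, ← h x y z, ← ha, ← hb, ← hc]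
  simp [Units.smul_def, det3_smul_smul_smul]

theorem Realizes.isNet {p₁ p₂ p₃ : H → P2} (h : Realizes p₁ p₂ p₃) :
    IsNet (fun x ↦ (p₁ x).rep) (fun x ↦ (p₂ x).rep) (fun x ↦ (p₃ x).rep) := fun x y z ↦ by
  rw [← collin_iff_det3_eq_zero]
  exact h.2.2.2.2.2.2 x y z

theorem exists_realizes_iff_exists_isNet [Nontrivial H] :
    (∃ p₁ p₂ p₃ : H → P2, Realizes p₁ p₂ p₃) ↔ ∃ A B C : H → Fin 3 → ℂ, IsNet A B C :=
  ⟨fun ⟨_, _, _, h⟩ ↦ ⟨_, _, _, h.isNet⟩, fun ⟨_, _, _, h⟩ ↦ h.exists_realizes⟩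

end Net

/-! ### Nets on an elliptic curve -/

section Realization

open WeierstrassCurve WeierstrassCurve.Affine WeierstrassCurve.Affine.Point

variable {K : Type*} [Field K] {W : Affine K}

/-- Homogeneous coordinates `![x, y, 1]` of the affine points of a Weierstrass curve, and
`![0, 1, 0]` for its point at infinity. -/
def coordVec : W.Point → Fin 3 → K
  | .zero => ![0, 1, 0]
  | .some x y _ => ![x, y, 1]

lemma coordVec_zero : coordVec (0 : W.Point) = ![0, 1, 0] := rfl

lemma coordVec_some {x y : K} (h : W.Nonsingular x y) : coordVec (.some x y h) = ![x, y, 1] := rfl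

variable {x₁ y₁ x₂ y₂ x₃ y₃ : K} {h₁ : W.Nonsingular x₁ y₁} {h₂ : W.Nonsingular x₂ y₂}
  {h₃ : W.Nonsingular x₃ y₃}

lemma det3_coordVec_ne_zero_of_X_eq (h12 : Point.some x₁ y₁ h₁ ≠ .some x₂ y₂ h₂)
    (h13 : Point.some x₁ y₁ h₁ ≠ .some x₃ y₃ h₃) (h23 : Point.some x₂ y₂ h₂ ≠ .some x₃ y₃ h₃)
    (hx : x₁ = x₂) :
    det3 (coordVec (.some x₁ y₁ h₁)) (coordVec (.some x₂ y₂ h₂))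
      (coordVec (.some x₃ y₃ h₃)) ≠ 0 := by
  have h1 := (X_eq_iff (h₁ := h₁) (h₂ := h₂)).1 hx |>.resolve_left h12
  subst hx
  have hy : y₁ ≠ y₂ := by rintro rfl; exact h12 rfl
  intro h0
  simp only [coordVec_some, det3_eq, Matrix.cons_val] at h0
  have : (y₁ - y₂) * (x₁ - x₃) = 0 := by linear_combination -h0
  have hx₃ := sub_eq_zero.1 ((mul_eq_zero.1 this).resolve_left (sub_ne_zero.2 hy))
  have h2 := (X_eq_iff (h₁ := h₁) (h₂ := h₃)).1 hx₃ |>.resolve_left h13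
  exact h23 (neg_injective (h1.symm.trans h2))

variable [DecidableEq K]

lemma det3_coordVec_eq_zero_iff_of_X_ne (hx : x₁ ≠ x₂) :
    det3 (coordVec (.some x₁ y₁ h₁)) (coordVec (.some x₂ y₂ h₂)) (coordVec (.some x₃ y₃ h₃)) = 0 ↔
      y₃ = W.slope x₁ x₂ y₁ y₂ * (x₃ - x₁) + y₁ := by
  have hd : x₁ - x₂ ≠ 0 := sub_ne_zero.2 hx
  simp only [coordVec_some, det3_eq, Matrix.cons_val, slope_of_X_ne hx]
  rw [← sub_eq_zero (a := y₃), ← mul_eq_zero_iff_left hd]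
  field_simp
  grind

lemma eq_addX_of_eq_slope_mul (hx : x₁ ≠ x₂)
    (h13 : Point.some x₁ y₁ h₁ ≠ .some x₃ y₃ h₃) (h23 : Point.some x₂ y₂ h₂ ≠ .some x₃ y₃ h₃)
    (hy₃ : y₃ = W.slope x₁ x₂ y₁ y₂ * (x₃ - x₁) + y₁) :
    x₃ = W.addX x₁ x₂ (W.slope x₁ x₂ y₁ y₂) := by
  have hsl := slope_of_X_ne (W := W) (y₁ := y₁) (y₂ := y₂) hx
  have hpoly := addPolynomial_slope h₁.1 h₂.1 fun hxy ↦ hx hxy.1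
  generalize W.slope x₁ x₂ y₁ y₂ = l at *
  have hroot : (W.addPolynomial x₁ y₁ l).eval x₃ = 0 := by
    have := (equation_iff x₃ y₃).1 h₃.1
    rw [hy₃] at this
    simp only [addPolynomial_eq, Cubic.toPoly, Polynomial.eval_neg, Polynomial.eval_add,
      Polynomial.eval_mul, Polynomial.eval_pow, Polynomial.eval_C, Polynomial.eval_X]
    linear_combination this
  simp only [hpoly, Polynomial.eval_neg, Polynomial.eval_mul, Polynomial.eval_sub,
    Polynomial.eval_X, Polynomial.eval_C, neg_eq_zero, mul_eq_zero, sub_eq_zero] at hroot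
  rcases hroot with (rfl | rfl) | h
  · exact (h13 (by simp [hy₃])).elim
  · rw [eq_div_iff (sub_ne_zero.2 hx)] at hsl
    exact (h23 (by simp only [Point.some.injEq, true_and]; linear_combination hsl - hy₃)).elim
  · exact h

lemma add_add_eq_zero_iff_of_X_ne (hx : x₁ ≠ x₂) :
    Point.some x₁ y₁ h₁ + .some x₂ y₂ h₂ + .some x₃ y₃ h₃ = 0 ↔
      x₃ = W.addX x₁ x₂ (W.slope x₁ x₂ y₁ y₂) ∧ y₃ = W.slope x₁ x₂ y₁ y₂ * (x₃ - x₁) + y₁ := by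
  rw [add_eq_zero_iff_eq_neg, add_some fun hxy ↦ hx hxy.1, neg_some, Point.some.injEq]
  constructor
  · rintro ⟨rfl, h⟩
    rw [addY, negAddY, negY, negY] at h
    exact ⟨rfl, by linear_combination h⟩
  · rintro ⟨rfl, rfl⟩
    exact ⟨rfl, by rw [addY, negAddY]⟩

lemma det3_coordVec_eq_zero_iff {P Q R : W.Point} (hP : P ≠ 0) (hQ : Q ≠ 0) (hR : R ≠ 0)
    (hPQ : P ≠ Q) (hPR : P ≠ R) (hQR : Q ≠ R) :
    det3 (coordVec P) (coordVec Q) (coordVec R) = 0 ↔ P + Q + R = 0 := by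
  match P, Q, R, hP, hQ, hR with
  | .some x₁ y₁ h₁, .some x₂ y₂ h₂, .some x₃ y₃ h₃, _, _, _ =>
    by_cases hx : x₁ = x₂
    · refine iff_of_false (det3_coordVec_ne_zero_of_X_eq hPQ hPR hQR hx) ?_
      rw [(X_eq_iff.1 hx).resolve_left hPQ, neg_add_cancel, zero_add]
      exact Point.some_ne_zero _
    · rw [det3_coordVec_eq_zero_iff_of_X_ne hx, add_add_eq_zero_iff_of_X_ne hx]
      exact ⟨fun h ↦ ⟨eq_addX_of_eq_slope_mul hx hPR hQR h, h⟩, And.right⟩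

lemma add_add_eq_zero_of_det3_coordVec_eq_zero {P Q R : W.Point}
    (hPQ : P ≠ Q) (hPR : P ≠ R) (hQR : Q ≠ R)
    (h : det3 (coordVec P) (coordVec Q) (coordVec R) = 0) : P + Q + R = 0 := by
  match P, Q, R, hPQ, hPR, hQR, h with
  | .some _ _ _, .some _ _ _, .some _ _ _, _, _, _, h =>
    exact (det3_coordVec_eq_zero_iff (Point.some_ne_zero _) (Point.some_ne_zero _)
      (Point.some_ne_zero _) ‹_› ‹_› ‹_›).1 h
  | .zero, .some _ _ h₂, .some _ _ h₃, _, _, hQR, h =>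
    simp only [coordVec, det3_eq, Matrix.cons_val] at h
    rw [(X_eq_iff (h₁ := h₂) (h₂ := h₃)).1 (by linear_combination -h) |>.resolve_left hQR, zero_def]
    abel
  | .some _ _ h₁, .zero, .some _ _ h₃, _, hPR, _, h =>
    simp only [coordVec, det3_eq, Matrix.cons_val] at h
    rw [(X_eq_iff (h₁ := h₁) (h₂ := h₃)).1 (by linear_combination h) |>.resolve_left hPR, zero_def]
    abel
  | .some _ _ h₁, .some _ _ h₂, .zero, hPQ, _, _, h =>
    simp only [coordVec, det3_eq, Matrix.cons_val] at h
    rw [(X_eq_iff (h₁ := h₁) (h₂ := h₂)).1 (by linear_combination -h) |>.resolve_left hPQ, zero_def]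
    abel
  | .zero, .zero, _, hPQ, _, _, _ => exact (hPQ rfl).elim
  | .zero, _, .zero, _, hPR, _, _ => exact (hPR rfl).elim
  | _, .zero, .zero, _, _, hQR, _ => exact (hQR rfl).elim

variable {H : Type*} [AddCommGroup H]

/-- Three points of the curve in the cosets of `P`, `2P` and `-3P` are distinct and not at infinity,
so they are collinear if and only if they add up to zero. -/
lemma isNet_coordVec_of_forall_dvd {j : H →+ W.Point} (hj : Function.Injective j) {P : W.Point}
    (hP : ∀ (k : ℤ) (x : H), k • P = j x → 7 ∣ k) :
    IsNet (fun x ↦ coordVec ((1 : ℤ) • P + j x)) (fun x ↦ coordVec ((2 : ℤ) • P + j x))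
      (fun x ↦ coordVec ((-3 : ℤ) • P + j x)) := by
  have add_ne_zero {m : ℤ} (x : H) (hm : ¬ 7 ∣ m) : m • P + j x ≠ 0 := fun h ↦
    hm (hP m (-x) (by rw [map_neg, ← add_eq_zero_iff_eq_neg, h]))
  have add_ne_add {m n : ℤ} (x y : H) (hmn : ¬ 7 ∣ m - n) : m • P + j x ≠ n • P + j y := fun h ↦
    hmn (hP (m - n) (y - x) (by
      rw [sub_zsmul, map_sub, ← sub_eq_sub_iff_add_eq_add.2 (h.trans (add_comm _ _))]; abel))
  intro x y z
  rw [det3_coordVec_eq_zero_iff (add_ne_zero x (by decide)) (add_ne_zero y (by decide))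
    (add_ne_zero z (by decide)) (add_ne_add x y (by decide)) (add_ne_add x z (by decide))
    (add_ne_add y z (by decide)), ← map_eq_zero_iff j hj, map_add, map_add]
  refine Eq.congr_left ?_
  module

end Realization

section Existence

variable {K : Type*} [Field K] [IsAlgClosed K] [CharZero K]

lemma exists_isNet_zmod_prod {a b : ℕ} (ha : 0 < a) (hb : 0 < b) :
    ∃ A B C : ZMod a × ZMod b → Fin 3 → K, IsNet A B C := by
  classical
  have hN : 0 < 7 * b * a := by positivity
  obtain ⟨ψ, hψ⟩ := exists_injective_zmod_prod_point (WeierstrassCurve.ofJ (0 : K)) hN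
  obtain ⟨φ, hφ⟩ := exists_injective_zmod_hom hN.ne' (Dvd.intro_left _ (by ring : 7 * a * b = _))
  have hj : Function.Injective (ψ.comp ((zmodMulHom (7 * b) a).prodMap φ)) :=
    hψ.comp ((zmodMulHom_injective (by positivity) a).prodMap hφ)
  refine ⟨_, _, _, isNet_coordVec_of_forall_dvd hj (P := ψ (1, 0)) fun k ⟨x, y⟩ hk ↦ ?_⟩
  obtain ⟨m, rfl⟩ := ZMod.intCast_surjective x
  rw [← map_zsmul, AddMonoidHom.comp_apply] at hk
  have hkm := congrArg Prod.fst (hψ hk)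
  simp only [AddMonoidHom.coe_prodMap, Prod.map_apply, zmodMulHom_intCast, Prod.smul_mk,
    zsmul_one] at hkm
  have hdvd : ((7 * b * a : ℕ) : ℤ) ∣ k - (7 * b : ℕ) * m := by
    rw [← ZMod.intCast_zmod_eq_zero_iff_dvd]
    push_cast at hkm ⊢
    rw [hkm, sub_self]
  push_cast at hdvd
  have h7 : (7 : ℤ) ∣ k - 7 * b * m := (Dvd.intro (b * a : ℤ) (by ring)).trans hdvd
  exact (dvd_sub_left (Dvd.intro (b * m : ℤ) (by ring))).1 h7

theorem HasTwoInvariantFactors.exists_isNet {H : Type*} [AddCommGroup H]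
    (hH : HasTwoInvariantFactors H) : ∃ A B C : H → Fin 3 → K, IsNet A B C := by
  obtain ⟨a, b, ha, hb, ⟨e⟩⟩ := hH
  obtain ⟨A, B, C, h⟩ := exists_isNet_zmod_prod (K := K) ha hb
  exact ⟨_, _, _, h.comp (φ := e.toAddMonoidHom) e.injective⟩

end Existence

/-! ### Homogeneous polynomials -/

section Homogeneous

open MvPolynomial

variable {σ R : Type*} [CommRing R]

lemma eq_monomial_of_natTrailingDegree_eq {p : Polynomial R}
    (hp : p.natTrailingDegree = p.natDegree) :
    p = Polynomial.monomial p.natDegree p.leadingCoeff := by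
  ext i
  rw [Polynomial.coeff_monomial]
  rcases lt_trichotomy i p.natDegree with h | h | h
  · rw [Polynomial.coeff_eq_zero_of_lt_natTrailingDegree (hp ▸ h), if_neg h.ne']
  · simp [h]
  · rw [Polynomial.coeff_eq_zero_of_natDegree_lt h, if_neg h.ne]

lemma exists_eq_monomial_of_mul_eq_monomial [IsDomain R] {p q : Polynomial R} {n : ℕ} {c : R}
    (hc : c ≠ 0) (h : p * q = Polynomial.monomial n c) :
    ∃ k l a b, k + l = n ∧ p = Polynomial.monomial k a ∧ q = Polynomial.monomial l b := by
  have hpq : p * q ≠ 0 := by rwa [h, Ne, Polynomial.monomial_eq_zero_iff]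
  have hp := left_ne_zero_of_mul hpq
  have hq := right_ne_zero_of_mul hpq
  have hdeg : p.natDegree + q.natDegree = n := by
    rw [← Polynomial.natDegree_mul hp hq, h, Polynomial.natDegree_monomial_eq _ hc]
  have htrail : p.natTrailingDegree + q.natTrailingDegree = n := by
    rw [← Polynomial.natTrailingDegree_mul hp hq, h, Polynomial.natTrailingDegree_monomial hc]
  have hp' := p.natTrailingDegree_le_natDegree
  have hq' := q.natTrailingDegree_le_natDegree
  exact ⟨_, _, _, _, hdeg, eq_monomial_of_natTrailingDegree_eq (by lia),
    eq_monomial_of_natTrailingDegree_eq (by lia)⟩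

/-- The homomorphism `X i ↦ X i * T` into polynomials in `T`; the `n`-th coefficient of the image of
a polynomial is its homogeneous component of degree `n`. -/
noncomputable def gradingHom : MvPolynomial σ R →ₐ[R] Polynomial (MvPolynomial σ R) :=
  aeval fun i ↦ Polynomial.C (X i) * Polynomial.X

lemma gradingHom_monomial (d : σ →₀ ℕ) (r : R) :
    gradingHom (monomial d r) = Polynomial.monomial d.degree (monomial d r) := by
  rw [gradingHom, aeval_monomial, ← Polynomial.C_mul_X_pow_eq_monomial, monomial_eq,
    Polynomial.C_mul, mul_assoc, IsScalarTower.algebraMap_apply R (MvPolynomial σ R)]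
  simp_rw [Finsupp.prod, mul_pow, Finset.prod_mul_distrib, Finset.prod_pow_eq_pow_sum, map_prod,
    Polynomial.C_pow]
  rfl

lemma coeff_gradingHom (F : MvPolynomial σ R) (n : ℕ) :
    (gradingHom F).coeff n = homogeneousComponent n F := by
  induction F using MvPolynomial.induction_on' with
  | monomial d r =>
    rw [gradingHom_monomial, Polynomial.coeff_monomial,
      homogeneousComponent_of_mem (isHomogeneous_monomial r rfl)]
    exact if_congr eq_comm rfl rfl
  | add p q hp hq => rw [map_add, Polynomial.coeff_add, hp, hq, map_add]

lemma gradingHom_eq_monomial {F : MvPolynomial σ R} {n : ℕ} (h : F.IsHomogeneous n) :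
    gradingHom F = Polynomial.monomial n F := by
  ext1 i
  rw [coeff_gradingHom, Polynomial.coeff_monomial, homogeneousComponent_of_mem h]
  exact if_congr eq_comm rfl rfl

lemma isHomogeneous_of_gradingHom_eq_monomial {F G : MvPolynomial σ R} {n : ℕ}
    (h : gradingHom F = Polynomial.monomial n G) : F.IsHomogeneous n := by
  intro d hd
  refine (DFunLike.congr_fun Finsupp.degree_eq_weight_one d).symm.trans ?_
  by_contra hn
  have hcoeff := congrArg (coeff d) (coeff_gradingHom F d.degree)
  rw [h, Polynomial.coeff_monomial, if_neg (Ne.symm hn), coeff_homogeneousComponent, if_pos rfl]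
    at hcoeff
  exact hd hcoeff.symm

lemma isHomogeneous_factors [IsDomain R] {P Q : MvPolynomial σ R} {n : ℕ}
    (h : (P * Q).IsHomogeneous n) (h0 : P * Q ≠ 0) :
    ∃ k l, k + l = n ∧ P.IsHomogeneous k ∧ Q.IsHomogeneous l := by
  have hPQ := gradingHom_eq_monomial h
  rw [map_mul] at hPQ
  obtain ⟨k, l, F, G, hkl, hP, hQ⟩ := exists_eq_monomial_of_mul_eq_monomial h0 hPQ
  exact ⟨k, l, hkl, isHomogeneous_of_gradingHom_eq_monomial hP,
    isHomogeneous_of_gradingHom_eq_monomial hQ⟩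

lemma eq_C_of_isHomogeneous_zero {P : MvPolynomial σ R} (h : P.IsHomogeneous 0) :
    P = C (coeff 0 P) :=
  totalDegree_eq_zero_iff_eq_C.1 ((totalDegree_zero_iff_isHomogeneous σ).2 h)

end Homogeneous

/-! ### Common zeros of forms -/

section CommonZero

open MvPolynomial

variable {K : Type*} [Field K] {n : ℕ}

/-- The endomorphism of `K[X₀, …, Xₙ₋₁]` that sends the first `k` variables to zero. -/
noncomputable def killFirst (k : ℕ) : MvPolynomial (Fin n) K →ₐ[K] MvPolynomial (Fin n) K :=
  aeval fun i ↦ if (i : ℕ) < k then 0 else X i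

lemma ker_killFirst_lt {k : ℕ} (hk : k < n) :
    RingHom.ker (killFirst (K := K) (n := n) k) <
      RingHom.ker (killFirst (K := K) (n := n) (k + 1)) := by
  refine SetLike.lt_iff_le_and_exists.2 ⟨fun p hp ↦ ?_, X ⟨k, hk⟩, ?_, ?_⟩
  · have hcomp : (killFirst (K := K) (n := n) (k + 1)).comp (killFirst k) = killFirst (k + 1) := by
      ext1 i
      by_cases hi : (i : ℕ) < k
      · simp [killFirst, hi, hi.not_gt]
      · simp [killFirst, hi]
    rw [RingHom.mem_ker] at hp ⊢
    rw [← hcomp, AlgHom.comp_apply, hp, map_zero]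
  · simp [RingHom.mem_ker, killFirst]
  · simp [RingHom.mem_ker, killFirst]

lemma le_height_ker_killFirst {k : ℕ} (hk : k ≤ n) :
    (k : ℕ∞) ≤ (RingHom.ker (killFirst (K := K) (n := n) k)).height := by
  induction k with
  | zero => simp
  | succ k ih =>
    have : (RingHom.ker (killFirst (K := K) (n := n) k)).IsPrime := RingHom.ker_isPrime _
    have : (RingHom.ker (killFirst (K := K) (n := n) (k + 1))).IsPrime := RingHom.ker_isPrime _
    calc ((k + 1 : ℕ) : ℕ∞) ≤ (RingHom.ker (killFirst (K := K) (n := n) k)).height + 1 := by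
          push_cast
          gcongr
          exact ih (by lia)
      _ ≤ _ := Ideal.height_add_one_le_of_lt_of_isPrime (ker_killFirst_lt hk)

lemma le_height_vanishingIdeal_zero :
    (n : ℕ∞) ≤ (vanishingIdeal K ({0} : Set (Fin n → K))).height := by
  have hker : RingHom.ker (killFirst (K := K) (n := n) n) =
      vanishingIdeal K ({0} : Set (Fin n → K)) := by
    have hkill : killFirst (K := K) (n := n) n =
        (Algebra.ofId K (MvPolynomial (Fin n) K)).comp (aeval (0 : Fin n → K)) := by
      ext1 i
      simp [killFirst]
    ext p
    rw [mem_vanishingIdeal_singleton_iff, RingHom.mem_ker, hkill]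
    simp [Algebra.ofId_apply]
  exact hker ▸ le_height_ker_killFirst le_rfl

/-- Fewer than `n` forms in `n` variables have a nontrivial common zero: otherwise the origin would
be a component of their zero set, of codimension `n`. -/
theorem exists_ne_zero_forall_eval_eq_zero [IsAlgClosed K] {S : Set (MvPolynomial (Fin n) K)}
    (hS : S.Finite) (hcard : S.ncard < n) (h0 : ∀ F ∈ S, eval 0 F = 0) :
    ∃ v : Fin n → K, v ≠ 0 ∧ ∀ F ∈ S, eval v F = 0 := by
  by_contra! hcon
  have hlocus : zeroLocus K (Ideal.span S) = {0} := by
    ext v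
    rw [zeroLocus_span, Set.mem_singleton_iff]
    refine ⟨fun hv ↦ ?_, fun hv ↦ hv ▸ h0⟩
    by_contra hv0
    obtain ⟨F, hF, hFv⟩ := hcon v hv0
    exact hFv (hv F hF)
  have hrad := vanishingIdeal_zeroLocus_eq_radical (k := K) (K := K) (Ideal.span S)
  rw [hlocus] at hrad
  have hmin : vanishingIdeal K ({0} : Set (Fin n → K)) ∈ (Ideal.span S).minimalPrimes :=
    ⟨⟨inferInstance, hrad ▸ Ideal.le_radical⟩,
      fun J hJ _ ↦ hrad ▸ hJ.1.radical_le_iff.2 hJ.2⟩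
  have hle := le_height_vanishingIdeal_zero.trans
    (Ideal.height_le_card_of_mem_minimalPrimes_span hS hmin)
  exact hcard.not_ge (by exact_mod_cast hle)

end CommonZero

/-! ### Linear forms, quadratic forms and cubic forms -/

section Forms

open MvPolynomial Matrix

/-- The linear form with coefficient vector `a`, as a polynomial. -/
noncomputable def linearPoly {σ R : Type*} [Fintype σ] [CommSemiring R] (a : σ → R) :
    MvPolynomial σ R :=
  ∑ i, C (a i) * X i

lemma eval_linearPoly {σ R : Type*} [Fintype σ] [CommSemiring R] (a v : σ → R) :
    eval v (linearPoly a) = a ⬝ᵥ v := by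
  simp [linearPoly, dotProduct]

lemma isHomogeneous_linearPoly {σ R : Type*} [Fintype σ] [CommSemiring R] (a : σ → R) :
    (linearPoly a).IsHomogeneous 1 :=
  .sum _ _ _ fun _ _ ↦ isHomogeneous_C_mul_X _ _

lemma exists_eq_linearPoly {σ R : Type*} [Fintype σ] [CommSemiring R] {F : MvPolynomial σ R}
    (h : F.IsHomogeneous 1) : ∃ a, F = linearPoly a := by
  rw [← mem_homogeneousSubmodule, homogeneousSubmodule_one_eq_span_X,
    Submodule.mem_span_range_iff_exists_fun] at h
  obtain ⟨a, rfl⟩ := h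
  exact ⟨a, by simp [linearPoly, smul_eq_C_mul]⟩

/-- The quadratic form on `R³` with coefficients `c` on the monomials
`x²`, `xy`, `xz`, `y²`, `yz`, `z²`. -/
def quadForm {R : Type*} [CommRing R] (c : Fin 6 → R) (v : Fin 3 → R) : R :=
  c 0 * v 0 ^ 2 + c 1 * v 0 * v 1 + c 2 * v 0 * v 2 + c 3 * v 1 ^ 2 + c 4 * v 1 * v 2 +
    c 5 * v 2 ^ 2

/-- The cubic form on `R³` with coefficients `c` on the monomials
`x³`, `x²y`, `x²z`, `xy²`, `xyz`, `xz²`, `y³`, `y²z`, `yz²`, `z³`. -/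
def cubicForm {R : Type*} [CommRing R] (c : Fin 10 → R) (v : Fin 3 → R) : R :=
  c 0 * v 0 ^ 3 + c 1 * v 0 ^ 2 * v 1 + c 2 * v 0 ^ 2 * v 2 + c 3 * v 0 * v 1 ^ 2 +
    c 4 * v 0 * v 1 * v 2 + c 5 * v 0 * v 2 ^ 2 + c 6 * v 1 ^ 3 + c 7 * v 1 ^ 2 * v 2 +
    c 8 * v 1 * v 2 ^ 2 + c 9 * v 2 ^ 3

variable {K : Type*} [Field K]

/-- The cubic form with coefficients `c`, as a polynomial. -/
noncomputable def cubicPoly (c : Fin 10 → K) : MvPolynomial (Fin 3) K :=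
  cubicForm (C ∘ c) X

lemma eq_zero_of_cubicForm_eq_zero [CharZero K] {c : Fin 10 → K}
    (h : ∀ v, cubicForm c v = 0) : c = 0 := by
  have h0 := h ![1, 0, 0]
  have h1 := h ![0, 1, 0]
  have h2 := h ![0, 0, 1]
  have h3 := h ![1, 1, 0]
  have h4 := h ![1, -1, 0]
  have h5 := h ![1, 0, 1]
  have h6 := h ![1, 0, -1]
  have h7 := h ![0, 1, 1]
  have h8 := h ![0, 1, -1]
  have h9 := h ![1, 1, 1]
  simp [cubicForm] at h0 h1 h2 h3 h4 h5 h6 h7 h8 h9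
  funext i
  fin_cases i <;> simp <;> grind only

lemma exists_dotProduct_separating {p q : Fin 3 → K} (h : LinearIndependent K ![p, q]) :
    ∃ a : Fin 3 → K, a ⬝ᵥ q = 0 ∧ a ⬝ᵥ p ≠ 0 := by
  obtain ⟨i, hi⟩ := Function.ne_iff.1 (crossProduct_ne_zero_iff_linearIndependent.2 h)
  refine ⟨q ⨯₃ Pi.single i 1, by rw [dotProduct_comm, dot_self_cross], fun h0 ↦ hi ?_⟩
  rw [dotProduct_comm, triple_product_permutation, triple_product_permutation] at h0
  simpa using h0

lemma eval_cubicPoly (c : Fin 10 → K) (v : Fin 3 → K) : eval v (cubicPoly c) = cubicForm c v := by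
  simp [cubicPoly, cubicForm]

lemma isHomogeneous_cubicPoly (c : Fin 10 → K) : (cubicPoly c).IsHomogeneous 3 := by
  have hmon (i j k : Fin 3) (r : K) :
      (C r * (X i * X j * X k) : MvPolynomial (Fin 3) K).IsHomogeneous 3 :=
    (((isHomogeneous_X K i).mul (isHomogeneous_X K j)).mul (isHomogeneous_X K k)).C_mul r
  convert ((((((((((hmon 0 0 0 (c 0)).add (hmon 0 0 1 (c 1))).add (hmon 0 0 2 (c 2))).add
    (hmon 0 1 1 (c 3))).add (hmon 0 1 2 (c 4))).add (hmon 0 2 2 (c 5))).add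
    (hmon 1 1 1 (c 6))).add (hmon 1 1 2 (c 7))).add (hmon 1 2 2 (c 8))).add
    (hmon 2 2 2 (c 9))) using 1
  simp only [cubicPoly, cubicForm, Function.comp_apply]
  ring

/-- The vanishing locus of `f` contains no line. -/
def ContainsNoLine (f : (Fin 3 → K) → K) : Prop :=
  ∀ a : Fin 3 → K, a ≠ 0 → ∃ v, a ⬝ᵥ v = 0 ∧ f v ≠ 0

lemma irreducible_of_containsNoLine {F : MvPolynomial (Fin 3) K} (hF : F.IsHomogeneous 3)
    (h : ContainsNoLine fun v ↦ eval v F) : Irreducible F := by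
  have hF0 : F ≠ 0 := by
    rintro rfl
    obtain ⟨v, _, hv⟩ := h ![1, 0, 0] (Function.ne_iff.2 ⟨0, by simp⟩)
    simp at hv
  have hlinear {P Q : MvPolynomial (Fin 3) K} (hPQ : F = P * Q) (hP : P.IsHomogeneous 1) :
      False := by
    obtain ⟨a, rfl⟩ := exists_eq_linearPoly hP
    obtain ⟨v, hav, hv⟩ := h a fun ha ↦ hF0 (by simp [hPQ, ha, linearPoly])
    exact hv (by simp [hPQ, eval_linearPoly, hav])
  have hunit {P : MvPolynomial (Fin 3) K} (hP0 : P ≠ 0) (hP : P.IsHomogeneous 0) : IsUnit P := by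
    rw [eq_C_of_isHomogeneous_zero hP] at hP0 ⊢
    exact .map C (isUnit_iff_ne_zero.2 fun hc ↦ hP0 (by rw [hc, C_0]))
  refine ⟨fun hu ↦ ?_, fun P Q hPQ ↦ ?_⟩
  · obtain ⟨r, _, rfl⟩ := MvPolynomial.isUnit_iff_eq_C_of_isReduced.1 hu
    exact absurd ((isHomogeneous_C _ r).inj_right hF hF0) (by simp)
  · have hPQ0 : P * Q ≠ 0 := hPQ ▸ hF0
    obtain ⟨k, l, hkl, hP, hQ⟩ := isHomogeneous_factors (hPQ ▸ hF) hPQ0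
    obtain rfl | rfl | rfl | rfl : k = 0 ∨ k = 1 ∨ l = 1 ∨ l = 0 := by lia
    · exact .inl (hunit (left_ne_zero_of_mul hPQ0) hP)
    · exact (hlinear hPQ hP).elim
    · exact (hlinear (hPQ.trans (mul_comm _ _)) hQ).elim
    · exact .inr (hunit (right_ne_zero_of_mul hPQ0) hQ)

end Forms

/-! ### Bézout's theorem for two cubics -/

section Bezout

open MvPolynomial Matrix

variable {σ K : Type*} [Field K]

lemma finrank_homogeneousSubmodule [Fintype σ] (n : ℕ) :
    Module.finrank K (homogeneousSubmodule σ K n) = (Fintype.card σ + n - 1).choose n := by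
  classical
  have hsupp : {d : σ →₀ ℕ | d.degree = n} =
      ((Finset.univ : Finset σ).finsuppAntidiag n : Set (σ →₀ ℕ)) := by
    ext d
    simp [Finset.mem_finsuppAntidiag, Finsupp.degree_eq_sum]
  have hsub : homogeneousSubmodule σ K n = restrictSupport K {d : σ →₀ ℕ | d.degree = n} :=
    homogeneousSubmodule_eq_finsupp_supported σ K n
  rw [hsub, Module.finrank_eq_nat_card_basis (basisRestrictSupport K _), hsupp,
    Nat.card_coe_set_eq, Set.ncard_coe_finset, Finset.card_finsuppAntidiag_nat_eq_choose,
    Finset.card_univ]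

lemma finite_homogeneousSubmodule [Finite σ] (n : ℕ) :
    Module.Finite K (homogeneousSubmodule σ K n) :=
  Module.Finite.iff_fg.2 (homogeneousSubmodule_fg σ K n)

/-- The multiples `F * P` with `P` homogeneous of degree `n`. -/
noncomputable def formMultiples (F : MvPolynomial σ K) (n : ℕ) :
    Submodule K (MvPolynomial σ K) :=
  (homogeneousSubmodule σ K n).map (LinearMap.mulLeft K F)

lemma finrank_formMultiples {F : MvPolynomial σ K} (hF : F ≠ 0) (n : ℕ) :
    Module.finrank K (formMultiples F n) = Module.finrank K (homogeneousSubmodule σ K n) :=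
  (Submodule.equivMapOfInjective _ (mul_right_injective₀ hF) _).symm.finrank_eq

lemma formMultiples_inf_le {F G : MvPolynomial σ K} {m : ℕ} (hF : Irreducible F)
    (hFm : F.IsHomogeneous m) (hFG : ¬F ∣ G) (n : ℕ) :
    formMultiples F (m + n) ⊓ formMultiples G (m + n) ≤ formMultiples (G * F) n := by
  rintro _ ⟨⟨P, -, rfl⟩, Q, hQ, hQP⟩
  simp only [LinearMap.mulLeft_apply] at hQP ⊢
  obtain ⟨R, rfl⟩ := (hF.prime.dvd_or_dvd (Dvd.intro P hQP.symm)).resolve_left hFG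
  refine ⟨R, ?_, by rw [LinearMap.mulLeft_apply, ← hQP, mul_assoc]⟩
  rcases eq_or_ne R 0 with rfl | hR0
  · exact zero_mem _
  · obtain ⟨k, l, hkl, hk, hl⟩ := isHomogeneous_factors hQ (mul_ne_zero hF.ne_zero hR0)
    obtain rfl : l = n := by have := hk.inj_right hFm hF.ne_zero; lia
    exact hl

/-- Evaluation of the forms of degree `n` at the points `p i`. -/
noncomputable def evalForms {ι : Type*} (p : ι → σ → K) (n : ℕ) :
    homogeneousSubmodule σ K n →ₗ[K] ι → K :=
  (LinearMap.pi fun i ↦ (aeval (p i)).toLinearMap) ∘ₗ (homogeneousSubmodule σ K n).subtype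

lemma evalForms_apply {ι : Type*} (p : ι → σ → K) {n : ℕ} (F : homogeneousSubmodule σ K n) (i : ι) :
    evalForms p n F i = eval (p i) F.1 := rfl

lemma surjective_evalForms [Fintype σ] {ι : Type*} [Fintype ι] {p : ι → σ → K}
    (hp : ∀ i j, i ≠ j → ∃ a : σ → K, a ⬝ᵥ p j = 0 ∧ a ⬝ᵥ p i ≠ 0) :
    Function.Surjective (evalForms p (Fintype.card ι - 1)) := by
  classical
  have hp' (i j : ι) : ∃ a : σ → K, i ≠ j → a ⬝ᵥ p j = 0 ∧ a ⬝ᵥ p i ≠ 0 := by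
    by_cases h : i = j
    · exact ⟨0, fun h' ↦ absurd h h'⟩
    · exact (hp i j h).imp fun a ha _ ↦ ha
  choose a ha using hp'
  let separator (i : ι) : homogeneousSubmodule σ K (Fintype.card ι - 1) :=
    ⟨∏ j ∈ Finset.univ.erase i, linearPoly (a i j), by
      simpa using IsHomogeneous.prod (Finset.univ.erase i) (fun j ↦ linearPoly (a i j))
        (fun _ ↦ 1) fun j _ ↦ isHomogeneous_linearPoly _⟩
  have heval (i k : ι) : evalForms p _ (separator i) k =
      ∏ j ∈ Finset.univ.erase i, a i j ⬝ᵥ p k := by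
    simp [evalForms_apply, separator, eval_linearPoly, map_prod]
  have hne (i : ι) : evalForms p _ (separator i) i ≠ 0 := by
    rw [heval]
    exact Finset.prod_ne_zero_iff.2 fun j hj ↦ (ha i j (Finset.ne_of_mem_erase hj).symm).2
  have hzero {i k : ι} (hik : i ≠ k) : evalForms p _ (separator i) k = 0 := by
    rw [heval]
    exact Finset.prod_eq_zero (Finset.mem_erase.2 ⟨hik.symm, Finset.mem_univ k⟩) (ha i k hik).1
  intro w
  refine ⟨∑ i, (w i / evalForms p _ (separator i) i) • separator i, funext fun k ↦ ?_⟩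
  rw [map_sum, Finset.sum_apply, Finset.sum_eq_single k]
  · simp [hne k]
  · intro i _ hik
    simp [hzero hik]
  · simp

/-- In degree 9, the multiples of `F` and of `G` span a space of dimension at least `28 + 28 - 10`,
if `F` does not divide `G`, whereas the forms vanishing at ten points make up a space of dimension
`55 - 10`. -/
theorem dvd_of_eval_eq_zero {F G : MvPolynomial (Fin 3) K} (hF : Irreducible F)
    (hF3 : F.IsHomogeneous 3) (hG3 : G.IsHomogeneous 3) {p : Fin 10 → Fin 3 → K}
    (hp : ∀ i j, i ≠ j → LinearIndependent K ![p i, p j]) (hpF : ∀ i, eval (p i) F = 0)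
    (hpG : ∀ i, eval (p i) G = 0) : F ∣ G := by
  by_contra hFG
  have hG0 : G ≠ 0 := fun h ↦ hFG (h ▸ dvd_zero F)
  have hfin (n : ℕ) := finite_homogeneousSubmodule (σ := Fin 3) (K := K) n
  have hfin' (E : MvPolynomial (Fin 3) K) (n : ℕ) : Module.Finite K (formMultiples E n) :=
    .map _ _
  have hle : formMultiples F 6 ⊔ formMultiples G 6 ≤
      (LinearMap.ker (evalForms p 9)).map (homogeneousSubmodule (Fin 3) K 9).subtype := by
    refine sup_le ?_ ?_ <;> rintro _ ⟨P, hP, rfl⟩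
    · exact ⟨⟨_, hF3.mul hP⟩, funext fun i ↦ by simp [evalForms_apply, hpF], rfl⟩
    · exact ⟨⟨_, hG3.mul hP⟩, funext fun i ↦ by simp [evalForms_apply, hpG], rfl⟩
  have hsup := (Submodule.finrank_mono hle).trans_eq (Submodule.finrank_map_subtype_eq _ _)
  have hinf := Submodule.finrank_mono (formMultiples_inf_le hF hF3 hFG 3)
  have hadd := Submodule.finrank_sup_add_finrank_inf_eq (formMultiples F 6) (formMultiples G 6)
  have hsurj : Function.Surjective (evalForms p 9) :=
    surjective_evalForms (ι := Fin 10) fun i j hij ↦ exists_dotProduct_separating (hp i j hij)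
  have hker := LinearMap.finrank_range_add_finrank_ker (evalForms p 9)
  rw [LinearMap.range_eq_top.2 hsurj, finrank_top] at hker
  simp [finrank_formMultiples, hF.ne_zero, hG0, finrank_homogeneousSubmodule, Nat.choose] at *
  lia

theorem cubicForm_eq_zero_of_cubicForm_eq_zero [CharZero K] {c c' : Fin 10 → K}
    (hc : ContainsNoLine (cubicForm c)) (hc' : c' ≠ 0) {p : Fin 10 → Fin 3 → K}
    (hp : ∀ i j, i ≠ j → LinearIndependent K ![p i, p j]) (hpc : ∀ i, cubicForm c (p i) = 0)
    (hpc' : ∀ i, cubicForm c' (p i) = 0) {v : Fin 3 → K} (hv : cubicForm c' v = 0) :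
    cubicForm c v = 0 := by
  have hirr : Irreducible (cubicPoly c) :=
    irreducible_of_containsNoLine (isHomogeneous_cubicPoly c) (by simpa [eval_cubicPoly] using hc)
  obtain ⟨R, hR⟩ := dvd_of_eval_eq_zero hirr (isHomogeneous_cubicPoly c)
    (isHomogeneous_cubicPoly c') hp (by simpa [eval_cubicPoly] using hpc)
    (by simpa [eval_cubicPoly] using hpc')
  have h0 : cubicPoly c * R ≠ 0 := fun h0 ↦ hc' <| eq_zero_of_cubicForm_eq_zero fun w ↦ by
    rw [← eval_cubicPoly, hR, h0, map_zero]
  obtain ⟨k, l, hkl, hk, hl⟩ := isHomogeneous_factors (hR ▸ isHomogeneous_cubicPoly c') h0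
  obtain rfl : l = 0 := by
    have := hk.inj_right (isHomogeneous_cubicPoly c) hirr.ne_zero
    lia
  have hRC := eq_C_of_isHomogeneous_zero hl
  rw [← eval_cubicPoly, hR, map_mul, hRC, eval_C, eval_cubicPoly] at hv
  refine (mul_eq_zero.1 hv).resolve_right fun hR0 ↦ right_ne_zero_of_mul h0 ?_
  rw [hRC, hR0, C_0]

end Bezout

/-! ### Cubics through the points of a 3 × 3 grid -/

section Grid

open Matrix

variable {K : Type*} [Field K]

/-- The gradient at `v` of the quadratic form with coefficients `c`. -/
def quadGrad (c : Fin 6 → K) (v : Fin 3 → K) : Fin 3 → K :=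
  ![2 * c 0 * v 0 + c 1 * v 1 + c 2 * v 2, c 1 * v 0 + 2 * c 3 * v 1 + c 4 * v 2,
    c 2 * v 0 + c 4 * v 1 + 2 * c 5 * v 2]

/-- The gradient at `v` of the cubic form with coefficients `c`. -/
def cubicGrad (c : Fin 10 → K) (v : Fin 3 → K) : Fin 3 → K :=
  ![quadForm ![3 * c 0, 2 * c 1, 2 * c 2, c 3, c 4, c 5] v,
    quadForm ![c 1, 2 * c 3, c 4, 3 * c 6, 2 * c 7, c 8] v,
    quadForm ![c 2, c 4, 2 * c 5, c 7, 2 * c 8, 3 * c 9] v]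

/-- The coefficients of the product of two linear forms. -/
def mulLinear (a b : Fin 3 → K) : Fin 6 → K :=
  ![a 0 * b 0, a 0 * b 1 + a 1 * b 0, a 0 * b 2 + a 2 * b 0, a 1 * b 1, a 1 * b 2 + a 2 * b 1,
    a 2 * b 2]

/-- The coefficients of the product of a linear form and a quadratic form. -/
def mulQuad (a : Fin 3 → K) (q : Fin 6 → K) : Fin 10 → K :=
  ![a 0 * q 0, a 0 * q 1 + a 1 * q 0, a 0 * q 2 + a 2 * q 0, a 0 * q 3 + a 1 * q 1,
    a 0 * q 4 + a 1 * q 2 + a 2 * q 1, a 0 * q 5 + a 2 * q 2, a 1 * q 3, a 1 * q 4 + a 2 * q 3,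
    a 1 * q 5 + a 2 * q 4, a 2 * q 5]

lemma quadForm_mulLinear (a b v : Fin 3 → K) :
    quadForm (mulLinear a b) v = (a ⬝ᵥ v) * (b ⬝ᵥ v) := by
  simp [quadForm, mulLinear, vec3_dotProduct]; ring

lemma cubicForm_mulQuad (a : Fin 3 → K) (q : Fin 6 → K) (v : Fin 3 → K) :
    cubicForm (mulQuad a q) v = (a ⬝ᵥ v) * quadForm q v := by
  simp [cubicForm, quadForm, mulQuad, vec3_dotProduct]; ring

lemma cubicGrad_mulQuad (a : Fin 3 → K) (q : Fin 6 → K) (v : Fin 3 → K) :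
    cubicGrad (mulQuad a q) v = quadForm q v • a + (a ⬝ᵥ v) • quadGrad q v := by
  ext i
  fin_cases i <;> simp [cubicGrad, quadGrad, quadForm, mulQuad, vec3_dotProduct] <;> ring

lemma cubicForm_sub_smul (c c' : Fin 10 → K) (k : K) (v : Fin 3 → K) :
    cubicForm (c - k • c') v = cubicForm c v - k * cubicForm c' v := by
  simp [cubicForm]; ring

lemma cubicGrad_sub_smul (c c' : Fin 10 → K) (k : K) (v : Fin 3 → K) :
    cubicGrad (c - k • c') v = cubicGrad c v - k • cubicGrad c' v := by
  ext i
  fin_cases i <;> simp [cubicGrad, quadForm] <;> ring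

lemma quadForm_smul_add_smul (c : Fin 6 → K) (s t : K) (p q : Fin 3 → K) :
    quadForm c (s • p + t • q) =
      s ^ 2 * quadForm c p + s * t * (quadGrad c p ⬝ᵥ q) + t ^ 2 * quadForm c q := by
  simp [quadForm, quadGrad, vecHead, vecTail]; ring

lemma cubicForm_smul_add_smul (c : Fin 10 → K) (s t : K) (p q : Fin 3 → K) :
    cubicForm c (s • p + t • q) = s ^ 3 * cubicForm c p + s ^ 2 * t * (cubicGrad c p ⬝ᵥ q) +
      s * t ^ 2 * (cubicGrad c q ⬝ᵥ p) + t ^ 3 * cubicForm c q := by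
  simp [cubicForm, cubicGrad, quadForm, vecHead, vecTail]; ring

lemma exists_dotProduct_eq_one {a : Fin 3 → K} (ha : a ≠ 0) : ∃ u, a ⬝ᵥ u = 1 := by
  obtain ⟨i, hi⟩ := Function.ne_iff.1 ha
  exact ⟨Pi.single i (a i)⁻¹, by simpa using mul_inv_cancel₀ hi⟩

lemma dotProduct_add_neg_smul {a u : Fin 3 → K} (hu : a ⬝ᵥ u = 1) (v : Fin 3 → K) :
    a ⬝ᵥ ((1 : K) • v + (-(a ⬝ᵥ v)) • u) = 0 := by
  rw [dotProduct_add, dotProduct_smul, dotProduct_smul, hu]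
  simp

lemma exists_quadForm_eq_mul {a : Fin 3 → K} (ha : a ≠ 0) {c : Fin 6 → K}
    (h : ∀ v, a ⬝ᵥ v = 0 → quadForm c v = 0) :
    ∃ b : Fin 3 → K, ∀ v, quadForm c v = (a ⬝ᵥ v) * (b ⬝ᵥ v) := by
  obtain ⟨u, hu⟩ := exists_dotProduct_eq_one ha
  refine ⟨quadGrad c u - quadForm c u • a, fun v ↦ ?_⟩
  have hv := h _ (dotProduct_add_neg_smul hu v)
  have hsymm : quadGrad c v ⬝ᵥ u = quadGrad c u ⬝ᵥ v := by
    simp [quadGrad, vecHead, vecTail]; ring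
  rw [quadForm_smul_add_smul, hsymm] at hv
  rw [sub_dotProduct, smul_dotProduct, smul_eq_mul]
  linear_combination hv

lemma exists_cubicForm_eq_mul {a : Fin 3 → K} (ha : a ≠ 0) {c : Fin 10 → K}
    (h : ∀ v, a ⬝ᵥ v = 0 → cubicForm c v = 0) :
    ∃ q, ∀ v, cubicForm c v = (a ⬝ᵥ v) * quadForm q v := by
  obtain ⟨u, hu⟩ := exists_dotProduct_eq_one ha
  refine ⟨u 0 • ![3 * c 0, 2 * c 1, 2 * c 2, c 3, c 4, c 5]
    + u 1 • ![c 1, 2 * c 3, c 4, 3 * c 6, 2 * c 7, c 8]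
    + u 2 • ![c 2, c 4, 2 * c 5, c 7, 2 * c 8, 3 * c 9]
    + mulLinear a (cubicForm c u • a - cubicGrad c u), fun v ↦ ?_⟩
  have hv := h _ (dotProduct_add_neg_smul hu v)
  have hadd (q q' : Fin 6 → K) : quadForm (q + q') v = quadForm q v + quadForm q' v := by
    simp [quadForm]; ring
  have hsmul (k : K) (q : Fin 6 → K) : quadForm (k • q) v = k * quadForm q v := by
    simp [quadForm]; ring
  rw [cubicForm_smul_add_smul, vec3_dotProduct (cubicGrad c v)] at hv
  simp only [hadd, hsmul, quadForm_mulLinear, sub_dotProduct, smul_dotProduct, smul_eq_mul]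
  simp only [cubicGrad, cons_val] at hv ⊢
  linear_combination hv

lemma det3_eq_zero_of_dotProduct {a u v w : Fin 3 → K} (ha : a ≠ 0) (hu : a ⬝ᵥ u = 0)
    (hv : a ⬝ᵥ v = 0) (hw : a ⬝ᵥ w = 0) : det3 u v w = 0 := by
  rw [det3, ← exists_mulVec_eq_zero_iff]
  refine ⟨a, ha, ?_⟩
  ext i
  fin_cases i <;> simpa [mulVec, dotProduct_comm _ a]

lemma exists_eq_smul_add_smul {a p q v : Fin 3 → K} (ha : a ≠ 0)
    (hpq : LinearIndependent K ![p, q]) (hp : a ⬝ᵥ p = 0) (hq : a ⬝ᵥ q = 0) (hv : a ⬝ᵥ v = 0) :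
    ∃ s t : K, v = s • p + t • q :=
  exists_eq_smul_add_smul_of_det3 hpq (det3_eq_zero_of_dotProduct ha hp hq hv)

lemma linearIndependent_pair_of_dotProduct {a p q : Fin 3 → K} (hp : a ⬝ᵥ p = 0) (hp0 : p ≠ 0)
    (hq : a ⬝ᵥ q ≠ 0) : LinearIndependent K ![p, q] := by
  rw [LinearIndependent.pair_iff' hp0]
  rintro k rfl
  simp [hp] at hq

lemma quadForm_smul_add_smul_eq_zero {c : Fin 6 → K} {p q : Fin 3 → K} {s t : K} (hs : s ≠ 0)
    (ht : t ≠ 0) (hp : quadForm c p = 0) (hq : quadForm c q = 0)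
    (hpq : quadForm c (s • p + t • q) = 0) (x y : K) : quadForm c (x • p + y • q) = 0 := by
  rw [quadForm_smul_add_smul, hp, hq] at hpq ⊢
  have hpolar : quadGrad c p ⬝ᵥ q = 0 := by
    simpa [hs, ht] using hpq
  simp [hpolar]

lemma cubicForm_smul_add_smul_eq_zero {c : Fin 10 → K} {p q : Fin 3 → K} {s t : K} (hs : s ≠ 0)
    (ht : t ≠ 0) (hp : cubicForm c p = 0) (hq : cubicForm c q = 0)
    (hpq : cubicForm c (s • p + t • q) = 0) (hgrad : cubicGrad c p ⬝ᵥ q = 0) (x y : K) :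
    cubicForm c (x • p + y • q) = 0 := by
  rw [cubicForm_smul_add_smul, hp, hq, hgrad] at hpq ⊢
  have hgrad' : cubicGrad c q ⬝ᵥ p = 0 := by
    simpa [hs, ht] using hpq
  simp [hgrad']

/-- The lines `ℓ i ⬝ᵥ v = 0` and `m j ⬝ᵥ v = 0` form a grid with nodes `p i j`: each node lies on
exactly one of the `ℓ i` and exactly one of the `m j`. -/
structure IsGrid (ℓ m : Fin 3 → Fin 3 → K) (p : Fin 3 → Fin 3 → Fin 3 → K) : Prop where
  row i i' j : ℓ i ⬝ᵥ p i' j = 0 ↔ i' = i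
  col i j j' : m j ⬝ᵥ p i j' = 0 ↔ j' = j

namespace IsGrid

variable {ℓ m : Fin 3 → Fin 3 → K} {p : Fin 3 → Fin 3 → Fin 3 → K}

lemma row_ne_zero (h : IsGrid ℓ m p) (i : Fin 3) : ℓ i ≠ 0 := fun h0 ↦ by
  simpa [h0] using (h.row i (i + 1) 0).1

lemma node_ne_zero (h : IsGrid ℓ m p) (i j : Fin 3) : p i j ≠ 0 := fun h0 ↦ by
  simpa [h0] using (h.row (i + 1) i j).1

lemma linearIndependent (h : IsGrid ℓ m p) (i : Fin 3) :
    LinearIndependent K ![p i 0, p i 1] :=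
  linearIndependent_pair_of_dotProduct ((h.col i 0 0).2 rfl) (h.node_ne_zero i 0)
    (mt (h.col i 0 1).1 (by decide))

lemma exists_eq_smul_add_smul (h : IsGrid ℓ m p) (i : Fin 3) {v : Fin 3 → K}
    (hv : ℓ i ⬝ᵥ v = 0) : ∃ s t : K, v = s • p i 0 + t • p i 1 :=
  _root_.exists_eq_smul_add_smul (h.row_ne_zero i) (h.linearIndependent i) ((h.row i i 0).2 rfl)
    ((h.row i i 1).2 rfl) hv

lemma exists_node_two_eq (h : IsGrid ℓ m p) (i : Fin 3) :
    ∃ s t : K, s ≠ 0 ∧ t ≠ 0 ∧ p i 2 = s • p i 0 + t • p i 1 := by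
  obtain ⟨s, t, hst⟩ := h.exists_eq_smul_add_smul i ((h.row i i 2).2 rfl)
  refine ⟨s, t, ?_, ?_, hst⟩ <;> rintro rfl
  · exact absurd ((h.col i 1 2).1 (by simp [hst, (h.col i 1 1).2 rfl])) (by decide)
  · exact absurd ((h.col i 0 2).1 (by simp [hst, (h.col i 0 0).2 rfl])) (by decide)

lemma cubicForm_eq_zero_of_cubicGrad (h : IsGrid ℓ m p) {c : Fin 10 → K}
    (hc : ∀ i j, ¬(i = 2 ∧ j = 2) → cubicForm c (p i j) = 0)
    (hgrad : cubicGrad c (p 0 0) ⬝ᵥ p 0 1 = 0) : cubicForm c (p 2 2) = 0 := by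
  obtain ⟨s₀, t₀, hs₀, ht₀, h₀⟩ := h.exists_node_two_eq 0
  obtain ⟨s₁, t₁, hs₁, ht₁, h₁⟩ := h.exists_node_two_eq 1
  obtain ⟨s₂, t₂, -, -, h₂⟩ := h.exists_node_two_eq 2
  obtain ⟨q, hq⟩ := exists_cubicForm_eq_mul (h.row_ne_zero 0) fun v hv ↦ by
    obtain ⟨x, y, rfl⟩ := h.exists_eq_smul_add_smul 0 hv
    exact cubicForm_smul_add_smul_eq_zero hs₀ ht₀ (hc 0 0 (by decide)) (hc 0 1 (by decide))
      (h₀ ▸ hc 0 2 (by decide)) hgrad x y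
  have hq0 (i j) (hi : i ≠ 0) (hij : ¬(i = 2 ∧ j = 2)) : quadForm q (p i j) = 0 :=
    (mul_eq_zero.1 ((hq _).symm.trans (hc i j hij))).resolve_left (mt (h.row 0 i j).1 hi)
  obtain ⟨b, hb⟩ := exists_quadForm_eq_mul (h.row_ne_zero 1) fun v hv ↦ by
    obtain ⟨x, y, rfl⟩ := h.exists_eq_smul_add_smul 1 hv
    exact quadForm_smul_add_smul_eq_zero hs₁ ht₁ (hq0 1 0 (by decide) (by decide))
      (hq0 1 1 (by decide) (by decide)) (h₁ ▸ hq0 1 2 (by decide) (by decide)) x y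
  have hb0 (j) (hj : j ≠ 2) : b ⬝ᵥ p 2 j = 0 :=
    (mul_eq_zero.1 ((hb _).symm.trans (hq0 2 j (by decide) (by simpa using hj)))).resolve_left
      (mt (h.row 1 2 j).1 (by decide))
  simp [hq, hb, h₂, hb0 0 (by decide), hb0 1 (by decide)]

/-- The Cayley–Bacharach theorem for the nodes of a grid. -/
theorem cubicForm_eq_zero (h : IsGrid ℓ m p) {c : Fin 10 → K}
    (hc : ∀ i j, ¬(i = 2 ∧ j = 2) → cubicForm c (p i j) = 0) : cubicForm c (p 2 2) = 0 := by
  -- Subtracting a multiple of the product of the columns, make the cubic vanish on the first row.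
  set c' := mulQuad (m 0) (mulLinear (m 1) (m 2)) with hc'
  have hnode (i j) : cubicForm c' (p i j) = 0 := by
    rw [hc', cubicForm_mulQuad, quadForm_mulLinear]
    fin_cases j <;> simp [(h.col i _ _).2 rfl]
  have hgrad : cubicGrad c' (p 0 0) ⬝ᵥ p 0 1 ≠ 0 := by
    simp [hc', cubicGrad_mulQuad, quadForm_mulLinear, (h.col 0 0 0).2 rfl, h.col]
  set k := cubicGrad c (p 0 0) ⬝ᵥ p 0 1 / (cubicGrad c' (p 0 0) ⬝ᵥ p 0 1) with hk
  have := h.cubicForm_eq_zero_of_cubicGrad (c := c - k • c')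
    (fun i j hij ↦ by simp [cubicForm_sub_smul, hnode, hc i j hij])
    (by simp [cubicGrad_sub_smul, hk, hgrad])
  simpa [cubicForm_sub_smul, hnode] using this

end IsGrid

end Grid

/-! ### Cubics through the cosets of a cyclic subgroup -/

section Cosets

open Matrix

variable {K : Type*} [Field K]

lemma exists_ne_zero_cubicForm_eq_zero (p : Fin 9 → Fin 3 → K) :
    ∃ c ≠ 0, ∀ i, cubicForm c (p i) = 0 := by
  let L : (Fin 10 → K) →ₗ[K] (Fin 9 → K) :=
    { toFun c i := cubicForm c (p i)
      map_add' c c' := by ext; simp [cubicForm]; ring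
      map_smul' k c := by ext; simp [cubicForm]; ring }
  have hL : LinearMap.ker L ≠ ⊥ := LinearMap.ker_ne_bot_of_finrank_lt (by simp)
  obtain ⟨c, hc, hc0⟩ := Submodule.exists_mem_ne_zero_of_ne_bot hL
  exact ⟨c, hc0, fun i ↦ congrFun (LinearMap.mem_ker.1 hc) i⟩

lemma forall_of_window {a b c : ℤ → Prop}
    (ha : ∀ i j k, i + j + k = -3 → a i → a (i + 1) → b j → b (j + 1) → b (j + 2) → c k →
      c (k + 1) → c (k + 2) → a (i + 2))
    (hb : ∀ i j k, i + j + k = -3 → a i → a (i + 1) → a (i + 2) → b j → b (j + 1) → c k →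
      c (k + 1) → c (k + 2) → b (j + 2))
    (hc : ∀ i j k, i + j + k = -3 → a i → a (i + 1) → a (i + 2) → b j → b (j + 1) → b (j + 2) →
      c (k + 1) → c (k + 2) → c k)
    (a₀ : a 0) (a₁ : a 1) (a₂ : a 2) (a₃ : a 3) (b₀ : b 0) (b₁ : b 1) (b₂ : b 2) (c₁ : c (-1))
    (c₂ : c (-2)) {n : ℤ} (hn : 3 ≤ n) :
    ∀ i, 0 ≤ i → i ≤ n → a i ∧ b i ∧ c (-1 - i) := by
  induction n, hn using Int.leInduction with
  | base =>
    have c₃ : c (-3) := hc 0 0 (-3) (by norm_num) a₀ a₁ a₂ b₀ b₁ b₂ c₂ c₁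
    have c₄ : c (-4) := hc 1 0 (-4) (by norm_num) a₁ a₂ a₃ b₀ b₁ b₂ c₃ c₂
    have b₃ : b 3 := hb 0 1 (-4) (by norm_num) a₀ a₁ a₂ b₁ b₂ c₄ c₃ c₂
    intro i hi hi'
    interval_cases i <;> simp_all
  | succ n hn ih =>
    have iha {i} (h : 0 ≤ i) (h' : i ≤ n) : a i := (ih i h h').1
    have ihb {i} (h : 0 ≤ i) (h' : i ≤ n) : b i := (ih i h h').2.1
    have ihc {i} (h : i ≤ -1) (h' : -1 - n ≤ i) : c i := by
      simpa using (ih (-1 - i) (by lia) (by lia)).2.2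
    have hcn : c (-2 - n) := hc (n - 2) 1 _ (by ring) (iha (by lia) (by lia))
      (iha (by lia) (by lia)) (iha (by lia) (by lia)) (ihb (by lia) (by lia))
      (ihb (by lia) (by lia)) (ihb (by lia) (by lia)) (ihc (by lia) (by lia))
      (ihc (by lia) (by lia))
    have han := ha (n - 1) 0 (-2 - n) (by ring) (iha (by lia) (by lia)) (iha (by lia) (by lia))
      (ihb (by lia) (by lia)) (ihb (by lia) (by lia)) (ihb (by lia) (by lia)) hcn
      (ihc (by lia) (by lia)) (ihc (by lia) (by lia))
    have hbn := hb 0 (n - 1) (-2 - n) (by ring) (iha (by lia) (by lia)) (iha (by lia) (by lia))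
      (iha (by lia) (by lia)) (ihb (by lia) (by lia)) (ihb (by lia) (by lia)) hcn
      (ihc (by lia) (by lia)) (ihc (by lia) (by lia))
    intro i hi hi'
    obtain hlt | rfl := Int.le_iff_lt_or_eq.1 hi'
    · exact ih i hi (by lia)
    · convert And.intro han (And.intro hbn hcn) using 2 <;> try ring_nf

variable {H : Type*} [AddCommGroup H] {A B C : H → Fin 3 → K}

namespace IsNet

lemma exists_line [Nontrivial H] (n : IsNet A B C) {x y z : H} (h : x + y + z = 0) :
    ∃ a : Fin 3 → K, a ≠ 0 ∧ (∀ x', a ⬝ᵥ A x' = 0 ↔ x' = x) ∧ (∀ y', a ⬝ᵥ B y' = 0 ↔ y' = y) ∧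
      ∀ z', a ⬝ᵥ C z' = 0 ↔ z' = z := by
  obtain ⟨z', hz'⟩ := exists_ne z
  have hC (z') : (A x ⨯₃ B y) ⬝ᵥ C z' = 0 ↔ z' = z := by
    rw [crossProduct_dotProduct, n, ← h, add_right_inj]
  have hA : (A x ⨯₃ B y) ⬝ᵥ A x = 0 := by rw [dotProduct_comm, dot_self_cross]
  have hB : (A x ⨯₃ B y) ⬝ᵥ B y = 0 := by rw [dotProduct_comm, dot_cross_self]
  have h0 : A x ⨯₃ B y ≠ 0 := fun h0 ↦ hz' ((hC z').1 (by simp [h0]))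
  refine ⟨A x ⨯₃ B y, h0, fun x' ↦ ⟨fun hx' ↦ ?_, ?_⟩, fun y' ↦ ⟨fun hy' ↦ ?_, ?_⟩, hC⟩
  · have := (n x' y z).1 (det3_eq_zero_of_dotProduct h0 hx' hB ((hC z).2 rfl))
    rwa [← h, add_assoc, add_assoc, add_left_inj] at this
  · rintro rfl; exact hA
  · have := (n x y' z).1 (det3_eq_zero_of_dotProduct h0 hA hy' ((hC z).2 rfl))
    rwa [← h, add_left_inj, add_right_inj] at this
  · rintro rfl; exact hB

lemma cubicForm_eq_zero (n : IsNet A B C) {h x y z : H} (h₂ : 2 • h ≠ 0)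
    (hsum : x + y + z + 3 • h = 0) {c : Fin 10 → K}
    (a₀ : cubicForm c (A x) = 0) (a₁ : cubicForm c (A (x + h)) = 0)
    (a₂ : cubicForm c (A (x + 2 • h)) = 0) (b₀ : cubicForm c (B y) = 0)
    (b₁ : cubicForm c (B (y + h)) = 0) (b₂ : cubicForm c (B (y + 2 • h)) = 0)
    (c₁ : cubicForm c (C (z + h)) = 0) (c₂ : cubicForm c (C (z + 2 • h)) = 0) :
    cubicForm c (C z) = 0 := by
  have h₁ : h ≠ 0 := right_ne_zero_of_smul h₂
  have : Nontrivial H := ⟨h, 0, h₁⟩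
  obtain ⟨r₀, -, rA₀, rB₀, rC₀⟩ := n.exists_line (x := x + 2 • h) (y := y) (z := z + h) <| by
    rw [← hsum]; abel
  obtain ⟨r₁, -, rA₁, rB₁, rC₁⟩ := n.exists_line (x := x) (y := y + h) (z := z + 2 • h) <| by
    rw [← hsum]; abel
  obtain ⟨r₂, -, rA₂, rB₂, rC₂⟩ := n.exists_line (x := x + h) (y := y + 2 • h) (z := z) <| by
    rw [← hsum]; abel
  obtain ⟨s₀, -, sA₀, sB₀, sC₀⟩ := n.exists_line (x := x + h) (y := y) (z := z + 2 • h) <| by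
    rw [← hsum]; abel
  obtain ⟨s₁, -, sA₁, sB₁, sC₁⟩ := n.exists_line (x := x) (y := y + 2 • h) (z := z + h) <| by
    rw [← hsum]; abel
  obtain ⟨s₂, -, sA₂, sB₂, sC₂⟩ := n.exists_line (x := x + 2 • h) (y := y + h) (z := z) <| by
    rw [← hsum]; abel
  have h₁₂ : h ≠ 2 • h := by simpa [two_nsmul] using h₁
  refine IsGrid.cubicForm_eq_zero (ℓ := ![r₀, r₁, r₂]) (m := ![s₀, s₁, s₂])
    (p := ![![B y, C (z + h), A (x + 2 • h)], ![C (z + 2 • h), A x, B (y + h)],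
      ![A (x + h), B (y + 2 • h), C z]]) ⟨fun i i' j ↦ ?_, fun i j j' ↦ ?_⟩ fun i j hij ↦ ?_
  · fin_cases i <;> fin_cases i' <;> fin_cases j <;>
      simp [rA₀, rB₀, rC₀, rA₁, rB₁, rC₁, rA₂, rB₂, rC₂, h₁, h₂, h₁₂, h₁₂.symm]
  · fin_cases i <;> fin_cases j <;> fin_cases j' <;>
      simp [sA₀, sB₀, sC₀, sA₁, sB₁, sC₁, sA₂, sB₂, sC₂, h₁, h₂, h₁₂, h₁₂.symm]
  · fin_cases i <;> fin_cases j <;> simp_all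

lemma forall_cubicForm_eq_zero_of_window (n : IsNet A B C) {h : H} (h₂ : 2 • h ≠ 0)
    (hfin : IsOfFinAddOrder h) {x y z : H} (hsum : x + y + z = 0) {c : Fin 10 → K}
    (ha : ∀ k : Fin 4, cubicForm c (A (x + (![0, 1, 2, 3] k : ℤ) • h)) = 0)
    (hb : ∀ k : Fin 3, cubicForm c (B (y + (![0, 1, 2] k : ℤ) • h)) = 0)
    (hc : ∀ k : Fin 2, cubicForm c (C (z + (![-1, -2] k : ℤ) • h)) = 0) (k : ℤ) :
    cubicForm c (A (x + k • h)) = 0 ∧ cubicForm c (B (y + k • h)) = 0 ∧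
      cubicForm c (C (z + k • h)) = 0 := by
  have hneg : 2 • -h ≠ 0 := by simpa using h₂
  have hadd (w : H) (i : ℤ) : w + i • h + h = w + (i + 1) • h := by module
  have hadd₂ (w : H) (i : ℤ) : w + i • h + 2 • h = w + (i + 2) • h := by module
  have hsub (w : H) (i : ℤ) : w + (i + 2) • h + -h = w + (i + 1) • h := by module
  have hsub₂ (w : H) (i : ℤ) : w + (i + 2) • h + 2 • -h = w + i • h := by module
  have hsum' {i j k l : ℤ} (hl : i + j + k + l = 0) :
      x + i • h + (y + j • h) + (z + k • h) + l • h = 0 := by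
    rw [← hsum, ← add_zero (x + y + z), ← zero_zsmul h, ← hl]; module
  have key {N : ℤ} (hN : 3 ≤ N) := forall_of_window
    (a := fun k ↦ cubicForm c (A (x + k • h)) = 0) (b := fun k ↦ cubicForm c (B (y + k • h)) = 0)
    (c := fun k ↦ cubicForm c (C (z + k • h)) = 0)
    (fun i j k hijk a₀ a₁ b₀ b₁ b₂ c₀ c₁ c₂ ↦ n.rotate.cubicForm_eq_zero
      (x := y + (j + 2) • h) (y := z + (k + 2) • h) hneg
      (by rw [← hsum' (i := i + 2) (j := j + 2) (k := k + 2) (l := -3) (by lia)]; module) b₂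
      (by rwa [hsub]) (by rwa [hsub₂]) c₂ (by rwa [hsub]) (by rwa [hsub₂]) (by rwa [hsub])
      (by rwa [hsub₂]))
    (fun i j k hijk a₀ a₁ a₂ b₀ b₁ c₀ c₁ c₂ ↦ n.rotate.rotate.cubicForm_eq_zero
      (x := z + (k + 2) • h) (y := x + (i + 2) • h) hneg
      (by rw [← hsum' (i := i + 2) (j := j + 2) (k := k + 2) (l := -3) (by lia)]; module) c₂
      (by rwa [hsub]) (by rwa [hsub₂]) a₂ (by rwa [hsub]) (by rwa [hsub₂]) (by rwa [hsub])
      (by rwa [hsub₂]))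
    (fun i j k hijk a₀ a₁ a₂ b₀ b₁ b₂ c₁ c₂ ↦ n.cubicForm_eq_zero
      (x := x + i • h) (y := y + j • h) h₂
      (by rw [← hsum' (i := i) (j := j) (k := k) (l := 3) (by lia)]; module) a₀
      (by rwa [hadd]) (by rwa [hadd₂]) b₀ (by rwa [hadd]) (by rwa [hadd₂]) (by rwa [hadd])
      (by rwa [hadd₂]))
    (ha 0) (ha 1) (ha 2) (ha 3) (hb 0) (hb 1) (hb 2) (hc 0) (hc 1) hN
  have hpos := hfin.addOrderOf_pos
  have hcoset (k : ℤ) := key (N := max 3 (addOrderOf h)) (by simp) (k % addOrderOf h)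
    (Int.emod_nonneg _ (by lia)) (by have := Int.emod_lt_of_pos k (b := addOrderOf h); lia)
  simp only [mod_addOrderOf_zsmul, sub_zsmul] at hcoset
  refine ⟨(hcoset k).1, (hcoset k).2.1, ?_⟩
  have := (hcoset (-1 - k)).2.2
  rwa [← sub_zsmul, sub_sub_cancel] at this

theorem exists_cubicForm_eq_zero (n : IsNet A B C) {h : H} (h₂ : 2 • h ≠ 0)
    (hfin : IsOfFinAddOrder h) {x y z : H} (hsum : x + y + z = 0) :
    ∃ c ≠ 0, ∀ k : ℤ, cubicForm c (A (x + k • h)) = 0 ∧ cubicForm c (B (y + k • h)) = 0 ∧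
      cubicForm c (C (z + k • h)) = 0 := by
  obtain ⟨c, hc, hp⟩ := exists_ne_zero_cubicForm_eq_zero <|
    Fin.append (Fin.append (fun k : Fin 4 ↦ A (x + (![0, 1, 2, 3] k : ℤ) • h))
      fun k : Fin 3 ↦ B (y + (![0, 1, 2] k : ℤ) • h)) fun k : Fin 2 ↦ C (z + (![-1, -2] k : ℤ) • h)
  refine ⟨c, hc, n.forall_cubicForm_eq_zero_of_window h₂ hfin hsum (fun k ↦ ?_) (fun k ↦ ?_)
    fun k ↦ ?_⟩
  · simpa using hp ((k.castAdd 3).castAdd 2)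
  · simpa using hp ((k.natAdd 4).castAdd 2)
  · simpa using hp (k.natAdd 7)

end IsNet

end Cosets

/-! ### Nets on singular irreducible cubics -/

section CubicNet

open Matrix

variable {K : Type*} [Field K]

/-- The coefficients of the cubic form with coefficients `c` after the linear substitution sending
the standard basis to `p, q, r`, expressed through values, gradients and the polar form. -/
def cubicSubst (c : Fin 10 → K) (p q r : Fin 3 → K) : Fin 10 → K :=
  ![cubicForm c p, cubicGrad c p ⬝ᵥ q, cubicGrad c p ⬝ᵥ r, cubicGrad c q ⬝ᵥ p,
    (cubicGrad c (p + q) - cubicGrad c p - cubicGrad c q) ⬝ᵥ r, cubicGrad c r ⬝ᵥ p,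
    cubicForm c q, cubicGrad c q ⬝ᵥ r, cubicGrad c r ⬝ᵥ q, cubicForm c r]

lemma cubicForm_cubicSubst (c : Fin 10 → K) (p q r v : Fin 3 → K) :
    cubicForm (cubicSubst c p q r) v = cubicForm c (v ᵥ* of ![p, q, r]) := by
  simp only [cubicSubst, cubicForm, cubicGrad, quadForm, vecMul, vec3_dotProduct, Pi.add_apply,
    Pi.sub_apply, cons_val, of_apply]
  ring

lemma cubicGrad_dotProduct_self (c : Fin 10 → K) (v : Fin 3 → K) :
    cubicGrad c v ⬝ᵥ v = 3 * cubicForm c v := by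
  simp [cubicForm, cubicGrad, quadForm, vecHead, vecTail]; ring

lemma det3_vecMul (u v w : Fin 3 → K) (M : Matrix (Fin 3) (Fin 3) K) :
    det3 (u ᵥ* M) (v ᵥ* M) (w ᵥ* M) = det3 u v w * M.det := by
  rw [det3, det3, ← det_mul]
  congr 1
  ext i j
  fin_cases i <;> rfl

lemma exists_det3_ne_zero {p q : Fin 3 → K} (h : LinearIndependent K ![p, q]) :
    ∃ w, det3 p q w ≠ 0 := by
  obtain ⟨w, hw⟩ := exists_dotProduct_eq_one (crossProduct_ne_zero_iff_linearIndependent.2 h)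
  refine ⟨w, ?_⟩
  rw [crossProduct_dotProduct] at hw
  simp [hw]

lemma ContainsNoLine.exists_smul_add_smul_ne_zero {f : (Fin 3 → K) → K} (hf : ContainsNoLine f)
    {p q : Fin 3 → K} (h : LinearIndependent K ![p, q]) : ∃ s t : K, f (s • p + t • q) ≠ 0 := by
  obtain ⟨v, hv, hfv⟩ := hf _ (crossProduct_ne_zero_iff_linearIndependent.2 h)
  rw [crossProduct_dotProduct] at hv
  obtain ⟨s, t, rfl⟩ := exists_eq_smul_add_smul_of_det3 h hv
  exact ⟨s, t, hfv⟩

lemma ContainsNoLine.comp_vecMul {f : (Fin 3 → K) → K} (hf : ContainsNoLine f)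
    {M : Matrix (Fin 3) (Fin 3) K} (hM : IsUnit M.det) : ContainsNoLine fun v ↦ f (v ᵥ* M) := by
  intro a ha
  obtain ⟨v, hv, hfv⟩ := hf (M⁻¹ *ᵥ a) fun h ↦ ha <| by
    rw [← one_mulVec a, ← mul_nonsing_inv M hM, ← mulVec_mulVec, h, mulVec_zero]
  refine ⟨v ᵥ* M⁻¹, ?_, by simpa [nonsing_inv_mul M hM] using hfv⟩
  rw [dotProduct_comm, ← dotProduct_mulVec, dotProduct_comm, hv]

/-- A line through a singular point of a cubic meets the cubic in at most one further point. -/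
lemma ContainsNoLine.det3_ne_zero [CharZero K] {c : Fin 10 → K}
    (hc : ContainsNoLine (cubicForm c)) {o p q : Fin 3 → K} (ho : cubicGrad c o = 0)
    (hp : cubicForm c p = 0) (hq : cubicForm c q = 0) (hop : LinearIndependent K ![o, p])
    (hoq : LinearIndependent K ![o, q]) (hpq : LinearIndependent K ![p, q]) : det3 o p q ≠ 0 := by
  intro hdet
  have ho0 : cubicForm c o = 0 := by
    simpa [ho] using cubicGrad_dotProduct_self c o
  obtain ⟨s, t, rfl⟩ := exists_eq_smul_add_smul_of_det3 hop hdet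
  have hs : s ≠ 0 := by
    rintro rfl
    exact (LinearIndependent.pair_iff' (hop.ne_zero 1)).1 hpq t (by simp)
  have ht : t ≠ 0 := by
    rintro rfl
    exact (LinearIndependent.pair_iff' (hop.ne_zero 0)).1 hoq s (by simp)
  obtain ⟨x, y, hxy⟩ := hc.exists_smul_add_smul_ne_zero hop
  exact hxy (cubicForm_smul_add_smul_eq_zero hs ht ho0 hp hq (by simp [ho]) x y)

variable {H : Type*} [AddCommGroup H]

namespace IsNet

variable {A B C : H → Fin 3 → K}

lemma vecMul (n : IsNet A B C) {M : Matrix (Fin 3) (Fin 3) K} (hM : M.det ≠ 0) :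
    IsNet (fun x ↦ A x ᵥ* M) (fun x ↦ B x ᵥ* M) fun x ↦ C x ᵥ* M := fun x y z ↦ by
  rw [det3_vecMul, mul_eq_zero, or_iff_left hM, n]

lemma linearIndependent_pair [Nontrivial H] (n : IsNet A B C) {x y : H} (h : x ≠ y) :
    LinearIndependent K ![A x, A y] :=
  (LinearIndependent.pair_iff' (n.ne_zero x)).2 fun _ hk ↦ h (n.eq_of_eq_smul hk.symm).symm

lemma linearIndependent_pair' [Nontrivial H] (n : IsNet A B C) (x y : H) :
    LinearIndependent K ![A x, B y] :=
  (LinearIndependent.pair_iff' (n.ne_zero x)).2 fun k hk ↦ n.swap.ne_smul y x k hk.symm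

end IsNet

/-- A net all of whose points lie on the cubic with coefficients `c`, which contains no line. -/
structure IsCubicNet (c : Fin 10 → K) (A B C : H → Fin 3 → K) : Prop where
  isNet : IsNet A B C
  containsNoLine : ContainsNoLine (cubicForm c)
  cubicForm_left (x : H) : cubicForm c (A x) = 0
  cubicForm_middle (x : H) : cubicForm c (B x) = 0
  cubicForm_right (x : H) : cubicForm c (C x) = 0

namespace IsCubicNet

variable {c : Fin 10 → K} {A B C : H → Fin 3 → K}

lemma rotate (h : IsCubicNet c A B C) : IsCubicNet c B C A :=
  ⟨h.isNet.rotate, h.containsNoLine, h.cubicForm_middle, h.cubicForm_right, h.cubicForm_left⟩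

lemma cubicSubst (h : IsCubicNet c A B C) {p q r : Fin 3 → K} (hpqr : det3 p q r ≠ 0) :
    IsCubicNet (cubicSubst c p q r) (fun x ↦ A x ᵥ* (of ![p, q, r])⁻¹)
      (fun x ↦ B x ᵥ* (of ![p, q, r])⁻¹) fun x ↦ C x ᵥ* (of ![p, q, r])⁻¹ := by
  have hunit : IsUnit (of ![p, q, r]).det := isUnit_iff_ne_zero.2 hpqr
  have hform (v) : cubicForm (_root_.cubicSubst c p q r) (v ᵥ* (of ![p, q, r])⁻¹) =
      cubicForm c v := by
    rw [cubicForm_cubicSubst, vecMul_vecMul, nonsing_inv_mul _ hunit, vecMul_one]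
  refine ⟨h.isNet.vecMul (isUnit_nonsing_inv_det _ hunit).ne_zero, ?_,
    fun x ↦ (hform _).trans (h.cubicForm_left x), fun x ↦ (hform _).trans (h.cubicForm_middle x),
    fun x ↦ (hform _).trans (h.cubicForm_right x)⟩
  simpa only [← cubicForm_cubicSubst] using h.containsNoLine.comp_vecMul hunit

variable [CharZero K] [Nontrivial H]

lemma linearIndependent_singular (h : IsCubicNet c A B C) {o : Fin 3 → K} (ho : o ≠ 0)
    (hgrad : cubicGrad c o = 0) (x : H) : LinearIndependent K ![o, A x] := by
  rw [LinearIndependent.pair_iff' ho]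
  intro k hk
  refine h.containsNoLine.det3_ne_zero (o := A x) ?_ (h.cubicForm_middle 0) (h.cubicForm_right (-x))
    (h.isNet.linearIndependent_pair' x 0) (h.isNet.rotate.rotate.swap.linearIndependent_pair' x _)
    (h.isNet.rotate.linearIndependent_pair' 0 _) ((h.isNet x 0 (-x)).2 (by simp))
  have hhom : cubicGrad c (k • o) = k ^ 2 • cubicGrad c o := by
    ext i
    fin_cases i <;> simp [cubicGrad, quadForm] <;> ring
  rw [← hk, hhom, hgrad, smul_zero]

lemma det3_singular_ne_zero (h : IsCubicNet c A B C) {o : Fin 3 → K} (ho : o ≠ 0)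
    (hgrad : cubicGrad c o = 0) (x y : H) : det3 o (A x) (B y) ≠ 0 :=
  h.containsNoLine.det3_ne_zero hgrad (h.cubicForm_left x) (h.cubicForm_middle y)
    (h.linearIndependent_singular ho hgrad x) (h.rotate.linearIndependent_singular ho hgrad y)
    (h.isNet.linearIndependent_pair' x y)

lemma eq_of_det3_singular_eq_zero (h : IsCubicNet c A B C) {o : Fin 3 → K} (ho : o ≠ 0)
    (hgrad : cubicGrad c o = 0) {x y : H} (hxy : det3 o (A x) (A y) = 0) : x = y := by
  by_contra hne
  exact h.containsNoLine.det3_ne_zero hgrad (h.cubicForm_left x) (h.cubicForm_left y)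
    (h.linearIndependent_singular ho hgrad x) (h.linearIndependent_singular ho hgrad y)
    (h.isNet.linearIndependent_pair hne) hxy

end IsCubicNet

end CubicNet

section Singular

open Matrix

variable {K : Type*} [Field K]

lemma exists_addMonoidHom_eq_sub {H G : Type*} [AddCommGroup H] [AddCommGroup G] {f g k : H → G}
    {t : G} (h : ∀ x y z, x + y + z = 0 → f x + g y + k z = t) :
    ∃ φ : H →+ G, ∀ x, φ x = f x - f 0 := by
  refine ⟨AddMonoidHom.mk' (fun x ↦ f x - f 0) fun x y ↦ ?_, fun _ ↦ rfl⟩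
  have hxy : f x + g y = f (x + y) + g 0 := add_right_cancel <|
    (h x y (-(x + y)) (by abel)).trans (h (x + y) 0 (-(x + y)) (by abel)).symm
  have hy : f 0 + g y = f y + g 0 := add_right_cancel <|
    (h 0 y (-y) (by abel)).trans (h y 0 (-y) (by abel)).symm
  rw [eq_sub_of_add_eq hxy.symm, eq_sub_of_add_eq' hy]
  abel

lemma hasTwoInvariantFactors_of_mul_mul_eq {H : Type*} [AddCommGroup H] [Finite H]
    {f g k : H → K} {t : K} (ht : t ≠ 0) (h : ∀ x y z, x + y + z = 0 → f x * g y * k z = t)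
    (hf : Function.Injective f) : HasTwoInvariantFactors H := by
  have hne (x y z : H) (hxyz : x + y + z = 0) : (f x ≠ 0 ∧ g y ≠ 0) ∧ k z ≠ 0 := by
    rw [← mul_ne_zero_iff, ← mul_ne_zero_iff, h x y z hxyz]
    exact ht
  have hf₀ (x : H) : f x ≠ 0 := (hne x (-x) 0 (by simp)).1.1
  have hg₀ (y : H) : g y ≠ 0 := (hne 0 y (-y) (by simp)).1.2
  have hk₀ (z : H) : k z ≠ 0 := (hne 0 (-z) z (by simp)).2
  obtain ⟨φ, hφ⟩ := exists_addMonoidHom_eq_sub (t := Additive.ofMul (Units.mk0 t ht))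
    (f := fun x ↦ Additive.ofMul (Units.mk0 (f x) (hf₀ x)))
    (g := fun x ↦ Additive.ofMul (Units.mk0 (g x) (hg₀ x)))
    (k := fun x ↦ Additive.ofMul (Units.mk0 (k x) (hk₀ x)))
    fun x y z hxyz ↦ congrArg Additive.ofMul (Units.ext (h x y z hxyz))
  have hinj : Function.Injective ((Units.coeHom K).comp (AddMonoidHom.toMultiplicativeLeft φ)) := by
    refine Units.val_injective.comp fun x y hxy ↦ Multiplicative.toAdd.injective (hf ?_)
    have hxy : φ x.toAdd = φ y.toAdd := hxy
    rw [hφ, hφ, sub_left_inj] at hxy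
    exact congrArg Units.val (Additive.ofMul.injective hxy)
  have := isCyclic_of_injective_ringHom _ hinj
  have : IsAddCyclic H := isCyclic_multiplicative_iff.1 this
  exact hasTwoInvariantFactors_of_isAddCyclic H

lemma not_injective_of_add_add_eq [CharZero K] {H : Type*} [AddCommGroup H] [Finite H]
    [Nontrivial H] {f g k : H → K} {t : K}
    (h : ∀ x y z, x + y + z = 0 → f x + g y + k z = t) : ¬Function.Injective f := by
  intro hf
  obtain ⟨φ, hφ⟩ := exists_addMonoidHom_eq_sub h
  obtain ⟨a, ha⟩ := exists_ne (0 : H)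
  have horder : addOrderOf a • φ a = 0 := by rw [← map_nsmul, addOrderOf_nsmul_eq_zero, map_zero]
  rw [smul_eq_zero, hφ, sub_eq_zero] at horder
  exact ha (hf (horder.resolve_left (addOrderOf_pos a).ne'))

lemma cubicGrad_eq_zero {c : Fin 10 → K} (h₅ : c 5 = 0) (h₈ : c 8 = 0) (h₉ : c 9 = 0) :
    cubicGrad c ![0, 0, 1] = 0 := by
  ext i
  fin_cases i <;> simp [cubicGrad, quadForm, h₅, h₈, h₉]

lemma ContainsNoLine.coeff_zero_ne_zero {c : Fin 10 → K} (hc : ContainsNoLine (cubicForm c))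
    (h₂ : c 2 = 0) (h₅ : c 5 = 0) (h₉ : c 9 = 0) : c 0 ≠ 0 := by
  intro h₀
  obtain ⟨v, hv, hcv⟩ := hc ![0, 1, 0] (by simp)
  have hv : v 1 = 0 := by simpa [vecHead, vecTail] using hv
  exact hcv (by simp [cubicForm, hv, h₀, h₂, h₅, h₉])

lemma ContainsNoLine.coeff_six_ne_zero {c : Fin 10 → K} (hc : ContainsNoLine (cubicForm c))
    (h₇ : c 7 = 0) (h₈ : c 8 = 0) (h₉ : c 9 = 0) : c 6 ≠ 0 := by
  intro h₆
  obtain ⟨v, hv, hcv⟩ := hc ![1, 0, 0] (by simp)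
  have hv : v 0 = 0 := by simpa [vecHead] using hv
  exact hcv (by simp [cubicForm, hv, h₆, h₇, h₈, h₉])

variable {H : Type*} [AddCommGroup H] [Nontrivial H]

namespace IsCubicNet

variable [CharZero K] {c : Fin 10 → K} {A B C : H → Fin 3 → K}

lemma sub_ne_zero (h : IsCubicNet c A B C) (h₅ : c 5 = 0) (h₈ : c 8 = 0) (h₉ : c 9 = 0) (x y : H) :
    A x 0 * B y 1 - A x 1 * B y 0 ≠ 0 := by
  simpa [det3_eq] using h.det3_singular_ne_zero (o := ![0, 0, 1]) (by simp)
    (cubicGrad_eq_zero h₅ h₈ h₉) x y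

lemma apply_zero_ne_zero (h : IsCubicNet c A B C) (h₅ : c 5 = 0) (h₇ : c 7 = 0) (h₈ : c 8 = 0)
    (h₉ : c 9 = 0) (x : H) : A x 0 ≠ 0 := by
  intro hx
  have h₆ := h.containsNoLine.coeff_six_ne_zero h₇ h₈ h₉
  have hx₁ : A x 1 = 0 := by
    simpa [cubicForm, hx, h₆, h₇, h₈, h₉] using h.cubicForm_left x
  exact h.sub_ne_zero h₅ h₈ h₉ x 0 (by simp [hx, hx₁])

lemma injective_div (h : IsCubicNet c A B C) (h₅ : c 5 = 0) (h₇ : c 7 = 0) (h₈ : c 8 = 0)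
    (h₉ : c 9 = 0) : Function.Injective fun x ↦ A x 1 / A x 0 := by
  intro x y hxy
  rw [div_eq_div_iff (h.apply_zero_ne_zero h₅ h₇ h₈ h₉ x) (h.apply_zero_ne_zero h₅ h₇ h₈ h₉ y)]
    at hxy
  refine h.eq_of_det3_singular_eq_zero (o := ![0, 0, 1]) (by simp) (cubicGrad_eq_zero h₅ h₈ h₉) ?_
  simp [det3_eq]
  linear_combination -hxy

variable [Finite H]

/-- Away from the node, `t = y / x` parametrizes the cubic, and three collinear points have
parameters with product `-c₀ / c₆`. -/
lemma hasTwoInvariantFactors_of_node (h : IsCubicNet c A B C) (h₂ : c 2 = 0) (h₅ : c 5 = 0)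
    (h₇ : c 7 = 0) (h₈ : c 8 = 0) (h₉ : c 9 = 0) : HasTwoInvariantFactors H := by
  have h₀ := h.containsNoLine.coeff_zero_ne_zero h₂ h₅ h₉
  have h₆ := h.containsNoLine.coeff_six_ne_zero h₇ h₈ h₉
  refine hasTwoInvariantFactors_of_mul_mul_eq (div_ne_zero (neg_ne_zero.2 h₀) h₆)
    (g := fun y ↦ B y 1 / B y 0) (k := fun z ↦ C z 1 / C z 0) (fun x y z hxyz ↦ ?_)
    (h.injective_div h₅ h₇ h₈ h₉)
  have hA := h.cubicForm_left x
  have hB := h.cubicForm_middle y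
  have hC := h.cubicForm_right z
  have hdet := (h.isNet x y z).2 hxyz
  simp only [cubicForm, det3_eq, h₂, h₅, h₇, h₈, h₉] at hA hB hC hdet
  have hprod : (A x 0 * B y 1 - A x 1 * B y 0) * ((B y 0 * C z 1 - B y 1 * C z 0) *
      (C z 0 * A x 1 - C z 1 * A x 0)) *
      (c 0 * (A x 0 * B y 0 * C z 0) + c 6 * (A x 1 * B y 1 * C z 1)) = 0 := by
    linear_combination
      c 4 * (A x 0 * A x 1 * B y 0 * B y 1 * C z 0 * C z 1) * hdet -
        B y 0 * B y 1 * C z 0 * C z 1 * (B y 0 * C z 1 - B y 1 * C z 0) * hA -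
        A x 0 * A x 1 * C z 0 * C z 1 * (C z 0 * A x 1 - C z 1 * A x 0) * hB -
        A x 0 * A x 1 * B y 0 * B y 1 * (A x 0 * B y 1 - A x 1 * B y 0) * hC
  have hA₀ := h.apply_zero_ne_zero h₅ h₇ h₈ h₉ x
  have hB₀ := h.rotate.apply_zero_ne_zero h₅ h₇ h₈ h₉ y
  have hC₀ := h.rotate.rotate.apply_zero_ne_zero h₅ h₇ h₈ h₉ z
  have hprod := (mul_eq_zero.1 hprod).resolve_left <|
    mul_ne_zero (h.sub_ne_zero h₅ h₈ h₉ x y) <| mul_ne_zero (h.rotate.sub_ne_zero h₅ h₈ h₉ y z)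
      (h.rotate.rotate.sub_ne_zero h₅ h₈ h₉ z x)
  field_simp
  linear_combination hprod

/-- Away from the cusp, `t = y / x` parametrizes the cubic, and three collinear points have
parameters with sum `-c₃ / c₆`. -/
lemma false_of_cusp (h : IsCubicNet c A B C) (h₄ : c 4 = 0) (h₅ : c 5 = 0)
    (h₇ : c 7 = 0) (h₈ : c 8 = 0) (h₉ : c 9 = 0) : False := by
  have h₆ := h.containsNoLine.coeff_six_ne_zero h₇ h₈ h₉
  refine not_injective_of_add_add_eq (t := -c 3 / c 6) (g := fun y ↦ B y 1 / B y 0)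
    (k := fun z ↦ C z 1 / C z 0) (fun x y z hxyz ↦ ?_) (h.injective_div h₅ h₇ h₈ h₉)
  have hA := h.cubicForm_left x
  have hB := h.cubicForm_middle y
  have hC := h.cubicForm_right z
  have hdet := (h.isNet x y z).2 hxyz
  simp only [cubicForm, det3_eq, h₄, h₅, h₇, h₈, h₉] at hA hB hC hdet
  have hsum : (A x 0 * B y 1 - A x 1 * B y 0) * ((B y 0 * C z 1 - B y 1 * C z 0) *
      (C z 0 * A x 1 - C z 1 * A x 0)) * (c 3 * (A x 0 * B y 0 * C z 0) +
        c 6 * (A x 1 * B y 0 * C z 0 + A x 0 * B y 1 * C z 0 + A x 0 * B y 0 * C z 1)) = 0 := by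
    linear_combination
      c 2 * (A x 0 * B y 0 * C z 0) ^ 2 * hdet -
        (B y 0 * C z 0) ^ 2 * (B y 0 * C z 1 - B y 1 * C z 0) * hA -
        (A x 0 * C z 0) ^ 2 * (C z 0 * A x 1 - C z 1 * A x 0) * hB -
        (A x 0 * B y 0) ^ 2 * (A x 0 * B y 1 - A x 1 * B y 0) * hC
  have hA₀ := h.apply_zero_ne_zero h₅ h₇ h₈ h₉ x
  have hB₀ := h.rotate.apply_zero_ne_zero h₅ h₇ h₈ h₉ y
  have hC₀ := h.rotate.rotate.apply_zero_ne_zero h₅ h₇ h₈ h₉ z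
  have hsum := (mul_eq_zero.1 hsum).resolve_left <|
    mul_ne_zero (h.sub_ne_zero h₅ h₈ h₉ x y) <| mul_ne_zero (h.rotate.sub_ne_zero h₅ h₈ h₉ y z)
      (h.rotate.rotate.sub_ne_zero h₅ h₈ h₉ z x)
  field_simp
  linear_combination hsum

lemma hasTwoInvariantFactors_of_coeff_eq_zero (h : IsCubicNet c A B C) (h₅ : c 5 = 0)
    (h₇ : c 7 = 0) (h₈ : c 8 = 0) (h₉ : c 9 = 0) : HasTwoInvariantFactors H := by
  by_cases h₄ : c 4 = 0
  · exact (h.false_of_cusp h₄ h₅ h₇ h₈ h₉).elim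
  refine (h.cubicSubst (p := ![c 4, -c 2, 0]) (q := ![0, 1, 0]) (r := ![0, 0, 1])
    (by simpa [det3_eq] using h₄)).hasTwoInvariantFactors_of_node ?_ ?_ ?_ ?_ ?_ <;>
    simp [_root_.cubicSubst, cubicGrad, quadForm, cubicForm, h₅, h₇, h₈, h₉]
  ring

variable [IsAlgClosed K]

theorem hasTwoInvariantFactors_of_singular (h : IsCubicNet c A B C) {o : Fin 3 → K} (ho : o ≠ 0)
    (hgrad : cubicGrad c o = 0) : HasTwoInvariantFactors H := by
  wlog h₀ : o = ![0, 0, 1] generalizing c A B C o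
  · obtain ⟨p, hp⟩ := exists_linearIndependent_pair_of_one_lt_finrank (R := K) (by simp) ho
    obtain ⟨q, hq⟩ := exists_det3_ne_zero hp
    refine this (h.cubicSubst (p := p) (q := q) (r := o) (by rwa [det3_rotate]))
      (by simp) (cubicGrad_eq_zero ?_ ?_ ?_) rfl <;> simp [_root_.cubicSubst, hgrad]
    simpa [hgrad] using cubicGrad_dotProduct_self c o
  have h₅ : c 5 = 0 := by simpa [h₀, cubicGrad, quadForm] using congrFun hgrad 0
  have h₈ : c 8 = 0 := by simpa [h₀, cubicGrad, quadForm] using congrFun hgrad 1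
  have h₉ : c 9 = 0 := by simpa [h₀, cubicGrad, quadForm] using congrFun hgrad 2
  by_cases h₇ : c 7 = 0
  · exact h.hasTwoInvariantFactors_of_coeff_eq_zero h₅ h₇ h₈ h₉
  obtain ⟨r, hr⟩ := IsAlgClosed.exists_root (.C (c 7) * .X ^ 2 + .C (c 4) * .X + .C (c 2))
    (by rw [Polynomial.degree_quadratic h₇]; norm_num)
  have hr : c 7 * r ^ 2 + c 4 * r + c 2 = 0 := by simpa [Polynomial.IsRoot] using hr
  refine (h.cubicSubst (p := ![0, 1, 0]) (q := ![1, r, 0]) (r := ![0, 0, 1])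
    (by simp [det3_eq])).hasTwoInvariantFactors_of_coeff_eq_zero ?_ ?_ ?_ ?_ <;>
    simp [_root_.cubicSubst, cubicGrad, quadForm, cubicForm, h₅, h₈, h₉]
  linear_combination hr

end IsCubicNet

end Singular

/-! ### Nets on irreducible cubics -/

section Weierstrass

open Matrix MvPolynomial WeierstrassCurve.Affine

variable {K : Type*} [Field K]

/-- The common zero is `(r, y)` with `r` a double root of the two-torsion polynomial. -/
lemma exists_singular_of_discr_eq_zero [IsAlgClosed K] [CharZero K] (W : WeierstrassCurve K)
    (h : W.Δ = 0) :
    ∃ x y, y ^ 2 + W.a₁ * x * y + W.a₃ * y = x ^ 3 + W.a₂ * x ^ 2 + W.a₄ * x + W.a₆ ∧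
      2 * y + W.a₁ * x + W.a₃ = 0 ∧ W.a₁ * y = 3 * x ^ 2 + 2 * W.a₂ * x + W.a₄ := by
  have ha : W.twoTorsionPolynomial.a ≠ 0 := by simp [WeierstrassCurve.twoTorsionPolynomial]
  obtain ⟨x, y, z, hroots⟩ :=
    (Cubic.splits_iff_roots_eq_three (φ := RingHom.id K) ha).1 (IsAlgClosed.splits _)
  have hdiscr := Cubic.discr_eq_prod_three_roots ha hroots
  have hb := Cubic.b_eq_three_roots ha hroots
  have hc := Cubic.c_eq_three_roots ha hroots
  have hd := Cubic.d_eq_three_roots ha hroots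
  obtain ⟨r, s, h₂, h₄, h₆⟩ : ∃ r s, W.b₂ = -4 * (2 * r + s) ∧
      2 * W.b₄ = 4 * (r ^ 2 + 2 * r * s) ∧ W.b₆ = -4 * r ^ 2 * s := by
    rw [W.twoTorsionPolynomial_discr, h, mul_zero, RingHom.map_zero, eq_comm] at hdiscr
    simp only [ha, pow_eq_zero_iff, mul_eq_zero, sub_eq_zero, RingHom.id_apply, ne_eq,
      OfNat.ofNat_ne_zero, not_false_eq_true, false_or] at hdiscr
    simp only [WeierstrassCurve.twoTorsionPolynomial, RingHom.id_apply] at hb hc hd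
    rcases hdiscr with (rfl | rfl) | rfl
    · exact ⟨x, z, by rw [hb]; ring, by rw [hc]; ring, by rw [hd]; ring⟩
    · exact ⟨x, y, by rw [hb]; ring, by rw [hc]; ring, by rw [hd]; ring⟩
    · exact ⟨y, x, by rw [hb]; ring, by rw [hc]; ring, by rw [hd]; ring⟩
  simp only [WeierstrassCurve.b₂, WeierstrassCurve.b₄, WeierstrassCurve.b₆] at h₂ h₄ h₆
  refine ⟨r, -(W.a₁ * r + W.a₃) / 2, ?_, by ring, ?_⟩
  · linear_combination -(r ^ 2 * h₂ + r * h₄ + h₆) / 4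
  · linear_combination -(2 * r * h₂ + h₄) / 4

/-- The coefficients of the homogenization of `y² + a₁xy + a₃y = x³ + a₂x² + a₄x + a₆`. -/
def weierstrassCoeff (W : WeierstrassCurve K) : Fin 10 → K :=
  ![-1, 0, -W.a₂, 0, W.a₁, -W.a₄, 0, 1, W.a₃, -W.a₆]

lemma exists_eq_smul_coordVec (W : WeierstrassCurve.Affine K) [W.IsElliptic] {v : Fin 3 → K}
    (hv : v ≠ 0) (h : cubicForm (weierstrassCoeff W) v = 0) :
    ∃ (P : W.Point) (k : K), k ≠ 0 ∧ v = k • coordVec P := by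
  simp only [cubicForm, weierstrassCoeff, cons_val] at h
  by_cases h₂ : v 2 = 0
  · have h₀ : v 0 = 0 := by simpa [h₂] using h
    have hv' : v = v 1 • coordVec (0 : W.Point) := by
      ext i
      fin_cases i <;> simp [h₀, h₂, coordVec_zero]
    exact ⟨0, v 1, fun h₁ ↦ hv (by rw [hv', h₁, zero_smul]), hv'⟩
  · have heq : W.Equation (v 0 / v 2) (v 1 / v 2) := by
      rw [equation_iff]
      field_simp
      linear_combination h
    refine ⟨.some _ _ (equation_iff_nonsingular.1 heq), v 2, h₂, ?_⟩
    ext i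
    fin_cases i <;> simp [coordVec_some, h₂, mul_div_cancel₀]

end Weierstrass

section Hessian

open Matrix MvPolynomial

variable {K : Type*} [Field K]

/-- The second partial derivatives of the cubic form with coefficients `c`, as linear forms. -/
def cubicHessian (c : Fin 10 → K) : Matrix (Fin 3) (Fin 3) (Fin 3 → K) :=
  !![![6 * c 0, 2 * c 1, 2 * c 2], ![2 * c 1, 2 * c 3, c 4], ![2 * c 2, c 4, 2 * c 5];
    ![2 * c 1, 2 * c 3, c 4], ![2 * c 3, 6 * c 6, 2 * c 7], ![c 4, 2 * c 7, 2 * c 8];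
    ![2 * c 2, c 4, 2 * c 5], ![c 4, 2 * c 7, 2 * c 8], ![2 * c 5, 2 * c 8, 6 * c 9]]

lemma vecMul_cubicHessian (c : Fin 10 → K) (p : Fin 3 → K) :
    p ᵥ* (cubicHessian c).map (· ⬝ᵥ p) = (2 : K) • cubicGrad c p := by
  ext i
  fin_cases i <;>
    simp [cubicHessian, cubicGrad, quadForm, vecMul, vec3_dotProduct] <;> ring

lemma cubicHessian_mulVec (c : Fin 10 → K) (p : Fin 3 → K) :
    (cubicHessian c).map (· ⬝ᵥ p) *ᵥ p = (2 : K) • cubicGrad c p := by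
  ext i
  fin_cases i <;>
    simp [cubicHessian, cubicGrad, quadForm, mulVec, vec3_dotProduct] <;> ring

lemma dotProduct_cubicHessian_mulVec (c : Fin 10 → K) (p u : Fin 3 → K) :
    u ⬝ᵥ (cubicHessian c).map (· ⬝ᵥ p) *ᵥ u = 2 * (cubicGrad c u ⬝ᵥ p) := by
  simp [cubicHessian, cubicGrad, quadForm, mulVec, vec3_dotProduct, vecHead, vecTail]
  ring

lemma exists_cubicHessian_mulVec_eq_zero [IsAlgClosed K] (c : Fin 10 → K) :
    ∃ p u : Fin 3 → K, p ≠ 0 ∧ u ≠ 0 ∧ cubicForm c p = 0 ∧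
      (cubicHessian c).map (· ⬝ᵥ p) *ᵥ u = 0 := by
  set G : MvPolynomial (Fin 3) K := ((cubicHessian c).map linearPoly).det
  have hG (v) : eval v G = ((cubicHessian c).map (· ⬝ᵥ v)).det := by
    rw [RingHom.map_det, RingHom.mapMatrix_apply, map_map]
    congr 2
    ext a
    exact eval_linearPoly a v
  obtain ⟨p, hp, hzero⟩ := exists_ne_zero_forall_eval_eq_zero (S := {cubicPoly c, G})
    (Set.toFinite _) ((Set.ncard_insert_le _ _).trans_lt (by simp)) (by
      rintro F (rfl | rfl)
      · rw [eval_cubicPoly]; simp [cubicForm]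
      · rw [hG]; simp [det_fin_three])
  obtain ⟨u, hu, hker⟩ := exists_mulVec_eq_zero_iff.2 ((hG p).symm.trans (hzero G (by simp)))
  exact ⟨p, u, hp, hu, by rw [← eval_cubicPoly]; exact hzero _ (by simp), hker⟩

end Hessian

namespace IsCubicNet

open Matrix WeierstrassCurve.Affine

variable {K : Type*} [Field K] {H : Type*} [AddCommGroup H] {c : Fin 10 → K}
  {A B C : H → Fin 3 → K}

lemma smul (h : IsCubicNet c A B C) {k : K} (hk : k ≠ 0) : IsCubicNet (k • c) A B C := by
  have hform (v) : cubicForm (k • c) v = k * cubicForm c v := by simp [cubicForm]; ring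
  refine ⟨h.isNet, fun a ha ↦ ?_, fun x ↦ ?_, fun x ↦ ?_, fun x ↦ ?_⟩
  · obtain ⟨v, hv, hcv⟩ := h.containsNoLine a ha
    exact ⟨v, hv, by simp [hform, hk, hcv]⟩
  · rw [hform, h.cubicForm_left, mul_zero]
  · rw [hform, h.cubicForm_middle, mul_zero]
  · rw [hform, h.cubicForm_right, mul_zero]

variable [Nontrivial H]

lemma exists_points {W : WeierstrassCurve.Affine K} [W.IsElliptic] [DecidableEq K]
    (h : IsCubicNet (weierstrassCoeff W) A B C) :
    ∃ P Q R : H → W.Point, P.Injective ∧ ∀ x y z, x + y + z = 0 → P x + Q y + R z = 0 := by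
  choose P a ha hA using fun x ↦
    exists_eq_smul_coordVec W (h.isNet.ne_zero x) (h.cubicForm_left x)
  choose Q b hb hB using fun x ↦
    exists_eq_smul_coordVec W (h.isNet.rotate.ne_zero x) (h.cubicForm_middle x)
  choose R d hd hC using fun x ↦
    exists_eq_smul_coordVec W (h.isNet.rotate.rotate.ne_zero x) (h.cubicForm_right x)
  have hsmul {u v : Fin 3 → K} {S T : W.Point} {k l : K} (hu : u = k • coordVec S) (hl : l ≠ 0)
      (hv : v = l • coordVec T) (hST : S = T) : u = (k / l) • v := by
    rw [hu, hv, hST, smul_smul, div_mul_cancel₀ k hl]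
  refine ⟨P, Q, R, fun x y hxy ↦ h.isNet.eq_of_eq_smul (hsmul (hA x) (ha y) (hA y) hxy),
    fun x y z hxyz ↦ add_add_eq_zero_of_det3_coordVec_eq_zero ?_ ?_ ?_ ?_⟩
  · exact fun hPQ ↦ h.isNet.ne_smul _ _ _ (hsmul (hA x) (hb y) (hB y) hPQ)
  · exact fun hPR ↦ h.isNet.swap.rotate.ne_smul _ _ _ (hsmul (hA x) (hd z) (hC z) hPR)
  · exact fun hQR ↦ h.isNet.rotate.ne_smul _ _ _ (hsmul (hB y) (hd z) (hC z) hQR)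
  · have hdet := (h.isNet x y z).2 hxyz
    rw [hA, hB, hC, det3_smul_smul_smul] at hdet
    simpa [ha, hb, hd] using hdet

variable [IsAlgClosed K] [CharZero K] [Finite H]

lemma hasTwoInvariantFactors_of_weierstrass {W : WeierstrassCurve.Affine K}
    (h : IsCubicNet (weierstrassCoeff W) A B C) : HasTwoInvariantFactors H := by
  classical
  by_cases hΔ : W.Δ = 0
  · obtain ⟨x, y, heq, hy, hx⟩ := exists_singular_of_discr_eq_zero W hΔ
    refine h.hasTwoInvariantFactors_of_singular (o := ![x, y, 1]) (by simp) ?_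
    ext i
    fin_cases i <;> simp [cubicGrad, quadForm, weierstrassCoeff]
    · linear_combination hx
    · linear_combination hy
    · linear_combination 3 * heq - x * hx - y * hy
  have : W.IsElliptic := ⟨isUnit_iff_ne_zero.2 hΔ⟩
  obtain ⟨P, Q, R, hP, hsum⟩ := h.exists_points
  obtain ⟨φ, hφ⟩ := exists_addMonoidHom_eq_sub hsum
  have hinj : Function.Injective φ := fun x y hxy ↦ hP (by simpa [hφ] using hxy)
  exact hasTwoInvariantFactors_of_forall_prime fun p hp ψ hψ ↦
    not_injective_pi_zmod_point W hp (φ.comp ψ) (hinj.comp hψ)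

/-- The hypotheses say that `![0, 1, 0]` is an inflection point with tangent line `z = 0`. -/
lemma hasTwoInvariantFactors_of_flex (h : IsCubicNet c A B C) (h₁ : c 1 = 0) (h₃ : c 3 = 0)
    (h₆ : c 6 = 0) : HasTwoInvariantFactors H := by
  by_cases h₇ : c 7 = 0
  · refine h.hasTwoInvariantFactors_of_singular (o := ![0, 1, 0]) (by simp) ?_
    ext i
    fin_cases i <;> simp [cubicGrad, quadForm, h₃, h₆, h₇]
  have h₀ : c 0 ≠ 0 := by
    intro h₀
    obtain ⟨v, hv, hcv⟩ := h.containsNoLine ![0, 0, 1] (by simp)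
    have hv : v 2 = 0 := by simpa [vecHead, vecTail] using hv
    exact hcv (by simp [cubicForm, hv, h₀, h₁, h₃, h₆])
  have hk : (c 7 ^ 3 * c 0 ^ 4)⁻¹ ≠ 0 := by simp [h₀, h₇]
  have hnet := (h.smul hk).cubicSubst (p := ![-(c 7 * c 0), 0, 0]) (q := ![0, c 7 * c 0 ^ 2, 0])
    (r := ![0, 0, 1]) (by simp [det3_eq, h₀, h₇])
  let W : WeierstrassCurve.Affine K :=
    { a₁ := -c 4 / (c 7 * c 0), a₂ := -c 2 / (c 7 * c 0 ^ 2), a₃ := c 8 / (c 7 ^ 2 * c 0 ^ 2),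
      a₄ := c 5 / (c 7 ^ 2 * c 0 ^ 3), a₆ := -c 9 / (c 7 ^ 3 * c 0 ^ 4) }
  rw [show _root_.cubicSubst _ _ _ _ = weierstrassCoeff W by
    ext i
    fin_cases i <;>
      simp [_root_.cubicSubst, cubicForm, cubicGrad, quadForm, weierstrassCoeff, W, *] <;>
      field_simp
    ring] at hnet
  exact hnet.hasTwoInvariantFactors_of_weierstrass

theorem hasTwoInvariantFactors (h : IsCubicNet c A B C) : HasTwoInvariantFactors H := by
  obtain ⟨p, u, hp, hu, hcp, hker⟩ := exists_cubicHessian_mulVec_eq_zero c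
  have hpu : cubicGrad c p ⬝ᵥ u = 0 := by
    have := congrArg (p ⬝ᵥ ·) hker
    simpa [dotProduct_mulVec, vecMul_cubicHessian] using this
  have hup : cubicGrad c u ⬝ᵥ p = 0 := by
    simpa [hker] using dotProduct_cubicHessian_mulVec c p u
  by_cases hind : LinearIndependent K ![p, u]
  · obtain ⟨w, hw⟩ := exists_det3_ne_zero hind
    refine (h.cubicSubst (p := u) (q := p) (r := w) (by simpa [det3_swap p u])
      ).hasTwoInvariantFactors_of_flex ?_ ?_ ?_ <;> simpa [_root_.cubicSubst]
  · rw [LinearIndependent.pair_iff' hp] at hind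
    push Not at hind
    obtain ⟨k, rfl⟩ := hind
    refine h.hasTwoInvariantFactors_of_singular hp ?_
    have hk : k ≠ 0 := by rintro rfl; simp at hu
    simpa [mulVec_smul, cubicHessian_mulVec, hk] using hker

end IsCubicNet

/-! ### Nets on a line and a conic -/

section ConicNet

open Matrix

variable {K G : Type*} [Field K] [AddCommGroup G] {A B C : G → Fin 3 → K} {a : Fin 3 → K}
  {q : Fin 6 → K}

namespace IsNet

lemma exists_eq_smul_add_smul [Nontrivial G] (n : IsNet A B C) {x y z : G} (h : x + y + z = 0) :
    ∃ s t : K, C z = s • A x + t • B y :=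
  exists_eq_smul_add_smul_of_det3 (n.linearIndependent_pair' x y) ((n x y z).2 h)

lemma eq_of_dotProduct_eq_zero [Nontrivial G] (n : IsNet A B C) (ha : a ≠ 0) {x x' y : G}
    (hx : a ⬝ᵥ A x = 0) (hx' : a ⬝ᵥ A x' = 0) (hy : a ⬝ᵥ B y = 0) : x = x' := by
  obtain ⟨s, t, hC⟩ := n.exists_eq_smul_add_smul (x := x) (y := y) (z := -(x + y)) (by abel)
  have hz : a ⬝ᵥ C (-(x + y)) = 0 := by rw [hC]; simp [hx, hy]
  have := (n x' y _).1 (det3_eq_zero_of_dotProduct ha hx' hy hz)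
  rw [← sub_eq_add_neg, add_sub_add_right_eq_sub, sub_eq_zero] at this
  exact this.symm

/-- Otherwise the conic would contain the line through `A x` and `B y₁`, and all the other points
would lie on the residual line. -/
lemma quadForm_ne_zero [Nontrivial G] (n : IsNet A B C) (hq : ∃ v, quadForm q v ≠ 0)
    {x y₁ y₂ y₃ : G} (h₁₂ : y₂ ≠ y₁) (h₁₃ : y₃ ≠ y₁) (h₂₃ : y₂ ≠ y₃) (hB₁ : quadForm q (B y₁) = 0)
    (hB₂ : quadForm q (B y₂) = 0) (hB₃ : quadForm q (B y₃) = 0)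
    (hC₁ : quadForm q (C (-(x + y₁))) = 0) (hC₂ : quadForm q (C (-(x + y₂))) = 0) :
    quadForm q (A x) ≠ 0 := by
  intro hA
  obtain ⟨m, hm, hmA, hmB, hmC⟩ := n.exists_line (x := x) (y := y₁) (z := -(x + y₁)) (by simp)
  have hline : ∀ v, m ⬝ᵥ v = 0 → quadForm q v = 0 := by
    intro v hv
    obtain ⟨s, t, hst⟩ := n.exists_eq_smul_add_smul (x := x) (y := y₁) (z := -(x + y₁)) (by simp)
    obtain ⟨s', t', rfl⟩ := _root_.exists_eq_smul_add_smul hm (n.linearIndependent_pair' x y₁)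
      ((hmA x).2 rfl) ((hmB y₁).2 rfl) hv
    refine quadForm_smul_add_smul_eq_zero (s := s) (t := t) ?_ ?_ hA hB₁ (hst ▸ hC₁) s' t'
    · rintro rfl
      exact n.rotate.swap.ne_smul _ y₁ t (by rw [hst]; simp)
    · rintro rfl
      exact n.rotate.rotate.ne_smul _ x s (by rw [hst]; simp)
  obtain ⟨l, hl⟩ := exists_quadForm_eq_mul hm hline
  have hl₀ : l ≠ 0 := by
    rintro rfl
    obtain ⟨v, hv⟩ := hq
    exact hv (by simp [hl])
  have hlB {y} (hy : y ≠ y₁) (h : quadForm q (B y) = 0) : l ⬝ᵥ B y = 0 := by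
    rw [hl] at h
    exact (mul_eq_zero.1 h).resolve_left (mt (hmB y).1 hy)
  have hlC : l ⬝ᵥ C (-(x + y₂)) = 0 := by
    rw [hl] at hC₂
    exact (mul_eq_zero.1 hC₂).resolve_left (mt (hmC _).1 (by simpa using h₁₂))
  exact h₂₃ (n.rotate.eq_of_dotProduct_eq_zero hl₀ (hlB h₁₂ hB₂) (hlB h₁₃ hB₃) hlC)

end IsNet

/-- A net `A, B, C` with the points `A x` on the line with equation `a` and the points `B y`, `C z`
on the conic with coefficients `q`. -/
structure IsConicNet (a : Fin 3 → K) (q : Fin 6 → K) (A B C : G → Fin 3 → K) : Prop where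
  isNet : IsNet A B C
  line_ne_zero : a ≠ 0
  exists_quadForm_ne_zero : ∃ v, quadForm q v ≠ 0
  dotProduct_left (x : G) : a ⬝ᵥ A x = 0
  quadForm_middle (y : G) : quadForm q (B y) = 0
  quadForm_right (z : G) : quadForm q (C z) = 0

lemma exists_distinct_of_five_le_card {X : Type*} (hcard : 5 ≤ Nat.card X) {s t : Set X}
    (hs : s.Subsingleton) (ht : t.Subsingleton) :
    ∃ x y z, x ≠ y ∧ x ≠ z ∧ y ≠ z ∧ ∀ w ∈ ({x, y, z} : Set X), w ∉ s ∧ w ∉ t := by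
  have := Nat.finite_of_card_ne_zero (α := X) (by lia)
  have hst : (s ∪ t).ncard ≤ 2 := (Set.ncard_union_le s t).trans <|
    Nat.add_le_add (Set.ncard_le_one_iff_subsingleton.2 hs) (Set.ncard_le_one_iff_subsingleton.2 ht)
  have hcompl : 2 < (s ∪ t)ᶜ.ncard := by
    have := Set.ncard_add_ncard_compl (s ∪ t)
    lia
  obtain ⟨x, y, z, hx, hy, hz, hxy, hxz, hyz⟩ := (Set.two_lt_ncard_iff).1 hcompl
  refine ⟨x, y, z, hxy, hxz, hyz, ?_⟩
  simp_all

namespace IsNet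

variable [Nontrivial G]

lemma dotProduct_eq_zero (n : IsNet A B C) (hcard : 5 ≤ Nat.card G) (hq : ∃ v, quadForm q v ≠ 0)
    (hA : ∀ x, (a ⬝ᵥ A x) * quadForm q (A x) = 0) (hB : ∀ x, (a ⬝ᵥ B x) * quadForm q (B x) = 0)
    (hC : ∀ x, (a ⬝ᵥ C x) * quadForm q (C x) = 0) (hB' : {y | a ⬝ᵥ B y = 0}.Subsingleton)
    (hC' : {z | a ⬝ᵥ C z = 0}.Subsingleton) (x : G) : a ⬝ᵥ A x = 0 := by
  obtain ⟨y₁, y₂, y₃, h₁₂, h₁₃, h₂₃, h⟩ := exists_distinct_of_five_le_card hcard hB'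
    (hC'.preimage (f := fun y ↦ -(x + y)) fun y y' hy ↦ by simpa using hy)
  have hconic {y} (hy : y ∈ ({y₁, y₂, y₃} : Set G)) :
      quadForm q (B y) = 0 ∧ quadForm q (C (-(x + y))) = 0 :=
    ⟨(mul_eq_zero.1 (hB y)).resolve_left (h y hy).1, (mul_eq_zero.1 (hC _)).resolve_left (h y hy).2⟩
  obtain ⟨hB₁, hC₁⟩ := hconic (y := y₁) (by simp)
  obtain ⟨hB₂, hC₂⟩ := hconic (y := y₂) (by simp)
  exact (mul_eq_zero.1 (hA x)).resolve_right <|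
    n.quadForm_ne_zero hq h₁₂.symm h₁₃.symm h₂₃ hB₁ hB₂ (hconic (by simp)).1 hC₁ hC₂

lemma isConicNet (n : IsNet A B C) (hcard : 5 ≤ Nat.card G) (ha : a ≠ 0)
    (hq : ∃ v, quadForm q v ≠ 0) (hA : ∀ x, (a ⬝ᵥ A x) * quadForm q (A x) = 0)
    (hB : ∀ x, (a ⬝ᵥ B x) * quadForm q (B x) = 0) (hC : ∀ x, (a ⬝ᵥ C x) * quadForm q (C x) = 0)
    (hA' : ¬{x | a ⬝ᵥ A x = 0}.Subsingleton) : IsConicNet a q A B C := by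
  obtain ⟨x, hx, x', hx', hne⟩ := Set.not_subsingleton_iff.1 hA'
  have hB' (y) : a ⬝ᵥ B y ≠ 0 := fun hy ↦ hne (n.eq_of_dotProduct_eq_zero ha hx hx' hy)
  have hC' (z) : a ⬝ᵥ C z ≠ 0 := fun hz ↦
    hne (n.rotate.rotate.swap.eq_of_dotProduct_eq_zero ha hx hx' hz)
  exact ⟨n, ha, hq,
    n.dotProduct_eq_zero hcard hq hA hB hC (fun y hy ↦ (hB' y hy).elim) fun z hz ↦ (hC' z hz).elim,
    fun y ↦ (mul_eq_zero.1 (hB y)).resolve_left (hB' y),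
    fun z ↦ (mul_eq_zero.1 (hC z)).resolve_left (hC' z)⟩

theorem exists_isConicNet [CharZero K] (n : IsNet A B C) (hcard : 5 ≤ Nat.card G) {c : Fin 10 → K}
    (hc : c ≠ 0) (hline : ¬ContainsNoLine (cubicForm c)) (hA : ∀ x, cubicForm c (A x) = 0)
    (hB : ∀ x, cubicForm c (B x) = 0) (hC : ∀ x, cubicForm c (C x) = 0) :
    ∃ a q, IsConicNet a q A B C ∨ IsConicNet a q B C A ∨ IsConicNet a q C A B := by
  simp only [ContainsNoLine, not_forall, not_exists, not_and, not_not] at hline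
  obtain ⟨a, ha, hline⟩ := hline
  obtain ⟨q, hcq⟩ := exists_cubicForm_eq_mul ha hline
  have hq : ∃ v, quadForm q v ≠ 0 := by
    by_contra! hq
    exact hc (eq_zero_of_cubicForm_eq_zero fun v ↦ by simp [hcq, hq])
  simp only [hcq] at hA hB hC
  refine ⟨a, q, ?_⟩
  by_cases hB' : {y | a ⬝ᵥ B y = 0}.Subsingleton
  · by_cases hC' : {z | a ⬝ᵥ C z = 0}.Subsingleton
    · refine .inl (n.isConicNet hcard ha hq hA hB hC fun hA' ↦ ?_)
      have hall := n.dotProduct_eq_zero hcard hq hA hB hC hB' hC'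
      obtain ⟨x, hx⟩ := exists_ne (0 : G)
      exact hx (hA' (hall x) (hall 0))
    · exact .inr (.inr (n.rotate.rotate.isConicNet hcard ha hq hC hA hB hC'))
  · exact .inr (.inl (n.rotate.isConicNet hcard ha hq hB hC hA hB'))

end IsNet

end ConicNet

section ConicNormalForm

open Matrix

variable {K : Type*} [Field K]

lemma quadGrad_dotProduct_comm (q : Fin 6 → K) (u v : Fin 3 → K) :
    quadGrad q u ⬝ᵥ v = quadGrad q v ⬝ᵥ u := by
  simp [quadGrad, vecHead, vecTail]; ring

lemma quadGrad_dotProduct_self (q : Fin 6 → K) (v : Fin 3 → K) :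
    quadGrad q v ⬝ᵥ v = 2 * quadForm q v := by
  simp [quadForm, quadGrad, vecHead, vecTail]; ring

lemma quadForm_add_smul (q : Fin 6 → K) (t : K) (u v : Fin 3 → K) :
    quadForm q (u + t • v) =
      quadForm q u + t * (quadGrad q u ⬝ᵥ v) + t ^ 2 * quadForm q v := by
  simpa using quadForm_smul_add_smul q 1 t u v

/-- The coefficients of the quadratic form with coefficients `q` after the linear substitution
sending the standard basis to `e₁, e₂, e₃`, expressed through values and the polar form. -/
def quadSubst (q : Fin 6 → K) (e₁ e₂ e₃ : Fin 3 → K) : Fin 6 → K :=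
  ![quadForm q e₁, quadGrad q e₁ ⬝ᵥ e₂, quadGrad q e₁ ⬝ᵥ e₃, quadForm q e₂, quadGrad q e₂ ⬝ᵥ e₃,
    quadForm q e₃]

lemma quadForm_quadSubst (q : Fin 6 → K) (e₁ e₂ e₃ v : Fin 3 → K) :
    quadForm (quadSubst q e₁ e₂ e₃) v = quadForm q (v ᵥ* of ![e₁, e₂, e₃]) := by
  simp only [quadSubst, quadForm, quadGrad, vecMul, vec3_dotProduct, cons_val, of_apply]
  ring

lemma exists_linearIndependent_dotProduct_eq_zero {a : Fin 3 → K} (ha : a ≠ 0) :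
    ∃ u v, LinearIndependent K ![u, v] ∧ a ⬝ᵥ u = 0 ∧ a ⬝ᵥ v = 0 := by
  let L := LinearMap.ker (dotProductEquiv K (Fin 3) a)
  have hfinrank : Module.finrank K L + 1 = 3 :=
    (Module.Dual.finrank_ker_add_one_of_ne_zero (by simpa using ha)).trans (by simp)
  have : Nontrivial L := Module.nontrivial_of_finrank_pos (R := K) (by lia)
  obtain ⟨u, hu⟩ := exists_ne (0 : L)
  obtain ⟨v, huv⟩ := exists_linearIndependent_pair_of_one_lt_finrank (R := K) (by lia) hu
  refine ⟨u, v, ?_, u.2, v.2⟩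
  have hcomp : L.subtype ∘ ![u, v] = ![(u : Fin 3 → K), v] := by
    ext i
    fin_cases i <;> rfl
  exact hcomp ▸ huv.map' L.subtype L.ker_subtype

/-- The restriction of a binary quadratic form to a line is, in a suitable basis, `β x y` or
`α x ^ 2`. -/
lemma exists_basis_line [IsAlgClosed K] [CharZero K] {a : Fin 3 → K} (ha : a ≠ 0) (q : Fin 6 → K) :
    ∃ e₁ e₂, LinearIndependent K ![e₁, e₂] ∧ a ⬝ᵥ e₁ = 0 ∧ a ⬝ᵥ e₂ = 0 ∧ quadForm q e₂ = 0 ∧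
      (quadForm q e₁ = 0 ∨ quadGrad q e₁ ⬝ᵥ e₂ = 0) := by
  obtain ⟨u, v, hli, hu, hv⟩ := exists_linearIndependent_dotProduct_eq_zero ha
  obtain ⟨e₁, e₂, hli, he₁, he₂, hq⟩ : ∃ e₁ e₂, LinearIndependent K ![e₁, e₂] ∧ a ⬝ᵥ e₁ = 0 ∧
      a ⬝ᵥ e₂ = 0 ∧ quadForm q e₂ = 0 := by
    by_cases hq : quadForm q v = 0
    · exact ⟨u, v, hli, hu, hv, hq⟩
    obtain ⟨k, hk⟩ := exists_quadratic_eq_zero (b := quadGrad q u ⬝ᵥ v) (c := quadForm q u) hq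
      (IsAlgClosed.exists_eq_mul_self _)
    refine ⟨v, u + k • v, ?_, hv, by simp [hu, hv], ?_⟩
    · rw [LinearIndependent.pair_symm_iff]
      simpa using hli
    · rw [quadForm_add_smul]
      linear_combination hk
  by_cases hβ : quadGrad q e₁ ⬝ᵥ e₂ = 0
  · exact ⟨e₁, e₂, hli, he₁, he₂, hq, .inr hβ⟩
  · refine ⟨e₁ + (-quadForm q e₁ / (quadGrad q e₁ ⬝ᵥ e₂)) • e₂, e₂, ?_, by simp [he₁, he₂], he₂, hq,
      .inl ?_⟩
    · simpa using hli
    · rw [quadForm_add_smul, hq]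
      field_simp
      ring

lemma exists_basis_quadSubst [IsAlgClosed K] [CharZero K] {a : Fin 3 → K} {q : Fin 6 → K}
    (hq : ∃ v, a ⬝ᵥ v = 0 ∧ quadForm q v ≠ 0) (ha : a ≠ 0) :
    ∃ e₁ e₂ e₃, det3 e₁ e₂ e₃ ≠ 0 ∧ a ⬝ᵥ e₁ = 0 ∧ a ⬝ᵥ e₂ = 0 ∧ quadForm q e₂ = 0 ∧
      quadGrad q e₁ ⬝ᵥ e₃ = 0 ∧
      (quadForm q e₁ = 0 ∧ quadGrad q e₂ ⬝ᵥ e₃ = 0 ∨ quadGrad q e₁ ⬝ᵥ e₂ = 0) := by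
  obtain ⟨e₁, e₂, hli, he₁, he₂, hq₂, h⟩ := exists_basis_line ha q
  obtain ⟨e₃, hdet⟩ := exists_det3_ne_zero hli
  obtain ⟨v, hav, hv⟩ := hq
  obtain ⟨s, t, rfl⟩ := exists_eq_smul_add_smul ha hli he₁ he₂ hav
  rw [quadForm_smul_add_smul, hq₂] at hv
  have hdet' (k l : K) : det3 e₁ e₂ (e₃ + k • e₁ + l • e₂) ≠ 0 := by
    convert hdet using 1
    simp [det3_eq]; ring
  by_cases hβ : quadGrad q e₁ ⬝ᵥ e₂ = 0
  · have hq₁ : quadForm q e₁ ≠ 0 := fun h ↦ hv (by simp [h, hβ])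
    refine ⟨e₁, e₂, _, hdet' (-(quadGrad q e₁ ⬝ᵥ e₃) / (2 * quadForm q e₁)) 0, he₁, he₂, hq₂, ?_,
      .inr hβ⟩
    rw [dotProduct_add, dotProduct_add, dotProduct_smul, quadGrad_dotProduct_self]
    simp
    field_simp
    ring
  · have hq₁ := h.resolve_right hβ
    have hsymm := quadGrad_dotProduct_comm q e₁ e₂
    refine ⟨e₁, e₂, _, hdet' (-(quadGrad q e₂ ⬝ᵥ e₃) / (quadGrad q e₁ ⬝ᵥ e₂))
      (-(quadGrad q e₁ ⬝ᵥ e₃) / (quadGrad q e₁ ⬝ᵥ e₂)), he₁, he₂, hq₂, ?_, .inl ⟨hq₁, ?_⟩⟩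
    · rw [dotProduct_add, dotProduct_add, dotProduct_smul, dotProduct_smul,
        quadGrad_dotProduct_self, hq₁]
      simp
      field_simp
      ring
    · rw [dotProduct_add, dotProduct_add, dotProduct_smul, dotProduct_smul,
        quadGrad_dotProduct_self, hq₂, ← hsymm]
      simp
      field_simp
      ring

variable {G : Type*} [AddCommGroup G] {A B C : G → Fin 3 → K} {a : Fin 3 → K} {q : Fin 6 → K}

lemma IsNet.smul {b c : G → K} (n : IsNet A B C) (hb : ∀ y, b y ≠ 0) (hc : ∀ z, c z ≠ 0) :
    IsNet A (fun y ↦ b y • B y) fun z ↦ c z • C z := fun x y z ↦ by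
  rw [← one_smul K (A x), det3_smul_smul_smul, mul_eq_zero,
    or_iff_right (mul_ne_zero (mul_ne_zero one_ne_zero (hb y)) (hc z)), n]

namespace IsConicNet

lemma swap (h : IsConicNet a q A B C) : IsConicNet a q A C B :=
  ⟨h.isNet.rotate.rotate.swap, h.line_ne_zero, h.exists_quadForm_ne_zero, h.dotProduct_left,
    h.quadForm_right, h.quadForm_middle⟩

lemma smul {b c : G → K} (h : IsConicNet a q A B C) (hb : ∀ y, b y ≠ 0) (hc : ∀ z, c z ≠ 0) :
    IsConicNet a q A (fun y ↦ b y • B y) fun z ↦ c z • C z := by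
  have hhom (k : K) (v : Fin 3 → K) : quadForm q (k • v) = k ^ 2 * quadForm q v := by
    simp [quadForm]; ring
  exact ⟨h.isNet.smul hb hc, h.line_ne_zero, h.exists_quadForm_ne_zero, h.dotProduct_left,
    fun y ↦ by rw [hhom, h.quadForm_middle, mul_zero],
    fun z ↦ by rw [hhom, h.quadForm_right, mul_zero]⟩

lemma quadSubst (h : IsConicNet a q A B C) {e₁ e₂ e₃ : Fin 3 → K} (he : det3 e₁ e₂ e₃ ≠ 0) :
    IsConicNet (of ![e₁, e₂, e₃] *ᵥ a) (quadSubst q e₁ e₂ e₃)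
      (fun x ↦ A x ᵥ* (of ![e₁, e₂, e₃])⁻¹) (fun y ↦ B y ᵥ* (of ![e₁, e₂, e₃])⁻¹)
      fun z ↦ C z ᵥ* (of ![e₁, e₂, e₃])⁻¹ := by
  have hunit : IsUnit (of ![e₁, e₂, e₃]).det := isUnit_iff_ne_zero.2 he
  have hform (v) : quadForm (_root_.quadSubst q e₁ e₂ e₃) (v ᵥ* (of ![e₁, e₂, e₃])⁻¹) =
      quadForm q v := by
    rw [quadForm_quadSubst, vecMul_vecMul, nonsing_inv_mul _ hunit, vecMul_one]
  obtain ⟨v, hv⟩ := h.exists_quadForm_ne_zero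
  refine ⟨h.isNet.vecMul (isUnit_nonsing_inv_det _ hunit).ne_zero, fun ha ↦ h.line_ne_zero ?_,
    ⟨_, (hform v).trans_ne hv⟩, fun x ↦ ?_, fun y ↦ (hform _).trans (h.quadForm_middle y),
    fun z ↦ (hform _).trans (h.quadForm_right z)⟩
  · rw [← one_mulVec a, ← nonsing_inv_mul _ hunit, ← mulVec_mulVec, ha, mulVec_zero]
  · rw [dotProduct_comm, dotProduct_mulVec, vecMul_vecMul, nonsing_inv_mul _ hunit, vecMul_one,
      dotProduct_comm, h.dotProduct_left]

variable [Nontrivial G]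

lemma dotProduct_middle_ne_zero (h : IsConicNet a q A B C) (y : G) : a ⬝ᵥ B y ≠ 0 := by
  obtain ⟨x, hx⟩ := exists_ne (0 : G)
  exact fun hy ↦ hx <| h.isNet.eq_of_dotProduct_eq_zero h.line_ne_zero (h.dotProduct_left x)
    (h.dotProduct_left 0) hy

lemma exists_dotProduct_eq_zero_quadForm_ne_zero (h : IsConicNet a q A B C) :
    ∃ v, a ⬝ᵥ v = 0 ∧ quadForm q v ≠ 0 := by
  by_contra! hline
  obtain ⟨l, hl⟩ := exists_quadForm_eq_mul h.line_ne_zero hline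
  have hlB (y) : l ⬝ᵥ B y = 0 :=
    (mul_eq_zero.1 ((hl _).symm.trans (h.quadForm_middle y))).resolve_left
      (h.dotProduct_middle_ne_zero y)
  have hlC : l ⬝ᵥ C 0 = 0 :=
    (mul_eq_zero.1 ((hl _).symm.trans (h.quadForm_right 0))).resolve_left
      (h.swap.dotProduct_middle_ne_zero 0)
  have hl₀ : l ≠ 0 := by
    rintro rfl
    obtain ⟨v, hv⟩ := h.exists_quadForm_ne_zero
    exact hv (by simp [hl])
  obtain ⟨y, hy⟩ := exists_ne (0 : G)
  exact hy (h.isNet.rotate.eq_of_dotProduct_eq_zero hl₀ (hlB y) (hlB 0) hlC)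

end IsConicNet

end ConicNormalForm

section NormalizedConicNet

open Matrix

variable {K G : Type*} [Field K] [AddCommGroup G] {A B C : G → Fin 3 → K} {q : Fin 6 → K}

/-- A net on a line and a conic in coordinates in which the line is the line at infinity and the
points on the conic are affine. -/
structure IsNormalizedConicNet (q : Fin 6 → K) (A B C : G → Fin 3 → K) : Prop
    extends IsConicNet ![0, 0, 1] q A B C where
  middle_two (y : G) : B y 2 = 1
  right_two (z : G) : C z 2 = 1

namespace IsNormalizedConicNet

lemma swap (h : IsNormalizedConicNet q A B C) : IsNormalizedConicNet q A C B :=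
  ⟨h.toIsConicNet.swap, h.right_two, h.middle_two⟩

lemma left_two (h : IsNormalizedConicNet q A B C) (x : G) : A x 2 = 0 := by
  simpa [vecHead, vecTail] using h.dotProduct_left x

lemma mul_sub_eq_mul_sub (h : IsNormalizedConicNet q A B C) {x y z : G} (hxyz : x + y + z = 0) :
    A x 0 * (B y 1 - C z 1) = A x 1 * (B y 0 - C z 0) := by
  have hdet := (h.isNet x y z).2 hxyz
  rw [det3_eq, h.left_two, h.middle_two, h.right_two] at hdet
  linear_combination hdet

lemma injective_div (h : IsNormalizedConicNet q A B C) (hA : ∀ x, A x 0 ≠ 0) :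
    Function.Injective fun x ↦ A x 1 / A x 0 := by
  intro x y hxy
  rw [div_eq_div_iff (hA x) (hA y)] at hxy
  refine h.isNet.eq_of_eq_smul (c := A x 0 / A y 0) ?_
  ext i
  have := hA y
  fin_cases i <;> simp [h.left_two] <;> field_simp
  linear_combination hxy

variable [Nontrivial G]

lemma eq_of_apply_eq (h : IsNormalizedConicNet q A B C) {i : Fin 3} (hi : i ≠ 2) {u : K}
    {y y' z : G} (hy : B y i = u) (hy' : B y' i = u) (hz : C z i = u) : y = y' := by
  refine h.isNet.rotate.eq_of_dotProduct_eq_zero (a := Pi.single i 1 - u • Pi.single 2 1)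
    (y := z) (fun h₀ ↦ ?_) ?_ ?_ ?_
  · simpa [hi] using congrFun h₀ i
  all_goals simp [*, h.middle_two, h.right_two]

lemma apply_one_ne_zero (h : IsNormalizedConicNet q A B C) {x : G} (hx : A x 0 = 0) :
    A x 1 ≠ 0 := fun hx' ↦
  h.isNet.ne_zero x <| by
    ext i
    fin_cases i <;> simp [hx, hx', h.left_two]

/-- `A x` is the intersection with the line at infinity of the line through `B y` and `C z`. -/
lemma exists_eq_smul_add (h : IsNormalizedConicNet q A B C) {x y z : G} (hxyz : x + y + z = 0) :
    ∃ s : K, s ≠ 0 ∧ C z = s • A x + B y := by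
  obtain ⟨s, t, hst⟩ := h.isNet.exists_eq_smul_add_smul hxyz
  have ht : t = 1 := by
    simpa [h.left_two, h.middle_two, h.right_two] using (congrFun hst 2).symm
  rw [ht, one_smul] at hst
  refine ⟨s, ?_, hst⟩
  rintro rfl
  exact h.isNet.rotate.swap.ne_smul z y 1 (by simpa using hst)

/-- The midpoint of the chord from `B y` to `C z` lies on the diameter conjugate to `A x`. -/
lemma quadGrad_dotProduct_add (h : IsNormalizedConicNet q A B C) {x y z : G}
    (hxyz : x + y + z = 0) : quadGrad q (A x) ⬝ᵥ (B y + C z) = 0 := by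
  obtain ⟨s, hs, hst⟩ := h.exists_eq_smul_add hxyz
  have hC := h.quadForm_right z
  rw [hst, add_comm, quadForm_add_smul, h.quadForm_middle, quadGrad_dotProduct_comm] at hC
  rw [hst, dotProduct_add, dotProduct_add, dotProduct_smul, quadGrad_dotProduct_self, smul_eq_mul]
  refine (mul_eq_zero.1 (?_ : s * _ = 0)).resolve_left hs
  linear_combination 2 * hC

lemma apply_zero_ne_zero_of_sq_eq_sq (h : IsNormalizedConicNet q A B C) (hcard : 5 ≤ Nat.card G)
    (hsq : ∀ y z, B y 0 ^ 2 = C z 0 ^ 2) (x : G) : A x 0 ≠ 0 := by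
  intro hx
  have hBC (y) : B y 0 = C (-(x + y)) 0 := by
    have := h.mul_sub_eq_mul_sub (x := x) (y := y) (z := -(x + y)) (by abel)
    rw [hx, zero_mul, eq_comm, mul_eq_zero, sub_eq_zero] at this
    exact this.resolve_left (h.apply_one_ne_zero hx)
  obtain ⟨y₁, y₂, y₃, h₁₂, h₁₃, h₂₃, -⟩ :=
    exists_distinct_of_five_le_card hcard Set.subsingleton_empty Set.subsingleton_empty
  have hne {y y'} (hy : y ≠ y') : B y 0 ≠ B y' 0 := fun heq ↦
    hy (h.eq_of_apply_eq (by decide) rfl heq.symm (hBC y).symm)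
  have hneg {y y'} (hy : y ≠ y') : B y 0 = -B y' 0 :=
    (sq_eq_sq_iff_eq_or_eq_neg.1 ((hsq y 0).trans (hsq y' 0).symm)).resolve_left (hne hy)
  exact hne h₂₃ (neg_injective ((hneg h₁₂).symm.trans (hneg h₁₃)))

lemma coeff_ne_zero (h : IsNormalizedConicNet q A B C) : ¬(q 0 = 0 ∧ q 1 = 0 ∧ q 3 = 0) := by
  obtain ⟨v, hv, hqv⟩ := h.exists_dotProduct_eq_zero_quadForm_ne_zero
  have hv : v 2 = 0 := by simpa [vecHead, vecTail] using hv
  rintro ⟨h₀, h₁, h₃⟩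
  exact hqv (by simp [quadForm, h₀, h₁, h₃, hv])

variable [CharZero K]

/-- On a parabola the abscissas of `B y` and `C z` determine the direction `A x` additively. -/
lemma false_of_parabola [Finite G] (h : IsNormalizedConicNet q A B C) (h₁ : q 1 = 0) (h₂ : q 2 = 0)
    (h₃ : q 3 = 0) (h₄ : q 4 ≠ 0) : False := by
  have hpolar {x y z : G} (hxyz : x + y + z = 0) :
      q 0 * A x 0 * (B y 0 + C z 0) + q 4 * A x 1 = 0 := by
    have := h.quadGrad_dotProduct_add hxyz
    simp only [quadGrad, vec3_dotProduct, cons_val, Pi.add_apply, h.left_two, h.middle_two,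
      h.right_two, h₁, h₂, h₃] at this
    linear_combination this / 2
  have hA (x) : A x 0 ≠ 0 := fun hx ↦ h.apply_one_ne_zero hx <| by
    simpa [hx, h₄] using hpolar (x := x) (y := -x) (z := 0) (by simp)
  refine not_injective_of_add_add_eq (g := fun y ↦ q 0 / q 4 * B y 0)
    (k := fun z ↦ q 0 / q 4 * C z 0) (t := 0) (fun x y z hxyz ↦ ?_) (h.injective_div hA)
  have := hA x
  field_simp
  linear_combination hpolar hxyz

lemma false_of_parallel_lines [Finite G] (h : IsNormalizedConicNet q A B C)
    (hcard : 5 ≤ Nat.card G) (h₁ : q 1 = 0) (h₂ : q 2 = 0) (h₃ : q 3 = 0) (h₄ : q 4 = 0) :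
    False := by
  have h₀ : q 0 ≠ 0 := fun h₀ ↦ h.coeff_ne_zero ⟨h₀, h₁, h₃⟩
  have hsq (y z) : B y 0 ^ 2 = C z 0 ^ 2 := by
    have hB := h.quadForm_middle y
    have hC := h.quadForm_right z
    simp only [quadForm, h₁, h₂, h₃, h₄, h.middle_two, h.right_two] at hB hC
    refine mul_left_cancel₀ h₀ ?_
    linear_combination hB - hC
  have hpolar {x y z : G} (hxyz : x + y + z = 0) : A x 0 * (B y 0 + C z 0) = 0 := by
    have := h.quadGrad_dotProduct_add hxyz
    simp only [quadGrad, vec3_dotProduct, cons_val, Pi.add_apply, h.left_two, h.middle_two,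
      h.right_two, h₁, h₂, h₃, h₄] at this
    refine (mul_eq_zero.1 (?_ : 2 * q 0 * _ = 0)).resolve_left (by simpa using h₀)
    linear_combination this
  have hA := h.apply_zero_ne_zero_of_sq_eq_sq hcard hsq
  have hC {x y z : G} (hxyz : x + y + z = 0) : C z 0 = -B y 0 :=
    eq_neg_of_add_eq_zero_right ((mul_eq_zero.1 (hpolar hxyz)).resolve_left (hA x))
  have hC₀ (z) : C z 0 = -B 0 0 := hC (x := -z) (by simp)
  have hB₀ (y) : B y 0 = B 0 0 := by
    rw [← neg_inj, ← hC₀ 0, hC (x := -y) (y := y) (by simp)]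
  have hu : B 0 0 ≠ 0 := fun hu ↦ by
    obtain ⟨y, hy⟩ := exists_ne (0 : G)
    exact hy (h.eq_of_apply_eq (by decide) (hB₀ y) rfl (z := 0) (by simp [hC₀, hu]))
  refine not_injective_of_add_add_eq (g := fun y ↦ -B y 1 / (2 * B 0 0))
    (k := fun z ↦ C z 1 / (2 * B 0 0)) (t := 0) (fun x y z hxyz ↦ ?_) (h.injective_div hA)
  have hdet := h.mul_sub_eq_mul_sub hxyz
  rw [hB₀, hC₀] at hdet
  have := hA x
  field_simp
  linear_combination -hdet

/-- On the hyperbola `v 0 * v 1 = const` the slope `-A x 1 / A x 0` is the ratio of the coordinates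
of `B y` and `C z`. -/
lemma mul_apply_one_eq_neg (h : IsNormalizedConicNet q A B C) (h₀ : q 0 = 0) (h₂ : q 2 = 0)
    (h₃ : q 3 = 0) (h₄ : q 4 = 0) {x y z : G} (hxyz : x + y + z = 0) :
    A x 0 * B y 1 = -A x 1 * C z 0 := by
  have h₁ : q 1 ≠ 0 := fun h₁ ↦ h.coeff_ne_zero ⟨h₀, h₁, h₃⟩
  have hpolar := h.quadGrad_dotProduct_add hxyz
  simp only [quadGrad, vec3_dotProduct, cons_val, Pi.add_apply, h.left_two, h.middle_two,
    h.right_two, h₀, h₂, h₃, h₄] at hpolar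
  refine mul_left_cancel₀ (mul_ne_zero two_ne_zero h₁) ?_
  linear_combination hpolar + q 1 * h.mul_sub_eq_mul_sub hxyz

end IsNormalizedConicNet

end NormalizedConicNet

section HyperbolicNet

open Matrix

variable {K G : Type*} [Field K] [AddCommGroup G] {A B C : G → Fin 3 → K} {q : Fin 6 → K}

namespace IsNormalizedConicNet

variable [Nontrivial G]

lemma left_apply_ne_zero_of_mul_eq_neg_mul (h : IsNormalizedConicNet q A B C)
    (hB : ∀ x y z, x + y + z = 0 → A x 0 * B y 1 = -A x 1 * C z 0)
    (hC : ∀ x y z, x + y + z = 0 → A x 0 * C y 1 = -A x 1 * B z 0) (x : G) :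
    A x 0 ≠ 0 ∧ A x 1 ≠ 0 := by
  have hx : A x 0 ≠ 0 ∨ A x 1 ≠ 0 := or_iff_not_imp_left.2 fun hx ↦
    h.apply_one_ne_zero (not_not.1 hx)
  obtain ⟨y, hy⟩ := exists_ne (0 : G)
  have hBC (w) := hB x w (-(x + w)) (by abel)
  have hBC' (w) := hB x (-(x + w)) w (by abel)
  have hCB (w) := hC x w (-(x + w)) (by abel)
  have hCB' (w) := hC x (-(x + w)) w (by abel)
  constructor
  · intro h₀
    have h₁ := hx.resolve_left (not_not.2 h₀)
    exact hy <| h.eq_of_apply_eq (i := 0) (u := 0) (z := 0) (by decide)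
      (by simpa [h₀, h₁] using hCB' y) (by simpa [h₀, h₁] using hCB' 0)
      (by simpa [h₀, h₁] using hBC' 0)
  · intro h₁
    have h₀ := hx.resolve_right (not_not.2 h₁)
    exact hy <| h.eq_of_apply_eq (i := 1) (u := 0) (z := 0) (by decide)
      (by simpa [h₀, h₁] using hBC y) (by simpa [h₀, h₁] using hBC 0)
      (by simpa [h₀, h₁] using hCB 0)

end IsNormalizedConicNet

lemma mul_eq_mul_of_apply_eq_mul {s b c : G → K} (h : ∀ x y z, x + y + z = 0 → b y = s x * c z)
    (hc : c 0 ≠ 0) (x y : G) : s (x + y) * s 0 = s x * s y := by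
  have h₁ := h 0 (-y) y (by simp)
  have h₂ := h y (-y) 0 (by simp)
  have h₃ := h x (-(x + y)) y (by abel)
  have h₄ := h (x + y) (-(x + y)) 0 (by simp)
  refine mul_right_cancel₀ hc ?_
  linear_combination s 0 * h₃ - s 0 * h₄ + s x * h₂ - s x * h₁

lemma IsNormalizedConicNet.mul_eq_mul_of_apply_one_eq_mul [Nontrivial G]
    (h : IsNormalizedConicNet q A B C) {s : G → K} (hs : ∀ x, s x ≠ 0)
    (hB : ∀ x y z, x + y + z = 0 → B y 1 = s x * C z 0)
    (hC : ∀ x y z, x + y + z = 0 → C y 1 = s x * B z 0) (x y : G) :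
    s (x + y) * s 0 = s x * s y := by
  by_cases hC₀ : C 0 0 = 0
  · refine mul_eq_mul_of_apply_eq_mul hC (fun hB₀ ↦ ?_) x y
    obtain ⟨y, hy⟩ := exists_ne (0 : G)
    refine hy (h.eq_of_apply_eq (i := 0) (u := 0) (z := 0) (by decide) ?_ hB₀ hC₀)
    have h₁ := hC 0 (-y) y (by simp)
    have h₂ := hC y (-y) 0 (by simp)
    rw [hB₀, mul_zero] at h₂
    exact (mul_eq_zero.1 (h₁.symm.trans h₂)).resolve_left (hs 0)
  · exact mul_eq_mul_of_apply_eq_mul hB hC₀ x y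

lemma apply_eq_of_apply_eq_mul {s b c : G → K} (h : ∀ x y z, x + y + z = 0 → b y = s x * c z)
    (hs : ∀ x, s x ≠ 0) (hmul : ∀ x y, s (x + y) * s 0 = s x * s y) (x : G) :
    c x = c 0 * (s x / s 0) ∧ b x = s 0 * c 0 / (s x / s 0) := by
  have h₁ := h 0 0 0 (by simp)
  have h₂ := h (-x) x 0 (by simp)
  have h₃ := h (-x) 0 x (by simp)
  have hneg := hmul (-x) x
  rw [neg_add_cancel] at hneg
  have hs₀ := hs 0
  have hsx := hs x
  constructor
  · field_simp
    refine mul_left_cancel₀ (hs (-x)) ?_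
    linear_combination s 0 * h₁ - s 0 * h₃ + c 0 * hneg
  · field_simp
    linear_combination s x * h₂ - c 0 * hneg

/-- The points `B y = (N χ y, s κ / χ y)` and `C z = (κ χ z, s N / χ z)` lie on a common
hyperbola. -/
lemma IsNormalizedConicNet.exists_addChar [Nontrivial G] [CharZero K]
    (h : IsNormalizedConicNet q A B C) (h₀ : q 0 = 0) (h₂ : q 2 = 0) (h₃ : q 3 = 0)
    (h₄ : q 4 = 0) :
    ∃ (χ : AddChar G K) (s N κ : K), s ≠ 0 ∧ ∀ x, A x 1 = -(s * χ x) * A x 0 ∧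
      B x = ![N * χ x, s * κ / χ x, 1] ∧ C x = ![κ * χ x, s * N / χ x, 1] := by
  have hB (x y z) (hxyz : x + y + z = 0) := h.mul_apply_one_eq_neg h₀ h₂ h₃ h₄ hxyz
  have hC (x y z) (hxyz : x + y + z = 0) := h.swap.mul_apply_one_eq_neg h₀ h₂ h₃ h₄ hxyz
  have hA := h.left_apply_ne_zero_of_mul_eq_neg_mul hB hC
  let s (x : G) : K := -A x 1 / A x 0
  have hs (x) : s x ≠ 0 := div_ne_zero (neg_ne_zero.2 (hA x).2) (hA x).1
  have hBs (x y z) (hxyz : x + y + z = 0) : B y 1 = s x * C z 0 := by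
    rw [div_mul_eq_mul_div, eq_div_iff (hA x).1, ← hB x y z hxyz, mul_comm]
  have hCs (x y z) (hxyz : x + y + z = 0) : C y 1 = s x * B z 0 := by
    rw [div_mul_eq_mul_div, eq_div_iff (hA x).1, ← hC x y z hxyz, mul_comm]
  have hmul := h.mul_eq_mul_of_apply_one_eq_mul hs hBs hCs
  let χ : AddChar G K :=
    { toFun x := s x / s 0
      map_zero_eq_one' := div_self (hs 0)
      map_add_eq_mul' x y := by
        have := hs 0
        field_simp
        exact hmul x y }
  have hχ (x) : s 0 * χ x = s x := mul_div_cancel₀ _ (hs 0)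
  refine ⟨χ, s 0, B 0 0, C 0 0, hs 0, fun x ↦ ⟨?_, ?_, ?_⟩⟩
  · have hAs : s x * A x 0 = -A x 1 := div_mul_cancel₀ _ (hA x).1
    rw [hχ, neg_mul, hAs, neg_neg]
  · ext i
    fin_cases i
    exacts [(apply_eq_of_apply_eq_mul hCs hs hmul x).1, (apply_eq_of_apply_eq_mul hBs hs hmul x).2,
      h.middle_two x]
  · ext i
    fin_cases i
    exacts [(apply_eq_of_apply_eq_mul hBs hs hmul x).1, (apply_eq_of_apply_eq_mul hCs hs hmul x).2,
      h.right_two x]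

end HyperbolicNet

section AsymptoticCharacter

open Matrix

variable {K H : Type*} [Field K] [AddCommGroup H] {S : AddSubgroup H} {A B C : H → Fin 3 → K}

lemma IsNet.apply_two_ne_zero [Nontrivial S] (n : IsNet A B C) (hA : ∀ s : S, A s 2 = 0) (y : H) :
    B y 2 ≠ 0 := fun hy ↦ by
  obtain ⟨s, hs⟩ := exists_ne (0 : S)
  have : Nontrivial H := S.subtype_injective.nontrivial
  have hli : (Pi.single 2 1 : Fin 3 → K) ≠ 0 := Pi.single_ne_zero_iff.2 one_ne_zero
  exact hs <| Subtype.ext <| n.eq_of_dotProduct_eq_zero hli (x' := (0 : S)) (y := y)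
    (by simpa using hA s) (by simpa using hA 0) (by simp [hy])

lemma IsConicNet.of_smul {G : Type*} [AddCommGroup G] {A B C : G → Fin 3 → K} {k : K}
    {a : Fin 3 → K} {q : Fin 6 → K} (h : IsConicNet (k • a) q A B C) : IsConicNet a q A B C :=
  have hk : k ≠ 0 := by
    rintro rfl
    exact h.line_ne_zero (zero_smul K a)
  ⟨h.isNet, by simpa [hk] using h.line_ne_zero, h.exists_quadForm_ne_zero,
    by simpa [hk] using h.dotProduct_left, h.quadForm_middle, h.quadForm_right⟩

lemma IsNet.exists_isNormalizedConicNet [IsAlgClosed K] [CharZero K] [Nontrivial S]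
    (n : IsNet A B C) {a : Fin 3 → K} {q : Fin 6 → K}
    (h : IsConicNet a q (A ∘ S.subtype) (B ∘ S.subtype) (C ∘ S.subtype)) :
    ∃ (A' B' C' : H → Fin 3 → K) (q' : Fin 6 → K), IsNet A' B' C' ∧ (∀ y, B' y 2 = 1) ∧
      (∀ z, C' z 2 = 1) ∧
      IsNormalizedConicNet q' (A' ∘ S.subtype) (B' ∘ S.subtype) (C' ∘ S.subtype) ∧
      q' 2 = 0 ∧ q' 3 = 0 ∧ (q' 0 = 0 ∧ q' 4 = 0 ∨ q' 1 = 0) := by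
  obtain ⟨e₁, e₂, e₃, hdet, ha₁, ha₂, hq₃, hq₂, hq⟩ :=
    exists_basis_quadSubst h.exists_dotProduct_eq_zero_quadForm_ne_zero h.line_ne_zero
  have hline : of ![e₁, e₂, e₃] *ᵥ a = (a ⬝ᵥ e₃) • ![0, 0, 1] := by
    ext i
    fin_cases i <;> simp [mulVec, dotProduct_comm, ha₁, ha₂]
  have h' := (hline ▸ h.quadSubst hdet).of_smul
  let M := (of ![e₁, e₂, e₃])⁻¹
  have n' : IsNet (fun x ↦ A x ᵥ* M) (fun y ↦ B y ᵥ* M) fun z ↦ C z ᵥ* M :=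
    n.vecMul (isUnit_nonsing_inv_det _ (isUnit_iff_ne_zero.2 hdet)).ne_zero
  have hA (s : S) : (A s ᵥ* M) 2 = 0 := by
    simpa [vecHead, vecTail] using h'.dotProduct_left s
  have hB := n'.apply_two_ne_zero hA
  have hC := n'.rotate.rotate.swap.apply_two_ne_zero hA
  exact ⟨_, _, _, quadSubst q e₁ e₂ e₃,
    n'.smul (fun y ↦ inv_ne_zero (hB y)) fun z ↦ inv_ne_zero (hC z),
    fun y ↦ inv_mul_cancel₀ (hB y), fun z ↦ inv_mul_cancel₀ (hC z),
    ⟨h'.smul (fun y ↦ inv_ne_zero (hB y)) fun z ↦ inv_ne_zero (hC z),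
      fun y ↦ inv_mul_cancel₀ (hB y), fun z ↦ inv_mul_cancel₀ (hC z)⟩, hq₂, hq₃, hq⟩

/-- A net which on the subgroup `S` is given, up to scaling, by the points `(1 : -χ s : 0)`,
`(N χ s, κ / χ s)` and `(κ χ s, N / χ s)` for a character `χ` of `S`, and whose second and third
families consist of affine points. -/
structure IsHyperbolicNet (χ : AddChar S K) (N κ : K) (A B C : H → Fin 3 → K) : Prop where
  isNet : IsNet A B C
  middle_two (y : H) : B y 2 = 1
  right_two (z : H) : C z 2 = 1
  left_two (s : S) : A s 2 = 0
  left_one (s : S) : A s 1 = -χ s * A s 0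
  middle (s : S) : B s = ![N * χ s, κ / χ s, 1]
  right (s : S) : C s = ![κ * χ s, N / χ s, 1]

lemma IsNet.exists_isHyperbolicNet [IsAlgClosed K] [CharZero K] [Finite S]
    (n : IsNet A B C) (hcard : 5 ≤ Nat.card S) {a : Fin 3 → K} {q : Fin 6 → K}
    (h : IsConicNet a q (A ∘ S.subtype) (B ∘ S.subtype) (C ∘ S.subtype)) :
    ∃ (A' B' C' : H → Fin 3 → K) (χ : AddChar S K) (N κ : K), IsHyperbolicNet χ N κ A' B' C' := by
  have : Nontrivial S := Finite.one_lt_card_iff_nontrivial.1 (by lia)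
  obtain ⟨A, B, C, q, n, hB, hC, h, hq₂, hq₃, ⟨hq₀, hq₄⟩ | hq₁⟩ := n.exists_isNormalizedConicNet h
  · obtain ⟨χ, s, N, κ, hs, hχ⟩ := h.exists_addChar hq₀ hq₂ hq₃ hq₄
    have hM : (diagonal ![1, s⁻¹, 1]).det ≠ 0 := by simpa [Fin.prod_univ_three] using hs
    have hvec (v : Fin 3 → K) : v ᵥ* diagonal ![1, s⁻¹, 1] = ![v 0, v 1 * s⁻¹, v 2] := by
      ext i
      fin_cases i <;> simp [vecMul_diagonal]
    refine ⟨_, _, _, χ, N, κ, n.vecMul hM, fun y ↦ ?_, fun z ↦ ?_, fun r ↦ ?_, fun r ↦ ?_,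
      fun r ↦ ?_, fun r ↦ ?_⟩
    · simp [hvec, hB]
    · simp [hvec, hC]
    · simpa [hvec] using h.left_two r
    · have hAr : A r 1 = -(s * χ r) * A r 0 := (hχ r).1
      simp only [hvec, hAr, cons_val]
      field_simp
    · have hBr : B r = ![N * χ r, s * κ / χ r, 1] := (hχ r).2.1
      simp only [hvec, hBr, cons_val]
      field_simp
    · have hCr : C r = ![κ * χ r, s * N / χ r, 1] := (hχ r).2.2
      simp only [hvec, hCr, cons_val]
      field_simp
  · by_cases hq₄ : q 4 = 0
    · exact (h.false_of_parallel_lines hcard hq₁ hq₂ hq₃ hq₄).elim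
    · exact (h.false_of_parabola hq₁ hq₂ hq₃ hq₄).elim

end AsymptoticCharacter

section HyperbolicNetClassification

open Matrix

variable {K : Type*} [Field K]

lemma eq_zero_of_forall_quartic_eq_zero {ι : Type*} [Finite ι] {f : ι → K}
    (hf : Function.Injective f) (hcard : 5 ≤ Nat.card ι) {a b c d e : K}
    (h : ∀ i, a * f i ^ 4 + b * f i ^ 3 + c * f i ^ 2 + d * f i + e = 0) :
    a = 0 ∧ b = 0 ∧ c = 0 ∧ d = 0 ∧ e = 0 := by
  have := Fintype.ofFinite ι
  let p : Polynomial K := .C a * .X ^ 4 + .C b * .X ^ 3 + .C c * .X ^ 2 + .C d * .X + .C e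
  have hp : p = 0 := by
    refine Polynomial.eq_zero_of_natDegree_lt_card_of_eval_eq_zero p hf (fun i ↦ ?_) ?_
    · simpa [p] using h i
    · have : p.natDegree ≤ 4 := by
        unfold p
        compute_degree
      rw [Nat.card_eq_fintype_card] at hcard
      lia
  refine ⟨?_, ?_, ?_, ?_, ?_⟩
  · simpa [p, Polynomial.coeff_X, Polynomial.coeff_C] using congrArg (Polynomial.coeff · 4) hp
  · simpa [p, Polynomial.coeff_X, Polynomial.coeff_C] using congrArg (Polynomial.coeff · 3) hp
  · simpa [p, Polynomial.coeff_X, Polynomial.coeff_C] using congrArg (Polynomial.coeff · 2) hp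
  · simpa [p, Polynomial.coeff_X, Polynomial.coeff_C] using congrArg (Polynomial.coeff · 1) hp
  · simpa [p, Polynomial.coeff_X, Polynomial.coeff_C] using congrArg (Polynomial.coeff · 0) hp

lemma exists_parameters {G : Type*} [AddCommGroup G] {χ : AddChar G K} {e : G} (he : χ e ≠ 1)
    {b₀ b₁ c₀ c₁ : G → K}
    (h : ∀ r r', χ (r + r') * (b₁ r - c₁ r') + (b₀ r - c₀ r') = 0) :
    ∃ μ ν κ w, ∀ r, b₀ r = μ + ν * χ r ∧ b₁ r = w + κ / χ r ∧
      c₀ r = μ + κ * χ r ∧ c₁ r = w + ν / χ r := by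
  have he' : χ e - 1 ≠ 0 := sub_ne_zero.2 he
  have hχ (r) : χ r ≠ 0 := (χ.val_isUnit r).ne_zero
  simp only [AddChar.map_add_eq_mul] at h
  let w := (χ e * c₁ e - c₁ 0) / (χ e - 1)
  let κ := (c₀ e - c₀ 0) / (χ e - 1)
  have hb₁ (r) : b₁ r = w + κ / χ r := by
    have := hχ r
    have h₀ := h r 0
    have h₁ := h r e
    simp only [AddChar.map_zero_eq_one] at h₀
    simp only [w, κ]
    field_simp
    linear_combination h₁ - h₀
  have hb₀ (r) : b₀ r = c₀ 0 - κ + (c₁ 0 - w) * χ r := by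
    have h₀ := h r 0
    have := hχ r
    rw [hb₁, AddChar.map_zero_eq_one] at h₀
    field_simp at h₀
    linear_combination h₀
  have hc₁ (r) : c₁ r = w + (c₁ 0 - w) / χ r := by
    have := hχ r
    have := hχ e
    have h₀ := h 0 r
    have h₁ := h e r
    rw [hb₁, hb₀, AddChar.map_zero_eq_one] at h₀
    rw [hb₁, hb₀] at h₁
    field_simp at h₀ h₁ ⊢
    refine mul_left_cancel₀ he' ?_
    linear_combination h₀ - h₁
  refine ⟨c₀ 0 - κ, c₁ 0 - w, κ, w, fun r ↦ ⟨hb₀ r, hb₁ r, ?_, hc₁ r⟩⟩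
  have := hχ r
  have h₀ := h 0 r
  rw [hb₁, hb₀, hc₁, AddChar.map_zero_eq_one] at h₀
  field_simp at h₀
  linear_combination -h₀

variable {H : Type*} [AddCommGroup H] {S : AddSubgroup H} {A B C : H → Fin 3 → K}
  {χ : AddChar S K} {N κ : K}

/-- The parametrization by `χ r` of the points `B (-x + r)` and `C (x + r)` of a hyperbolic net,
where `r` runs through `S`. -/
def IsParametrization (χ : AddChar S K) (B C : H → Fin 3 → K) (x : H) (μ ν κ w : K) : Prop :=
  ∀ r : S, B (-x + r) = ![μ + ν * χ r, w + κ / χ r, 1] ∧ C (x + r) = ![μ + κ * χ r, w + ν / χ r, 1]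

lemma IsParametrization.sub {x : H} {μ ν κ w : K} (h : IsParametrization χ B C x μ ν κ w)
    (e : S) : IsParametrization χ B C (x - e) μ (ν * χ e) (κ / χ e) w := by
  intro r
  have hB := (h (r + e)).1
  have hC := (h (r - e)).2
  have he := (χ.val_isUnit e).ne_zero
  have hr := (χ.val_isUnit r).ne_zero
  rw [AddSubgroup.coe_add] at hB
  rw [AddSubgroup.coe_sub] at hC
  rw [show -(x - e) + (r : H) = -x + (r + e) by abel, show x - e + (r : H) = x + (r - e) by abel,
    hB, hC, AddChar.map_add_eq_mul, AddChar.map_sub_eq_div]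
  constructor <;> ext i <;> fin_cases i <;> simp <;> field_simp

namespace IsHyperbolicNet

lemma isParametrization_zero (h : IsHyperbolicNet χ N κ A B C) :
    IsParametrization χ B C 0 0 N κ 0 := fun r ↦ by
  simpa using ⟨h.middle r, h.right r⟩

variable [Nontrivial S]

lemma left_zero_ne_zero (h : IsHyperbolicNet χ N κ A B C) (s : S) : A s 0 ≠ 0 := by
  have : Nontrivial H := S.subtype_injective.nontrivial
  refine fun hs ↦ h.isNet.ne_zero s ?_
  ext i
  fin_cases i <;> simp [hs, h.left_one, h.left_two]

lemma injective (h : IsHyperbolicNet χ N κ A B C) : Function.Injective χ := by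
  have : Nontrivial H := S.subtype_injective.nontrivial
  intro s t hst
  refine Subtype.ext (h.isNet.eq_of_eq_smul (c := A s 0 / A t 0) ?_)
  have := h.left_zero_ne_zero t
  ext i
  fin_cases i <;> simp [h.left_one, h.left_two, hst] <;> field_simp

lemma exists_isParametrization (h : IsHyperbolicNet χ N κ A B C) (x : H) :
    ∃ μ ν κ' w, IsParametrization χ B C x μ ν κ' w := by
  obtain ⟨e, he⟩ := exists_ne (0 : S)
  have he : χ e ≠ 1 := fun h₁ ↦ he (h.injective (by rw [h₁, AddChar.map_zero_eq_one]))
  have hslope (r r' : S) : χ (r + r') * (B (-x + r) 1 - C (x + r') 1) +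
      (B (-x + r) 0 - C (x + r') 0) = 0 := by
    have hdet := (h.isNet (-(r + r') : S) (-x + r) (x + r')).2 (by push_cast; abel)
    rw [det3_eq, h.left_two, h.left_one, h.middle_two, h.right_two, AddChar.map_neg_eq_inv] at hdet
    refine (mul_eq_zero.1 (?_ : A (-(r + r') : S) 0 * _ = 0)).resolve_left (h.left_zero_ne_zero _)
    have := (χ.val_isUnit (r + r')).ne_zero
    field_simp at hdet
    linear_combination hdet
  obtain ⟨μ, ν, κ', w, hp⟩ := exists_parameters he hslope
  refine ⟨μ, ν, κ', w, fun r ↦ ?_⟩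
  obtain ⟨h₁, h₂, h₃, h₄⟩ := hp r
  constructor <;> ext i <;> fin_cases i
  exacts [h₁, h₂, h.middle_two _, h₃, h₄, h.right_two _]

/-- Compare coefficients in the relation `det3 (A x) (B (-x + r)) (C (-r)) = 0` in `χ r`. -/
lemma coeff_eq_zero (h : IsHyperbolicNet χ N κ A B C) [Finite S] (hcard : 5 ≤ Nat.card S) {x : H}
    {μ ν κ' w : K} (hp : IsParametrization χ B C x μ ν κ' w) :
    A x 2 * ν * N = 0 ∧ -A x 0 * N - A x 1 * ν + A x 2 * μ * N = 0 ∧ A x 0 * w - A x 1 * μ = 0 ∧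
      A x 0 * κ' + A x 1 * κ - A x 2 * w * κ = 0 ∧ -A x 2 * κ' * κ = 0 := by
  refine eq_zero_of_forall_quartic_eq_zero h.injective hcard fun r ↦ ?_
  have hdet := (h.isNet x (-x + r) (-r : S)).2 (by push_cast; abel)
  have hr := (χ.val_isUnit r).ne_zero
  rw [det3_eq, h.right, (hp r).1, AddChar.map_neg_eq_inv] at hdet
  simp only [cons_val] at hdet
  field_simp at hdet
  linear_combination hdet

lemma parameters_ne_zero (h : IsHyperbolicNet χ N κ A B C) {x : H} {μ ν κ' w : K}
    (hp : IsParametrization χ B C x μ ν κ' w) :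
    ¬(ν = 0 ∧ κ' = 0) ∧ ¬(μ = 0 ∧ ν = 0 ∧ κ = 0) ∧ ¬(w = 0 ∧ κ' = 0 ∧ N = 0) := by
  have : Nontrivial H := S.subtype_injective.nontrivial
  obtain ⟨e, he⟩ := exists_ne (0 : S)
  have hne : -x + (e : H) ≠ -x + (0 : S) := by simpa using he
  have hline (i : Fin 3) (hi : B (-x + e) i = 0) (hi' : B (-x + (0 : S)) i = 0) :
      C (0 : S) i ≠ 0 := fun hC ↦
    hne <| h.isNet.rotate.eq_of_dotProduct_eq_zero (a := Pi.single i 1)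
      (Pi.single_ne_zero_iff.2 one_ne_zero) (by simpa using hi) (by simpa using hi')
      (y := (0 : S)) (by simpa using hC)
  refine ⟨?_, ?_, ?_⟩
  · rintro ⟨rfl, rfl⟩
    refine hne (h.isNet.rotate.eq_of_eq_smul (c := 1) ?_)
    simp only [(hp _).1, zero_mul, zero_div, one_smul]
  · rintro ⟨rfl, rfl, rfl⟩
    exact hline 0 (by simp [(hp _).1]) (by rw [(hp _).1]; simp) (by rw [h.right]; simp)
  · rintro ⟨rfl, rfl, rfl⟩
    exact hline 1 (by simp [(hp _).1]) (by rw [(hp _).1]; simp) (by rw [h.right]; simp)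

lemma left_two_eq_zero (h : IsHyperbolicNet χ N κ A B C) [Finite S] (hcard : 5 ≤ Nat.card S)
    (x : H) : A x 2 = 0 := by
  by_contra hx
  obtain ⟨μ, ν, κ', w, hp⟩ := h.exists_isParametrization x
  obtain ⟨h₄, h₃, -, h₁, h₀⟩ := h.coeff_eq_zero hcard hp
  obtain ⟨hνκ', hμ, hw⟩ := h.parameters_ne_zero hp
  have hNκ := (h.parameters_ne_zero h.isParametrization_zero).1
  have hκ'κ : κ' = 0 ∨ κ = 0 := by simpa [hx] using h₀
  obtain rfl | rfl : ν = 0 ∨ N = 0 := by simpa [hx] using h₄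
  · have hκ' : κ' ≠ 0 := fun hκ' ↦ hνκ' ⟨rfl, hκ'⟩
    obtain rfl := hκ'κ.resolve_left hκ'
    have hN : N ≠ 0 := fun hN ↦ hNκ ⟨hN, rfl⟩
    have ha₀ : A x 0 = 0 := by simpa [hκ'] using h₁
    exact hμ ⟨by simpa [ha₀, hx, hN] using h₃, rfl, rfl⟩
  · have hκ : κ ≠ 0 := fun hκ ↦ hNκ ⟨rfl, hκ⟩
    obtain rfl := hκ'κ.resolve_right hκ
    have hν : ν ≠ 0 := fun hν ↦ hνκ' ⟨hν, rfl⟩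
    have ha₁ : A x 1 = 0 := by simpa [hν] using h₃
    exact hw ⟨by simpa [ha₁, hx, hκ] using h₁, rfl, rfl⟩

lemma exists_slope (h : IsHyperbolicNet χ N κ A B C) [Finite S] (hcard : 5 ≤ Nat.card S) {x : H}
    {μ ν κ' w : K} (hp : IsParametrization χ B C x μ ν κ' w) :
    ∃ f : K, f ≠ 0 ∧ A x 0 ≠ 0 ∧ A x 1 = -f * A x 0 ∧ N = f * ν ∧ κ' = f * κ ∧ w = -f * μ := by
  have : Nontrivial H := S.subtype_injective.nontrivial
  have ha₂ := h.left_two_eq_zero hcard x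
  obtain ⟨-, h₃, h₂, h₁, -⟩ := h.coeff_eq_zero hcard hp
  obtain ⟨-, hμ, hw⟩ := h.parameters_ne_zero hp
  simp only [ha₂, zero_mul, add_zero, sub_zero] at h₃ h₁
  have hne : ¬(A x 0 = 0 ∧ A x 1 = 0) := fun ⟨h₀, h₁⟩ ↦ h.isNet.ne_zero x <| by
    ext i
    fin_cases i <;> assumption
  have ha₀ : A x 0 ≠ 0 := fun ha₀ ↦ by
    have ha₁ : A x 1 ≠ 0 := fun ha₁ ↦ hne ⟨ha₀, ha₁⟩
    simp only [ha₀, ha₁, mul_eq_zero, neg_zero, zero_mul, zero_sub, zero_add, neg_eq_zero,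
      false_or] at h₁ h₂ h₃
    exact hμ ⟨h₂, h₃, h₁⟩
  have ha₁ : A x 1 ≠ 0 := fun ha₁ ↦ by
    simp only [ha₀, ha₁, mul_eq_zero, neg_eq_zero, zero_mul, sub_zero, add_zero,
      false_or] at h₁ h₂ h₃
    exact hw ⟨h₂, h₁, h₃⟩
  refine ⟨-A x 1 / A x 0, div_ne_zero (neg_ne_zero.2 ha₁) ha₀, ha₀, ?_, ?_, ?_, ?_⟩ <;> field_simp
  · linear_combination -h₃
  · linear_combination h₁
  · linear_combination h₂

/-- Comparing the parametrizations at `x` and `x - e` forces the curves to be centred at the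
origin. -/
lemma exists_isParametrization_slope (h : IsHyperbolicNet χ N κ A B C) [Finite S]
    (hcard : 5 ≤ Nat.card S) (x : H) :
    ∃ f : K, f ≠ 0 ∧ A x 0 ≠ 0 ∧ A x 1 = -f * A x 0 ∧
      IsParametrization χ B C x 0 (N / f) (f * κ) 0 := by
  obtain ⟨e, he⟩ := exists_ne (0 : S)
  have he : χ e ≠ 1 := fun h₁ ↦ he (h.injective (by rw [h₁, AddChar.map_zero_eq_one]))
  obtain ⟨μ, ν, κ', w, hp⟩ := h.exists_isParametrization x
  obtain ⟨f, hf, hx₀, hx₁, hN, rfl, hw⟩ := h.exists_slope hcard hp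
  obtain ⟨f', hf', -, -, hN', hκ', hw'⟩ := h.exists_slope hcard (hp.sub e)
  have hχe := (χ.val_isUnit e).ne_zero
  rw [div_eq_iff hχe] at hκ'
  have hff' : f = f' * χ e := by
    obtain rfl | hκ := eq_or_ne κ 0
    · have hν : ν ≠ 0 := by
        rintro rfl
        exact (h.parameters_ne_zero hp).1 ⟨rfl, mul_zero f⟩
      refine mul_right_cancel₀ hν ?_
      linear_combination hN' - hN
    · refine mul_right_cancel₀ hκ ?_
      linear_combination hκ'
  have hμ : μ = 0 := by
    refine (mul_eq_zero.1 (?_ : f' * (χ e - 1) * μ = 0)).resolve_left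
      (mul_ne_zero hf' (sub_ne_zero.2 he))
    linear_combination hw - hw' - μ * hff'
  refine ⟨f, hf, hx₀, hx₁, ?_⟩
  rw [hw, hμ, mul_zero] at hp
  rwa [hN, mul_div_cancel_left₀ _ hf]

/-- The determinant of three points with parameters `f x`, `f (-y)`, `f z` factors, and translating
by an element of `S` kills the factor that does not express multiplicativity. -/
lemma exists_slope_mul (h : IsHyperbolicNet χ N κ A B C) [Finite S] (hcard : 5 ≤ Nat.card S) :
    ∃ f : H → K, (∀ x, f x ≠ 0) ∧ (∀ x, A x 0 ≠ 0) ∧ (∀ x, A x 1 = -f x * A x 0) ∧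
      ∀ x y z, x + y + z = 0 → f (-y) = f x * f z := by
  choose f hf hA₀ hA₁ hp using h.exists_isParametrization_slope hcard
  have hNκ := (h.parameters_ne_zero h.isParametrization_zero).1
  obtain ⟨e, he⟩ : ∃ e, χ e ^ 2 ≠ 1 := by
    by_contra! he
    exact one_ne_zero (eq_zero_of_forall_quartic_eq_zero (a := 0) (b := 0) (c := (1 : K)) (d := 0)
      (e := -1) h.injective hcard (by simp [he])).2.2.1
  have hdet {x y z : H} (hxyz : x + y + z = 0) (r : S) :
      (f (-y) - f x * f z) * (κ * (f (-y) * f z) - N * χ r ^ 2) = 0 := by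
    have hC := (hp z (-r)).2
    have hB := (hp (-y) r).1
    have hdet := (h.isNet x (- -y + r) (z + (-r : S))).2 (by push_cast; rw [← hxyz]; abel)
    have hr := (χ.val_isUnit r).ne_zero
    have := hf (-y)
    have := hf z
    rw [det3_eq, hB, hC, h.left_two_eq_zero hcard, hA₁, AddChar.map_neg_eq_inv] at hdet
    simp only [cons_val, zero_add, zero_mul, add_zero, sub_zero] at hdet
    field_simp at hdet
    refine (mul_eq_zero.1 (?_ : A x 0 * _ = 0)).resolve_left (hA₀ x)
    linear_combination hdet
  refine ⟨f, hf, hA₀, hA₁, fun x y z hxyz ↦ ?_⟩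
  by_contra hne
  have h₁ := (mul_eq_zero.1 (hdet hxyz 0)).resolve_left (sub_ne_zero.2 hne)
  have h₂ := (mul_eq_zero.1 (hdet hxyz e)).resolve_left (sub_ne_zero.2 hne)
  rw [AddChar.map_zero_eq_one] at h₁
  have hN : N = 0 := by
    refine (mul_eq_zero.1 (?_ : (χ e ^ 2 - 1) * N = 0)).resolve_left (sub_ne_zero.2 he)
    linear_combination h₁ - h₂
  exact hNκ ⟨hN, by simpa [hN, hf] using h₁⟩

lemma hasTwoInvariantFactors {H : Type*} [AddCommGroup H] [Finite H] {S : AddSubgroup H}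
    {A B C : H → Fin 3 → K} {χ : AddChar S K} (h : IsHyperbolicNet χ N κ A B C)
    (hcard : 5 ≤ Nat.card S) : HasTwoInvariantFactors H := by
  have : Nontrivial S := Finite.one_lt_card_iff_nontrivial.1 (by lia)
  have : Nontrivial H := S.subtype_injective.nontrivial
  obtain ⟨f, hf, hA₀, hA₁, hmul⟩ := h.exists_slope_mul hcard
  refine hasTwoInvariantFactors_of_mul_mul_eq (f := f) (g := fun y ↦ (f (-y))⁻¹) (k := f)
    one_ne_zero (fun x y z hxyz ↦ ?_) fun x y hxy ↦ h.isNet.eq_of_eq_smul (c := A x 0 / A y 0) ?_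
  · rw [hmul x y z hxyz]
    have := hf x
    have := hf z
    field_simp
  · have := hA₀ y
    ext i
    fin_cases i <;> simp [hA₁, hxy, h.left_two_eq_zero hcard] <;> field_simp

end IsHyperbolicNet

end HyperbolicNetClassification

/-! ### Groups realized by nets -/

section Classification

open Matrix

variable {K : Type*} [Field K] [CharZero K]

namespace IsNet

/-- The cubics through the other cosets of the subgroup generated by `h` share ten points with the
cubic `c`, so they are equal to it by Bézout's theorem. -/
lemma isCubicNet {H : Type*} [AddCommGroup H] {A B C : H → Fin 3 → K} (n : IsNet A B C) {h : H}
    (hh : 10 ≤ addOrderOf h) {c : Fin 10 → K} (hc : ContainsNoLine (cubicForm c))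
    (hA : ∀ k : ℤ, cubicForm c (A (k • h)) = 0) (hB : ∀ k : ℤ, cubicForm c (B (k • h)) = 0) :
    IsCubicNet c A B C := by
  have h₂ : 2 • h ≠ 0 := nsmul_ne_zero_of_lt_addOrderOf two_ne_zero (by lia)
  have hfin : IsOfFinAddOrder h := addOrderOf_pos_iff.1 (by lia)
  have : Nontrivial H := ⟨h, 0, right_ne_zero_of_smul h₂⟩
  have hinj {i j : Fin 10} (hij : i ≠ j) : (i : ℤ) • h ≠ (j : ℤ) • h := fun heq ↦ hij <| Fin.ext <|
    nsmul_injOn_Iio_addOrderOf (x := h) (i.2.trans_le hh) (j.2.trans_le hh) (by simpa using heq)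
  have hA' (x : H) : cubicForm c (A x) = 0 := by
    obtain ⟨c', hc', hc'v⟩ := n.exists_cubicForm_eq_zero h₂ hfin (x := x) (y := 0) (z := -x)
      (by simp)
    exact cubicForm_eq_zero_of_cubicForm_eq_zero hc hc' (p := fun i : Fin 10 ↦ B ((i : ℤ) • h))
      (fun i j hij ↦ n.rotate.linearIndependent_pair (hinj hij)) (fun i ↦ hB i)
      (fun i ↦ by simpa using (hc'v i).2.1) (by simpa using (hc'v 0).1)
  have hBC (y : H) : cubicForm c (B y) = 0 ∧ cubicForm c (C (-y)) = 0 := by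
    obtain ⟨c', hc', hc'v⟩ := n.exists_cubicForm_eq_zero h₂ hfin (x := 0) (y := y) (z := -y)
      (by simp)
    have hcv {v} := cubicForm_eq_zero_of_cubicForm_eq_zero hc hc' (v := v)
      (p := fun i : Fin 10 ↦ A ((i : ℤ) • h))
      (fun i j hij ↦ n.linearIndependent_pair (hinj hij)) (fun i ↦ hA i)
      (fun i ↦ by simpa using (hc'v i).1)
    exact ⟨hcv (by simpa using (hc'v 0).2.1), hcv (by simpa using (hc'v 0).2.2)⟩
  exact ⟨n, hc, hA', fun y ↦ (hBC y).1, fun z ↦ by simpa using (hBC (-z)).2⟩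

variable [IsAlgClosed K] {H : Type*} [AddCommGroup H] [Finite H] {A B C : H → Fin 3 → K}

lemma hasTwoInvariantFactors_of_not_containsNoLine (n : IsNet A B C) {S : AddSubgroup H}
    (hcard : 5 ≤ Nat.card S) {c : Fin 10 → K} (hc : c ≠ 0) (hline : ¬ContainsNoLine (cubicForm c))
    (hA : ∀ s : S, cubicForm c (A s) = 0) (hB : ∀ s : S, cubicForm c (B s) = 0)
    (hC : ∀ s : S, cubicForm c (C s) = 0) : HasTwoInvariantFactors H := by
  have : Nontrivial S := Finite.one_lt_card_iff_nontrivial.1 (by lia)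
  obtain ⟨a, q, h | h | h⟩ :=
    (n.comp S.subtype_injective).exists_isConicNet hcard hc hline hA hB hC
  · obtain ⟨_, _, _, _, _, _, h⟩ := n.exists_isHyperbolicNet hcard h
    exact h.hasTwoInvariantFactors hcard
  · obtain ⟨_, _, _, _, _, _, h⟩ := n.rotate.exists_isHyperbolicNet hcard h
    exact h.hasTwoInvariantFactors hcard
  · obtain ⟨_, _, _, _, _, _, h⟩ := n.rotate.rotate.exists_isHyperbolicNet hcard h
    exact h.hasTwoInvariantFactors hcard

theorem hasTwoInvariantFactors (n : IsNet A B C) {h : H} (hh : 10 ≤ addOrderOf h) :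
    HasTwoInvariantFactors H := by
  have h₂ : 2 • h ≠ 0 := nsmul_ne_zero_of_lt_addOrderOf two_ne_zero (by lia)
  have : Nontrivial H := ⟨h, 0, right_ne_zero_of_smul h₂⟩
  obtain ⟨c, hc, hcv⟩ := n.exists_cubicForm_eq_zero h₂ (isOfFinAddOrder_of_finite h)
    (x := 0) (y := 0) (z := 0) (by simp)
  simp only [zero_add] at hcv
  by_cases hline : ContainsNoLine (cubicForm c)
  · exact (n.isCubicNet hh hline (fun k ↦ (hcv k).1) fun k ↦ (hcv k).2.1).hasTwoInvariantFactors
  · have hcard : 5 ≤ Nat.card (AddSubgroup.zmultiples h) := by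
      rw [Nat.card_zmultiples]
      lia
    refine n.hasTwoInvariantFactors_of_not_containsNoLine hcard hc hline ?_ ?_ ?_
    · rintro ⟨_, k, rfl⟩
      exact (hcv k).1
    · rintro ⟨_, k, rfl⟩
      exact (hcv k).2.1
    · rintro ⟨_, k, rfl⟩
      exact (hcv k).2.2

end IsNet

theorem realizable_iff_two_invariant_factors_general [IsAlgClosed K]
    {H : Type*} [AddCommGroup H] [Finite H] (hord : ∃ h : H, 10 ≤ addOrderOf h) :
    (∃ A B C : H → Fin 3 → K, IsNet A B C) ↔ HasTwoInvariantFactors H := by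
  obtain ⟨h, hh⟩ := hord
  exact ⟨fun ⟨_, _, _, n⟩ ↦ n.hasTwoInvariantFactors hh, HasTwoInvariantFactors.exists_isNet⟩

end Classification

/-- A finite abelian group `H` with an element of order at least 10 can be
realized by a 3-net in ℙ²(ℂ) if and only if it is isomorphic to ℤ/aℤ × ℤ/bℤ for some
positive integers a, b (i.e. has at most two invariant factors). -/
theorem realizable_iff_two_invariant_factors (H : Type) [AddCommGroup H] [Fintype H]
    (hord : ∃ h : H, 10 ≤ addOrderOf h) :
    (∃ p₁ p₂ p₃ : H → P2, Realizes p₁ p₂ p₃) ↔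
      ∃ a b : ℕ, 0 < a ∧ 0 < b ∧ Nonempty (H ≃+ ZMod a × ZMod b) := by
  have : Nontrivial H := hord.elim fun h hh ↦ ⟨h, 0, by rintro rfl; simp at hh⟩
  exact exists_realizes_iff_exists_isNet.trans (realizable_iff_two_invariant_factors_general hord)
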